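/- arXiv:1912.03512 — 2 statements merged into one kernel-verified Lean document; each statement's English description precedes it below -/
import Mathlib

section
/- Let m, n be integers with m ≥ 1 and n ≥ 2m, let Ω ⊂ ℝ^n be a bounded open set, and let Θ be a real number with 0 < Θ ≤ ζ_{n,m} / 2^{(n−2m)/(n−m)}. Then there exists a finite constant C such that for all u, v ∈ C_c^∞(Ω) satisfying ∫_Ω |∇^m u|^{n/m} dx + ∫_Ω |∇^m v|^{n/m} dx ≤ 1, one has ∫_Ω exp(Θ (|u(x)|^{n/(n−m)} + |v(x)|^{n/(n−m)})) dx ≤ C. (Adams–Moser–Trudinger inequality in the Cartesian product of Sobolev spaces, sufficiency part.) -/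
/-!
# The Adams–Moser–Trudinger inequality on a product

Write `p = n / m`, `q = n / (n - m)` and `e = m / (n - m)`; the exponents `p` and `q` are conjugate,
`p ≥ 2` and `e ≤ 1`.

**Reduction to a single function.** `adams_scaled` gives, for `a = ∫ |∇^m u|^p`, a function `X ≥ 0`
with `ζ |u|^q ≤ a^e X` and `∫_Ω exp X ≤ C`, where `C` does not depend on `u`; let `b` and `Y` be the
corresponding objects for `v`. If `a + b ≤ 1`, concavity of `x ↦ x^e` gives `a^e + b^e ≤ 2^{1-e}`,
and `1 - e = (n - 2 m) / (n - m)`. Hence `Θ (|u|^q + |v|^q) ≤ max X Y`, and the exponential of the maximum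
is at most `exp X + exp Y`.

**Potential estimate.** Integrating by parts against the regularized powers `(‖y‖² + ε)^s` and
letting `ε → 0` represents `u x` as an integral of `Δ^{m/2} u`, or of the radial derivative of
`Δ^{(m-1)/2} u`, against a power of `‖x - y‖` with an explicit constant (`odd_formula`,
`even_formula`). This gives
`A |u x| ≤ ∫ ‖x - y‖^{m-n} |∇^m u|(y) dy` (`repr_bound`), where `ζ_{n,m} = A^q / |B₁|`. The kernel
`‖x - y‖^{m-n} / |B₁|^{1/q}` satisfies `|{k > α}| ≤ α^{-q}` in each variable (`kernel_level`).

**Adams' theorem for such kernels** (`adams_abstract`). Let `h` be dominated by the potential of `f`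
with `‖f‖_p ≤ 1`, let `V` be the total measure and `T(L)` the measure of `{h^q > L}`. Averaging the
potential over `{h^q > L}` and rearranging (`oneil`), then applying Hölder's inequality on pieces of
the half-line (`level_bound`), bounds `L^{1/q}` by `p M^{1/p} + (1 - M)^{1/p} log(V / T(L))^{1/q}`,
where `M` is the mass of `(f*)^p` on `(0, T(L)]`, together with a two-scale variant of this estimate.
The first bound yields `L ≤ log(V / T(L)) + p^q` (`garsia_weak`), which is just not enough to
integrate `T(L) exp L`. The two-scale variant shows that the set of levels with
`log(V / T(L)) - L ≤ j` has length `O(j + 1)` (`garsia_gap`). As `T(L) exp L` is of order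
`V exp(-j)` on the levels for which this difference is about `j`, the integral is bounded by
`∑ (j + 1) exp(-j)`.
-/

open MeasureTheory Real

noncomputable section

/-- The Laplacian of `f : ℝⁿ → ℝ`, as the sum of the second partial derivatives. -/
def lap (n : ℕ) (f : EuclideanSpace ℝ (Fin n) → ℝ) : EuclideanSpace ℝ (Fin n) → ℝ :=
  fun x => ∑ i : Fin n,
    iteratedFDeriv ℝ 2 f x ![EuclideanSpace.single i 1, EuclideanSpace.single i 1]

/-- The (pointwise Euclidean norm of the) `m`-th order gradient `|∇^m u|(x)`:
`‖∇ (Δ^{(m-1)/2} u)(x)‖` when `m` is odd, and `|Δ^{m/2} u (x)|` when `m` is even. -/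
def mGradNorm (n m : ℕ) (u : EuclideanSpace ℝ (Fin n) → ℝ)
    (x : EuclideanSpace ℝ (Fin n)) : ℝ :=
  if m % 2 = 1 then ‖gradient ((lap n)^[(m - 1) / 2] u) x‖
  else |((lap n)^[m / 2] u) x|

/-- `ω_{n-1}`, the surface area of the unit sphere `S^{n-1} ⊂ ℝⁿ`. -/
def sphereArea (n : ℕ) : ℝ := 2 * Real.pi ^ ((n : ℝ) / 2) / Real.Gamma ((n : ℝ) / 2)

/-- The Adams constant `ζ_{n,m}`. -/
def adamsConst (n m : ℕ) : ℝ :=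
  if m % 2 = 1 then
    ((n : ℝ) / sphereArea n) *
      (Real.pi ^ ((n : ℝ) / 2) * (2 : ℝ) ^ (m : ℝ) * Real.Gamma (((m : ℝ) + 1) / 2) /
        Real.Gamma (((n : ℝ) - (m : ℝ) + 1) / 2)) ^ ((n : ℝ) / ((n : ℝ) - (m : ℝ)))
  else
    ((n : ℝ) / sphereArea n) *
      (Real.pi ^ ((n : ℝ) / 2) * (2 : ℝ) ^ (m : ℝ) * Real.Gamma ((m : ℝ) / 2) /
        Real.Gamma (((n : ℝ) - (m : ℝ)) / 2)) ^ ((n : ℝ) / ((n : ℝ) - (m : ℝ)))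

/-- `u ∈ C_c^∞(Ω)`: `u` is smooth with compact support contained in `Ω`. -/
def IsCcSmooth {n : ℕ} (Ω : Set (EuclideanSpace ℝ (Fin n)))
    (u : EuclideanSpace ℝ (Fin n) → ℝ) : Prop :=
  ContDiff ℝ (⊤ : ℕ∞) u ∧ HasCompactSupport u ∧ tsupport u ⊆ Ω

/-! ### The real-number inequalities behind the Garsia–Adams argument -/

lemma real_add_rpow_le {a b q : ℝ} (ha : 0 ≤ a) (hb : 0 ≤ b) (hq : 1 ≤ q) :
    (a + b) ^ q ≤ 2 ^ (q - 1) * (a ^ q + b ^ q) := by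
  lift a to NNReal using ha
  lift b to NNReal using hb
  exact_mod_cast NNReal.rpow_add_le_mul_rpow_add_rpow a b hq

/-- Hölder's inequality for two-term sums, raised to the power `q`. -/
lemma weighted_holder {p q : ℝ} (hpq : p.HolderConjugate q) {a b x y : ℝ}
    (ha : 0 ≤ a) (hb : 0 ≤ b) (hx : 0 ≤ x) (hy : 0 ≤ y) :
    (a ^ (1 / p) * x ^ (1 / q) + b ^ (1 / p) * y ^ (1 / q)) ^ q ≤ (a + b) ^ (q / p) * (x + y) := by
  have h := Real.inner_le_Lp_mul_Lq_of_nonneg (Finset.univ : Finset (Fin 2)) hpq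
    (f := ![a ^ (1 / p), b ^ (1 / p)]) (g := ![x ^ (1 / q), y ^ (1 / q)])
    (by intro i _; fin_cases i <;> simp <;> positivity)
    (by intro i _; fin_cases i <;> simp <;> positivity)
  have hp := hpq.pos
  have hq := hpq.symm.pos
  have e1 : ∀ z : ℝ, 0 ≤ z → (z ^ (p⁻¹)) ^ p = z := fun z hz => Real.rpow_inv_rpow hz hp.ne'
  have e2 : ∀ z : ℝ, 0 ≤ z → (z ^ (q⁻¹)) ^ q = z := fun z hz => Real.rpow_inv_rpow hz hq.ne'
  simp [Fin.sum_univ_two, e1, e2, ha, hb, hx, hy] at h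
  calc _ ≤ ((a + b) ^ p⁻¹ * (x + y) ^ q⁻¹) ^ q := by
        apply Real.rpow_le_rpow (by positivity) (by simpa using h) hq.le
    _ = _ := by
        rw [Real.mul_rpow (by positivity) (by positivity), e2 _ (by positivity),
          ← Real.rpow_mul (by positivity)]
        congr 2; field_simp

/-- A level `L` exceeds the logarithmic measure `τ = log (V / T)` of its superlevel set by at most
`p ^ q`. Here `M` is the `L^p` mass of the rearrangement on `(0, T]`; the hypothesis `h` is
`level_bound` with `t = t₁ = T`. -/
lemma garsia_weak {p q : ℝ} (hpq : p.HolderConjugate q) {τ M L : ℝ}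
    (hτ : 0 ≤ τ) (hM : 0 ≤ M) (hM1 : M ≤ 1) (hL : 0 ≤ L)
    (h : L ^ (1 / q) ≤ p * M ^ (1 / p) + (1 - M) ^ (1 / p) * τ ^ (1 / q)) :
    L ≤ τ + p ^ q := by
  have hp := hpq.pos
  have hq := hpq.symm.pos
  have h2 := weighted_holder hpq hM (sub_nonneg.2 hM1) (Real.rpow_nonneg hp.le q) hτ
  rw [one_div q, Real.rpow_rpow_inv hp.le hq.ne'] at h2
  have e : (L ^ (1 / q)) ^ q = L := by rw [one_div, Real.rpow_inv_rpow hL hq.ne']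
  have : L ≤ (p * M ^ (1 / p) + (1 - M) ^ (1 / p) * τ ^ (1 / q)) ^ q := by
    conv_lhs => rw [← e]
    exact Real.rpow_le_rpow (by positivity) h hq.le
  have h3 : M + (1 - M) = 1 := by ring
  rw [h3, Real.one_rpow, mul_comm (M ^ _) p, ← one_div] at h2
  linarith

/-- If moreover `τ - L ≤ j`, then `M * τ = O(j + 1)`: a near-extremal level forces the mass `M`
carried by `(0, T]` to be small. The reason is that halving the weight of `M` in Hölder's inequality
lowers `(M + (1 - M)) ^ (q / p) = 1` by an amount proportional to `M`. -/
lemma garsia_mass {p q : ℝ} (hpq : p.HolderConjugate q) (hp2 : 2 ≤ p) {τ M L j : ℝ}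
    (hτ : 0 ≤ τ) (hM : 0 ≤ M) (hM1 : M ≤ 1) (hL : 0 ≤ L)
    (h : L ^ (1 / q) ≤ p * M ^ (1 / p) + (1 - M) ^ (1 / p) * τ ^ (1 / q))
    (hj : τ - L ≤ j) :
    (q / p) / 2 * (M * τ) ≤ j + (2 ^ (1 / p) * p) ^ q := by
  have hp := hpq.pos
  have hq := hpq.symm.pos
  have hq2 : q / p ≤ 1 := by
    rw [div_le_one hp]
    have := hpq.inv_add_inv_eq_one
    have h1 : p⁻¹ ≤ 2⁻¹ := inv_anti₀ (by norm_num) hp2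
    have h3 : q ≤ 2 := by
      rw [← inv_le_inv₀ (by norm_num) hq]; linarith
    linarith
  have h2 := weighted_holder hpq (a := M / 2) (by positivity) (sub_nonneg.2 hM1)
    (x := (2 ^ (1 / p) * p) ^ q) (by positivity) hτ
  rw [one_div q, Real.rpow_rpow_inv (by positivity) hq.ne', ← one_div] at h2
  have e : (L ^ (1 / q)) ^ q = L := by rw [one_div, Real.rpow_inv_rpow hL hq.ne']
  have e3 : (M / 2) ^ (1 / p) * (2 ^ (1 / p) * p) = p * M ^ (1 / p) := by
    rw [← mul_assoc, ← Real.mul_rpow (by positivity) (by positivity)]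
    rw [div_mul_cancel₀ _ (by norm_num), mul_comm]
  rw [e3] at h2
  have h4 : L ≤ (p * M ^ (1 / p) + (1 - M) ^ (1 / p) * τ ^ (1 / q)) ^ q := by
    conv_lhs => rw [← e]
    exact Real.rpow_le_rpow (by positivity) h hq.le
  have h5 : (M / 2 + (1 - M)) ^ (q / p) ≤ 1 - (q / p) * (M / 2) := by
    have := rpow_one_add_le_one_add_mul_self (s := -(M/2)) (by linarith)
      (p := q / p) (by positivity) hq2
    calc _ = (1 + -(M/2)) ^ (q / p) := by congr 1; ring
      _ ≤ _ := by linarith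
  have hB : 0 ≤ (2 ^ (1 / p) * p) ^ q := by positivity
  have h6 := mul_le_mul_of_nonneg_right h5 (add_nonneg hB hτ)
  have h7 : 0 ≤ (q / p) * (M / 2) * (2 ^ (1 / p) * p) ^ q := by positivity
  nlinarith

/-- Two near-extremal levels `L₁ ≤ L₂` have comparable logarithmic measures: if both satisfy
`log (V / T) - L ≤ j` and the first has `τ = log (V / T(L₁))` large compared with `j + 1`, then
`D = log (T(L₁) / T(L₂))` is `O(j + 1)`. The numbers `M` and `N` stand for the masses of the
rearrangement on `(0, T(L₁)]` and `(0, T(L₂)]`, and the two displayed inequalities are instances of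
`level_bound`. -/
lemma garsia_gap {p q : ℝ} (hpq : p.HolderConjugate q) (hp2 : 2 ≤ p) :
    ∃ A : ℝ, 0 ≤ A ∧ ∀ τ D M N L₁ L₂ j : ℝ, 0 ≤ τ → 0 ≤ D → 0 ≤ N → N ≤ M → M ≤ 1 →
      0 ≤ L₁ → 0 ≤ L₂ → 0 ≤ j →
      L₁ ^ (1 / q) ≤ p * M ^ (1 / p) + (1 - M) ^ (1 / p) * τ ^ (1 / q) →
      L₂ ^ (1 / q) ≤ p * N ^ (1 / p) + M ^ (1 / p) * D ^ (1 / q)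
        + (1 - M) ^ (1 / p) * τ ^ (1 / q) →
      τ - L₁ ≤ j → τ + D - L₂ ≤ j → A * (j + 1) < τ → D ≤ A * (j + 1) := by
  have hp := hpq.pos
  have hq := hpq.symm.pos
  have hq1 := hpq.symm.lt
  have hq2 : q / p ≤ 1 := by
    rw [div_le_one hp]
    have := hpq.inv_add_inv_eq_one
    have h1 : p⁻¹ ≤ 2⁻¹ := inv_anti₀ (by norm_num) hp2
    have h3 : q ≤ 2 := by
      rw [← inv_le_inv₀ (by norm_num) hq]; linarith
    linarith
  -- The weight `κ` is chosen so that `κ ^ (q / p)` absorbs the factor `2 ^ q` coming from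
  -- `(D ^ (1 / q) + p) ^ q ≤ 2 ^ q * (D / 2 + C)`, leaving only `D / 2` on the right-hand side.
  obtain ⟨κ, hκ, hκe⟩ : ∃ κ : ℝ, 0 < κ ∧ κ ^ (q / p) = 2 ^ q :=
    ⟨(2 ^ q) ^ (p / q), by positivity, by
      rw [← Real.rpow_mul (by positivity)]; field_simp; simp⟩
  set C := p ^ q with hC
  have hC0 : 0 ≤ C := by positivity
  set B := (2 ^ (1 / p) * p) ^ q with hB
  have hB0 : 0 ≤ B := by positivity
  set K := 2 * (p / q) * (1 + B) with hK
  have hK0 : 0 ≤ K := by positivity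
  refine ⟨2 * κ * K + 4 * (1 + C + κ * K + C), by positivity, ?_⟩
  intro τ D M N L₁ L₂ j hτ hD hN hNM hM1 hL₁ hL₂ hj h1 h2 g1 g2 hbig
  have hM : 0 ≤ M := hN.trans hNM
  have hm := garsia_mass hpq hp2 hτ hM hM1 hL₁ h1 g1
  have hMτ : M * τ ≤ K * (j + 1) := by
    have : M * τ = (2 * (p / q)) * ((q / p) / 2 * (M * τ)) := by field_simp
    have h3 : (q / p) / 2 * (M * τ) ≤ (1 + B) * (j + 1) :=
      hm.trans (by nlinarith [mul_nonneg hB0 hj])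
    calc M * τ = (2 * (p / q)) * ((q / p) / 2 * (M * τ)) := this
      _ ≤ (2 * (p / q)) * ((1 + B) * (j + 1)) := mul_le_mul_of_nonneg_left h3 (by positivity)
      _ = _ := by rw [hK]; ring
  have hκM : κ * M ≤ 1 / 2 := by
    have hτ' : 2 * κ * K * (j + 1) < τ := by
      refine lt_of_le_of_lt ?_ hbig
      have : 0 ≤ 4 * (1 + C + κ * K + C) * (j + 1) := by positivity
      nlinarith
    have hτ0 : 0 < τ := lt_of_le_of_lt (by positivity) hτ'
    by_contra hcon
    push Not at hcon
    have : 1 / 2 * τ < κ * M * τ := mul_lt_mul_of_pos_right hcon hτ0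
    nlinarith [mul_le_mul_of_nonneg_left hMτ hκ.le]
  -- Hölder with weights `κ M` and `1 - M`; since `κ M τ = O(j + 1)`, the inflated weight costs
  -- only `O(j + 1)`.
  have hZ : (D ^ (1 / q) + p) ^ q ≤ 2 ^ q * (D / 2 + C) := by
    have := real_add_rpow_le (a := D ^ (1 / q)) (b := p) (by positivity) hp.le hq1.le
    rw [one_div, Real.rpow_inv_rpow hD hq.ne', ← one_div, Real.rpow_sub_one (by norm_num)] at this
    have h3 : 0 ≤ (2:ℝ) ^ q * C := by positivity
    calc _ ≤ _ := this
      _ = 2 ^ q * (D / 2 + C / 2) := by rw [hC]; ring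
      _ ≤ _ := by gcongr; linarith
  set Z := D ^ (1 / q) + p with hZdef
  have hZ0 : 0 ≤ Z := by positivity
  have hw := weighted_holder hpq (a := κ * M) (by positivity) (sub_nonneg.2 hM1)
    (x := (κ ^ (-(1 / p)) * Z) ^ q) (by positivity) hτ
  rw [one_div q, Real.rpow_rpow_inv (by positivity) hq.ne', ← one_div] at hw
  have e3 : (κ * M) ^ (1 / p) * (κ ^ (-(1 / p)) * Z) = M ^ (1 / p) * Z := by
    rw [Real.mul_rpow hκ.le hM, Real.rpow_neg hκ.le]
    have : κ ^ (1 / p) ≠ 0 := by positivity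
    field_simp
  have e4 : (κ ^ (-(1 / p)) * Z) ^ q ≤ D / 2 + C := by
    rw [Real.mul_rpow (by positivity) hZ0, ← Real.rpow_mul hκ.le,
      show -(1 / p) * q = -(q / p) by ring, Real.rpow_neg hκ.le, hκe]
    rw [inv_mul_le_iff₀ (by positivity)]
    exact hZ
  rw [e3] at hw
  have hL : L₂ ≤ (M ^ (1 / p) * Z + (1 - M) ^ (1 / p) * τ ^ (1 / q)) ^ q := by
    have e : (L₂ ^ (1 / q)) ^ q = L₂ := by rw [one_div, Real.rpow_inv_rpow hL₂ hq.ne']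
    conv_lhs => rw [← e]
    refine Real.rpow_le_rpow (by positivity) (h2.trans ?_) hq.le
    have : N ^ (1 / p) ≤ M ^ (1 / p) := Real.rpow_le_rpow hN hNM (by positivity)
    have := mul_le_mul_of_nonneg_left this hp.le
    rw [hZdef, mul_add]; linarith
  have h5 : (κ * M + (1 - M)) ^ (q / p) ≤ 1 + κ * M := by
    have h6 : 0 ≤ κ * M := by positivity
    have := rpow_one_add_le_one_add_mul_self (s := κ * M) (by linarith)
      (p := q / p) (by positivity) hq2
    calc _ ≤ (1 + κ * M) ^ (q / p) := by
          apply Real.rpow_le_rpow (by linarith) (by linarith) (by positivity)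
      _ ≤ 1 + q / p * (κ * M) := this
      _ ≤ _ := by linarith [mul_le_of_le_one_left h6 hq2]
  have h7 : L₂ ≤ (1 + κ * M) * (D / 2 + C + τ) := by
    refine hL.trans (hw.trans ?_)
    gcongr
  have h8 : κ * M * (D / 2 + C) ≤ 1 / 2 * (D / 2 + C) :=
    mul_le_mul_of_nonneg_right hκM (by positivity)
  have h9 := mul_le_mul_of_nonneg_left hMτ hκ.le
  have h10 : D / 4 ≤ j + C + κ * (K * (j + 1)) + C / 2 := by
    have : (1 + κ * M) * (D / 2 + C + τ) =
      D / 2 + C + τ + κ * M * (D / 2 + C) + κ * (M * τ) := by ring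
    linarith
  have h11 : 0 ≤ κ * K * (j + 1) := by positivity
  have h12 : 0 ≤ C * j := by positivity
  calc D ≤ 4 * (j + C + κ * (K * (j + 1)) + C / 2) := by linarith
    _ ≤ _ := by
      have : (2 * κ * K + 4 * (1 + C + κ * K + C)) * (j + 1) =
        6 * (κ * K * (j + 1)) + 4 * (j + 1) + 8 * (C * j) + 8 * C := by ring
      rw [this]; linarith

section abstractPotential

variable {X : Type*} [MeasurableSpace X]

/-! ### Decreasing rearrangement and O'Neil's inequality -/

/-- `∫_0^r s^{-1/q} ds = p r^{1/p}`; the function `s^{-1/q}` is the rearrangement of the extremal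
weak-`L^q` kernel. -/
lemma lintegral_rpow_neg_Ioo {p q : ℝ} (hpq : p.HolderConjugate q) {r : ℝ} (hr : 0 ≤ r) :
    ∫⁻ s in Set.Ioo 0 r, ENNReal.ofReal (s ^ (-(1 / q))) = ENNReal.ofReal (p * r ^ (1 / p)) := by
  have hp := hpq.pos
  have hq := hpq.symm.pos
  have hq1 := hpq.symm.lt
  have h1 : -1 < -(1 / q) := by
    have : 1 / q < 1 := by rw [div_lt_one hq]; exact hq1
    linarith
  have h2 : -(1 / q) + 1 = 1 / p := by
    have := hpq.inv_add_inv_eq_one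
    rw [one_div, one_div]; linarith
  rw [restrict_Ioo_eq_restrict_Ioc, ← ofReal_integral_eq_lintegral_ofReal,
    ← intervalIntegral.integral_of_le hr, integral_rpow (Or.inl h1), h2,
    Real.zero_rpow (by positivity)]
  · congr 1; field_simp; ring
  · have := intervalIntegral.intervalIntegrable_rpow' (a := 0) (b := r) h1
    rwa [intervalIntegrable_iff_integrableOn_Ioc_of_le hr] at this
  · filter_upwards [ae_restrict_mem measurableSet_Ioc] with s hs
    have := hs.1
    positivity

/-- Bathtub principle: a function with `μ {g > α} ≤ α^{-q}` has integral at most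
`p t^{1/p} = ∫_0^t s^{-1/q} ds` over a set of measure at most `t`. -/
lemma bathtub {p q : ℝ} (hpq : p.HolderConjugate q) (μ : Measure X) {g : X → ℝ}
    (hg : Measurable g) (hg0 : ∀ x, 0 ≤ g x)
    (hgm : ∀ α : ℝ, 0 < α → μ {x | α < g x} ≤ ENNReal.ofReal (α ^ (-q)))
    {E : Set X} {t : ℝ} (ht : 0 ≤ t) (hEt : μ E ≤ ENNReal.ofReal t) :
    ∫⁻ x in E, ENNReal.ofReal (g x) ∂μ ≤ ENNReal.ofReal (p * t ^ (1 / p)) := by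
  have hp := hpq.pos
  have hq := hpq.symm.pos
  have hq1 := hpq.symm.lt
  rcases ht.eq_or_lt with rfl | ht
  · have : μ E = 0 := by simpa using hEt
    simp [Measure.restrict_eq_zero.2 this]
  rw [lintegral_eq_lintegral_meas_lt _ (Filter.Eventually.of_forall hg0) hg.aemeasurable]
  set a := t ^ (-(1 / q)) with ha
  have ha0 : 0 < a := by positivity
  rw [← Set.Ioc_union_Ioi_eq_Ioi ha0.le,
    lintegral_union measurableSet_Ioi (Set.Ioc_disjoint_Ioi le_rfl)]
  have h1 : ∫⁻ α in Set.Ioc 0 a, (μ.restrict E) {x | α < g x} ≤ ENNReal.ofReal (t * a) := by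
    calc _ ≤ ∫⁻ α in Set.Ioc 0 a, ENNReal.ofReal t := by
          apply lintegral_mono
          intro α
          refine le_trans (measure_mono (Set.subset_univ _)) ?_
          simpa using hEt
      _ = _ := by
          simp [ENNReal.ofReal_mul ht.le]
  have h2 : ∫⁻ α in Set.Ioi a, (μ.restrict E) {x | α < g x} ≤
      ENNReal.ofReal (a ^ (1 - q) / (q - 1)) := by
    calc _ ≤ ∫⁻ α in Set.Ioi a, ENNReal.ofReal (α ^ (-q)) := by
          apply setLIntegral_mono' measurableSet_Ioi
          intro α hα
          exact (Measure.restrict_apply_le _ _).trans (hgm α (ha0.trans hα))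
      _ = _ := by
          rw [← ofReal_integral_eq_lintegral_ofReal, integral_Ioi_rpow_of_lt (by linarith) ha0]
          · congr 1
            rw [show -q + 1 = -(q - 1) by ring, neg_div_neg_eq, show -(q-1) = 1 - q by ring]
          · exact integrableOn_Ioi_rpow_of_lt (by linarith) ha0
          · filter_upwards [ae_restrict_mem measurableSet_Ioi] with s hs
            have : 0 < s := ha0.trans hs
            positivity
  refine (add_le_add h1 h2).trans ?_
  rw [← ENNReal.ofReal_add (by positivity) (div_nonneg (by positivity) (by linarith))]
  apply le_of_eq
  congr 1
  have e0 := hpq.inv_add_inv_eq_one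
  have e1 : t * a = t ^ (1 / p) := by
    rw [ha]
    nth_rw 1 [← Real.rpow_one t]
    rw [← Real.rpow_add ht]; congr 1; rw [one_div, one_div]; linarith
  have e2 : a ^ (1 - q) = t ^ (1 / p) := by
    rw [ha, ← Real.rpow_mul ht.le]; congr 1
    have : 1 / p = 1 - 1 / q := by rw [one_div, one_div]; linarith
    rw [this]; field_simp; ring
  rw [e1, e2]
  have : (q - 1)⁻¹ = p - 1 := by
    have h4 := hpq.mul_eq_add
    refine inv_eq_of_mul_eq_one_right ?_
    linarith
  rw [div_eq_mul_inv _ (q - 1), this]; ring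

/-- The decreasing rearrangement `f* (s) = inf {α ≥ 0 | μ {f > α} ≤ s}`. Only nonnegative levels
are used, so it is meant for `f ≥ 0`; `f` is assumed bounded above in the lemmas, which makes the
set of levels nonempty. -/
def rearr (μ : Measure X) (f : X → ℝ) (s : ℝ) : ℝ :=
  sInf {α : ℝ | 0 ≤ α ∧ μ {x | α < f x} ≤ ENNReal.ofReal s}

section rearr
variable {μ : Measure X} {f : X → ℝ}

lemma rearr_nonneg (s : ℝ) : 0 ≤ rearr μ f s := Real.sInf_nonneg fun _ h => h.1

lemma rearr_le_iff {b : ℝ} (hb : ∀ x, f x ≤ b) (s : ℝ) {α : ℝ} (hα : 0 ≤ α) :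
    rearr μ f s ≤ α ↔ μ {x | α < f x} ≤ ENNReal.ofReal s := by
  have hbdd : BddBelow {α : ℝ | 0 ≤ α ∧ μ {x | α < f x} ≤ ENNReal.ofReal s} :=
    ⟨0, fun _ h => h.1⟩
  constructor
  · intro h
    have hne : {α : ℝ | 0 ≤ α ∧ μ {x | α < f x} ≤ ENNReal.ofReal s}.Nonempty := by
      refine ⟨max b 0, le_max_right _ _, ?_⟩
      have : {x | max b 0 < f x} = ∅ := by
        ext x
        simpa using fun h => absurd (hb x) (not_le.2 h)
      rw [this]
      simp
    have key : ∀ k : ℕ, μ {x | α + 1 / ((k : ℝ) + 1) < f x} ≤ ENNReal.ofReal s := by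
      intro k
      have hlt : rearr μ f s < α + 1 / ((k : ℝ) + 1) := by
        have : 0 < 1 / ((k : ℝ) + 1) := by positivity
        linarith
      obtain ⟨β, hβ, hβ2⟩ := exists_lt_of_csInf_lt hne hlt
      exact (measure_mono fun x hx => hβ2.trans hx).trans hβ.2
    have hU : {x | α < f x} = ⋃ k : ℕ, {x | α + 1 / ((k : ℝ) + 1) < f x} := by
      ext x
      simp only [Set.mem_ofPred_eq, Set.mem_iUnion]
      constructor
      · intro hx
        obtain ⟨k, hk⟩ := exists_nat_one_div_lt (sub_pos.2 hx)
        exact ⟨k, by linarith⟩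
      · rintro ⟨k, hk⟩
        have : 0 < 1 / ((k : ℝ) + 1) := by positivity
        linarith
    rw [hU, Monotone.measure_iUnion]
    · exact iSup_le key
    · intro i j hij x hx
      simp only [Set.mem_ofPred_eq] at hx ⊢
      have : 1 / ((j : ℝ) + 1) ≤ 1 / ((i : ℝ) + 1) := by
        apply one_div_le_one_div_of_le (by positivity)
        have : (i : ℝ) ≤ j := by exact_mod_cast hij
        linarith
      linarith
  · intro h
    exact csInf_le hbdd ⟨hα, h⟩

lemma lt_rearr_iff [IsFiniteMeasure μ] {b : ℝ} (hb : ∀ x, f x ≤ b) {s : ℝ} (hs : 0 ≤ s) {α : ℝ}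
    (hα : 0 ≤ α) : α < rearr μ f s ↔ s < μ.real {x | α < f x} := by
  rw [← not_le, rearr_le_iff hb s hα, not_le, Measure.real,
    ENNReal.ofReal_lt_iff_lt_toReal hs (measure_ne_top _ _)]

lemma rearr_antitone {b : ℝ} (hb : ∀ x, f x ≤ b) : Antitone (rearr μ f) := by
  intro s t hst
  rw [rearr_le_iff hb _ (rearr_nonneg _)]
  exact ((rearr_le_iff hb s (rearr_nonneg s)).1 le_rfl).trans (ENNReal.ofReal_le_ofReal hst)

lemma rearr_eq_zero [IsFiniteMeasure μ] {b : ℝ} (hb : ∀ x, f x ≤ b) {s : ℝ}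
    (hs : μ.real Set.univ ≤ s) : rearr μ f s = 0 := by
  refine le_antisymm ?_ (rearr_nonneg s)
  rw [rearr_le_iff hb _ le_rfl]
  refine (measure_mono (Set.subset_univ _)).trans ?_
  rw [← ofReal_measureReal (measure_ne_top _ _)]
  exact ENNReal.ofReal_le_ofReal hs

lemma rearr_meas [IsFiniteMeasure μ] {b : ℝ} (hb : ∀ x, f x ≤ b) {α : ℝ} (hα : 0 ≤ α) :
    {s | α < rearr μ f s} ∩ Set.Ioi 0 = Set.Ioo 0 (μ.real {x | α < f x}) := by
  ext s
  simp only [Set.mem_inter_iff, Set.mem_ofPred_eq, Set.mem_Ioi, Set.mem_Ioo]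
  constructor
  · rintro ⟨h1, h2⟩
    exact ⟨h2, (lt_rearr_iff hb h2.le hα).1 h1⟩
  · rintro ⟨h1, h2⟩
    exact ⟨(lt_rearr_iff hb h1.le hα).2 h2, h1⟩

lemma rearr_vol [IsFiniteMeasure μ] {b : ℝ} (hb : ∀ x, f x ≤ b) {α : ℝ} (hα : 0 ≤ α) :
    (volume.restrict (Set.Ioi 0)) {s | α < rearr μ f s} = μ {x | α < f x} := by
  rw [Measure.restrict_apply' measurableSet_Ioi, rearr_meas hb hα, Real.volume_Ioo, sub_zero,
    ofReal_measureReal (measure_ne_top _ _)]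

lemma rearr_measurable {b : ℝ} (hb : ∀ x, f x ≤ b) : Measurable (rearr μ f) :=
  (rearr_antitone hb).measurable

lemma rearr_lintegral_rpow [IsFiniteMeasure μ] {b : ℝ} (hb : ∀ x, f x ≤ b) (hf : Measurable f)
    (hf0 : ∀ x, 0 ≤ f x) {p : ℝ} (hp : 0 < p) :
    ∫⁻ s in Set.Ioi 0, ENNReal.ofReal (rearr μ f s ^ p) = ∫⁻ x, ENNReal.ofReal (f x ^ p) ∂μ := by
  rw [lintegral_rpow_eq_lintegral_meas_lt_mul _ (Filter.Eventually.of_forall rearr_nonneg)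
    (rearr_measurable hb).aemeasurable hp, lintegral_rpow_eq_lintegral_meas_lt_mul _
    (Filter.Eventually.of_forall hf0) hf.aemeasurable hp]
  congr 1
  apply setLIntegral_congr_fun measurableSet_Ioi
  intro α hα
  simp only []
  rw [rearr_vol hb (le_of_lt hα)]

/-- The part of `f` above height `a` is equimeasurable with that of its rearrangement. -/
lemma rearr_excess [IsFiniteMeasure μ] {b : ℝ} (hb : ∀ x, f x ≤ b) (hf : Measurable f)
    {a : ℝ} (ha : 0 ≤ a) :
    ∫⁻ s in Set.Ioi 0, ENNReal.ofReal (max (rearr μ f s - a) 0) =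
      ∫⁻ x, ENNReal.ofReal (max (f x - a) 0) ∂μ := by
  have h1 := rearr_measurable (μ := μ) hb
  rw [lintegral_eq_lintegral_meas_lt (f := fun s => max (rearr μ f s - a) 0) _
      (Filter.Eventually.of_forall fun _ => le_max_right _ _) (by fun_prop),
    lintegral_eq_lintegral_meas_lt (f := fun x => max (f x - a) 0) _
      (Filter.Eventually.of_forall fun _ => le_max_right _ _) (by fun_prop)]
  apply setLIntegral_congr_fun measurableSet_Ioi
  intro α hα
  have hα' : (0:ℝ) < α := hα
  have e : ∀ z : ℝ, α < max (z - a) 0 ↔ α + a < z := by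
    intro z
    rw [lt_max_iff]
    constructor
    · rintro (h | h) <;> linarith
    · intro h; left; linarith
  simp only [e]
  exact rearr_vol hb (by linarith)

/-- Hardy–Littlewood inequality for the part of `f` below height `a`, against a weak-`L^q`
function `g`: a layer-cake decomposition in the level of `f` reduces it to `bathtub`. -/
lemma rearr_trunc [IsFiniteMeasure μ] {p q : ℝ} (hpq : p.HolderConjugate q) {b : ℝ}
    (hb : ∀ x, f x ≤ b) (hf : Measurable f) (hf0 : ∀ x, 0 ≤ f x) {a : ℝ} (ha : 0 ≤ a)
    {g : X → ℝ} (hg : Measurable g) (hg0 : ∀ x, 0 ≤ g x)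
    (hgm : ∀ α : ℝ, 0 < α → μ {x | α < g x} ≤ ENNReal.ofReal (α ^ (-q))) :
    ∫⁻ x, ENNReal.ofReal (g x) * ENNReal.ofReal (min (f x) a) ∂μ ≤
      ∫⁻ s in Set.Ioi 0, ENNReal.ofReal (s ^ (-(1 / q))) *
        ENNReal.ofReal (min (rearr μ f s) a) := by
  have h1 := rearr_measurable (μ := μ) hb
  have hw : Measurable fun s : ℝ => ENNReal.ofReal (s ^ (-(1 / q))) := by fun_prop
  have e1 := lintegral_withDensity_eq_lintegral_mul μ (f := fun x => ENNReal.ofReal (g x))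
    (by fun_prop) (g := fun x => ENNReal.ofReal (min (f x) a)) (by fun_prop)
  have e2 := lintegral_withDensity_eq_lintegral_mul (volume.restrict (Set.Ioi (0:ℝ))) hw
    (g := fun s => ENNReal.ofReal (min (rearr μ f s) a)) (by fun_prop)
  simp only [Pi.mul_apply] at e1 e2
  rw [← e1, ← e2, lintegral_eq_lintegral_meas_lt _
      (Filter.Eventually.of_forall fun x => le_min (hf0 x) ha) (by fun_prop),
    lintegral_eq_lintegral_meas_lt _
      (Filter.Eventually.of_forall fun x => le_min (rearr_nonneg x) ha) (by fun_prop)]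
  apply setLIntegral_mono' measurableSet_Ioi
  intro α hα
  have hα' : (0:ℝ) < α := hα
  simp only [lt_min_iff]
  by_cases hαa : α < a
  · simp only [hαa, and_true]
    have hm : MeasurableSet {x | α < f x} := measurableSet_lt measurable_const hf
    have hm' : MeasurableSet {s | α < rearr μ f s} := measurableSet_lt measurable_const h1
    rw [withDensity_apply _ hm, withDensity_apply _ hm', Measure.restrict_restrict hm',
      rearr_meas hb hα'.le, lintegral_rpow_neg_Ioo hpq measureReal_nonneg]
    apply bathtub hpq μ hg hg0 hgm measureReal_nonneg
    rw [ofReal_measureReal (measure_ne_top _ _)]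
  · simp [hαa]

end rearr

/-- O'Neil's inequality for the potential `∫ k(x, y) f(y) dy`, averaged over a set `E` of measure
`t`, when the kernel has weak-`L^q` constant one in each variable. The excess `(f - f*(t))₊` is
integrated in `x` first, the truncation `min f (f*(t))` in `y` first. -/
lemma oneil {μ : Measure X} [IsFiniteMeasure μ] {p q : ℝ} (hpq : p.HolderConjugate q)
    {k : X → X → ℝ} (hk : Measurable (Function.uncurry k)) (hk0 : ∀ x y, 0 ≤ k x y)
    (hk1 : ∀ x, ∀ α : ℝ, 0 < α → μ {y | α < k x y} ≤ ENNReal.ofReal (α ^ (-q)))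
    (hk2 : ∀ y, ∀ α : ℝ, 0 < α → μ {x | α < k x y} ≤ ENNReal.ofReal (α ^ (-q)))
    {f : X → ℝ} {b : ℝ} (hb : ∀ x, f x ≤ b) (hf : Measurable f) (hf0 : ∀ x, 0 ≤ f x)
    {E : Set X} {t : ℝ} (ht : 0 < t) (hEt : μ E = ENNReal.ofReal t) :
    ∫⁻ x in E, (∫⁻ y, ENNReal.ofReal (k x y) * ENNReal.ofReal (f y) ∂μ) ∂μ ≤
      ENNReal.ofReal t * (ENNReal.ofReal (p * t ^ (-(1 / q))) *
        (∫⁻ s in Set.Ioc 0 t, ENNReal.ofReal (rearr μ f s)) +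
        ∫⁻ s in Set.Ioi t, ENNReal.ofReal (s ^ (-(1 / q))) * ENNReal.ofReal (rearr μ f s)) := by
  have hp := hpq.pos
  have e0 := hpq.inv_add_inv_eq_one
  set a := rearr μ f t with ha
  have ha0 : 0 ≤ a := rearr_nonneg t
  have hr := rearr_measurable (μ := μ) hb
  have hkx : ∀ x, Measurable (k x) := fun x => hk.comp measurable_prodMk_left
  have hky : ∀ y, Measurable fun x => k x y := fun y => hk.comp measurable_prodMk_right
  have hpt : t * (p * t ^ (-(1 / q))) = p * t ^ (1 / p) := by
    have : t * t ^ (-(1 / q)) = t ^ (1 / p) := by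
      nth_rw 1 [← Real.rpow_one t]
      rw [← Real.rpow_add ht]; congr 1; rw [one_div, one_div]; linarith
    rw [← this]; ring
  -- Split `f` at the height `a`, the value of its rearrangement at `t`.
  have hsplit : ∀ x, (∫⁻ y, ENNReal.ofReal (k x y) * ENNReal.ofReal (f y) ∂μ) =
      (∫⁻ y, ENNReal.ofReal (k x y) * ENNReal.ofReal (max (f y - a) 0) ∂μ) +
      ∫⁻ y, ENNReal.ofReal (k x y) * ENNReal.ofReal (min (f y) a) ∂μ := by
    intro x
    have := hkx x
    rw [← lintegral_add_left (by fun_prop)]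
    congr 1; ext y
    rw [← mul_add, ← ENNReal.ofReal_add (le_max_right _ _) (le_min (hf0 y) ha0)]
    congr 2
    rcases le_total (f y) a with h | h
    · rw [max_eq_right (by linarith), min_eq_left h]; ring
    · rw [max_eq_left (by linarith), min_eq_right h]; ring
  have hmm : Measurable fun z : X × X => ENNReal.ofReal (k z.1 z.2) *
      ENNReal.ofReal (max (f z.2 - a) 0) := by
    have : Measurable fun z : X × X => k z.1 z.2 := hk
    fun_prop
  have hA : ∫⁻ x in E, (∫⁻ y, ENNReal.ofReal (k x y) * ENNReal.ofReal (max (f y - a) 0) ∂μ) ∂μ ≤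
      ENNReal.ofReal (p * t ^ (1 / p)) *
        ∫⁻ s in Set.Ioi 0, ENNReal.ofReal (max (rearr μ f s - a) 0) := by
    rw [rearr_excess hb hf ha0, lintegral_lintegral_swap hmm.aemeasurable,
      ← lintegral_const_mul _ (by fun_prop)]
    apply lintegral_mono
    intro y
    have := hky y
    simp only []
    rw [lintegral_mul_const _ (by fun_prop)]
    gcongr
    exact bathtub hpq μ this (fun x => hk0 x y) (hk2 y) ht.le hEt.le
  have hB : ∫⁻ x in E, (∫⁻ y, ENNReal.ofReal (k x y) * ENNReal.ofReal (min (f y) a) ∂μ) ∂μ ≤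
      ENNReal.ofReal t * ∫⁻ s in Set.Ioi 0, ENNReal.ofReal (s ^ (-(1 / q))) *
        ENNReal.ofReal (min (rearr μ f s) a) := by
    calc _ ≤ ∫⁻ x in E, (∫⁻ s in Set.Ioi 0, ENNReal.ofReal (s ^ (-(1 / q))) *
        ENNReal.ofReal (min (rearr μ f s) a)) ∂μ :=
          lintegral_mono fun x => rearr_trunc hpq hb hf hf0 ha0 (hkx x) (hk0 x) (hk1 x)
      _ = _ := by simp [hEt, mul_comm]
  simp only [hsplit]
  rw [lintegral_add_left (Measurable.lintegral_prod_right hmm)]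
  refine (add_le_add hA hB).trans ?_
  rw [← hpt, ENNReal.ofReal_mul ht.le, mul_assoc, ← mul_add]
  refine mul_le_mul' le_rfl ?_
  rw [← Set.Ioc_union_Ioi_eq_Ioi ht.le,
    lintegral_union measurableSet_Ioi (Set.Ioc_disjoint_Ioi le_rfl),
    lintegral_union measurableSet_Ioi (Set.Ioc_disjoint_Ioi le_rfl)]
  have hz : ∫⁻ s in Set.Ioi t, ENNReal.ofReal (max (rearr μ f s - a) 0) = 0 := by
    rw [setLIntegral_congr_fun (g := fun _ => 0) measurableSet_Ioi]
    · simp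
    · intro s hs
      have : rearr μ f s ≤ a := rearr_antitone hb (le_of_lt hs)
      simp [this]
  rw [hz, add_zero, ← add_assoc]
  refine add_le_add ?_ (setLIntegral_mono' measurableSet_Ioi fun s hs => by
    gcongr; exact min_le_left _ _)
  have h1 : ∫⁻ s in Set.Ioc 0 t, ENNReal.ofReal (s ^ (-(1 / q))) *
      ENNReal.ofReal (min (rearr μ f s) a) =
      ENNReal.ofReal (p * t ^ (-(1 / q))) * ∫⁻ s in Set.Ioc 0 t, ENNReal.ofReal a := by
    rw [setLIntegral_congr_fun (g := fun s => ENNReal.ofReal (s ^ (-(1 / q))) * ENNReal.ofReal a)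
      measurableSet_Ioc]
    · rw [lintegral_mul_const _ (by fun_prop), ← restrict_Ioo_eq_restrict_Ioc,
        lintegral_rpow_neg_Ioo hpq ht.le, ← hpt, ENNReal.ofReal_mul ht.le]
      simp
      ring
    · intro s hs
      have : a ≤ rearr μ f s := rearr_antitone hb hs.2
      simp [this]
  rw [h1, ← mul_add, ← lintegral_add_left (by fun_prop)]
  refine le_of_eq (congrArg _ ?_)
  apply setLIntegral_congr_fun measurableSet_Ioc
  intro s hs
  have : a ≤ rearr μ f s := rearr_antitone hb hs.2
  simp only []
  rw [max_eq_left (by linarith), ← ENNReal.ofReal_add (by linarith) ha0]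
  congr 1; ring

/-! ### Level sets of potentials -/

/-- Hölder's inequality on an interval, with the bounds on the two factors as hypotheses. -/
lemma holder_Ioc {p q : ℝ} (hpq : p.HolderConjugate q) {r w : ℝ → ℝ} (hr : Measurable r)
    (hw : Measurable w) (hr0 : ∀ s, 0 ≤ r s) {a b m c : ℝ} (hw0 : ∀ s ∈ Set.Ioc a b, 0 ≤ w s)
    (hm : 0 ≤ m) (hc : 0 ≤ c)
    (h : ∫⁻ s in Set.Ioc a b, ENNReal.ofReal (r s ^ p) ≤ ENNReal.ofReal m)
    (h' : ∫⁻ s in Set.Ioc a b, ENNReal.ofReal (w s ^ q) ≤ ENNReal.ofReal c) :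
    ∫⁻ s in Set.Ioc a b, ENNReal.ofReal (w s) * ENNReal.ofReal (r s) ≤
      ENNReal.ofReal (m ^ (1 / p) * c ^ (1 / q)) := by
  have hp := hpq.pos
  have hq := hpq.symm.pos
  have H := ENNReal.lintegral_mul_le_Lp_mul_Lq (volume.restrict (Set.Ioc a b)) hpq
    (f := fun s => ENNReal.ofReal (r s)) (g := fun s => ENNReal.ofReal (w s))
    (by fun_prop) (by fun_prop)
  have e1 : ∫⁻ s in Set.Ioc a b, ENNReal.ofReal (r s) ^ p =
      ∫⁻ s in Set.Ioc a b, ENNReal.ofReal (r s ^ p) := by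
    congr 1; ext s; rw [ENNReal.ofReal_rpow_of_nonneg (hr0 s) hp.le]
  have e2 : ∫⁻ s in Set.Ioc a b, ENNReal.ofReal (w s) ^ q =
      ∫⁻ s in Set.Ioc a b, ENNReal.ofReal (w s ^ q) := by
    apply setLIntegral_congr_fun measurableSet_Ioc
    intro s hs
    simp only []
    rw [ENNReal.ofReal_rpow_of_nonneg (hw0 s hs) hq.le]
  rw [e1, e2] at H
  calc _ = ∫⁻ s in Set.Ioc a b, ((fun s => ENNReal.ofReal (r s)) *
        (fun s => ENNReal.ofReal (w s))) s := by
        congr 1; ext s; simp [mul_comm]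
    _ ≤ _ := H
    _ ≤ ENNReal.ofReal m ^ (1 / p) * ENNReal.ofReal c ^ (1 / q) := by gcongr
    _ = _ := by
      rw [ENNReal.ofReal_rpow_of_nonneg hm (by positivity),
        ENNReal.ofReal_rpow_of_nonneg hc (by positivity), ← ENNReal.ofReal_mul (by positivity)]

lemma lintegral_inv_Ioc {q : ℝ} (hq : 0 < q) {a b : ℝ} (ha : 0 < a) (hab : a ≤ b) :
    ∫⁻ s in Set.Ioc a b, ENNReal.ofReal ((s ^ (-(1 / q))) ^ q) ≤
      ENNReal.ofReal (Real.log (b / a)) := by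
  have : ∫⁻ s in Set.Ioc a b, ENNReal.ofReal ((s ^ (-(1 / q))) ^ q) =
      ∫⁻ s in Set.Ioc a b, ENNReal.ofReal (s⁻¹) := by
    apply setLIntegral_congr_fun measurableSet_Ioc
    intro s hs
    have hs0 : 0 < s := ha.trans hs.1
    simp only []
    rw [← Real.rpow_mul hs0.le, ← Real.rpow_neg_one]
    congr 2; field_simp
  rw [this, ← ofReal_integral_eq_lintegral_ofReal, ← intervalIntegral.integral_of_le hab,
    integral_inv_of_pos ha (ha.trans_le hab)]
  · rw [← IntegrableOn, ← intervalIntegrable_iff_integrableOn_Ioc_of_le hab]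
    apply intervalIntegral.intervalIntegrable_inv
    · intro s hs
      rw [Set.uIcc_of_le hab] at hs
      exact (ha.trans_le hs.1).ne'
    · fun_prop
  · filter_upwards [ae_restrict_mem measurableSet_Ioc] with s hs
    have : 0 < s := ha.trans hs.1
    positivity

/-- The `L^p` mass `∫_0^t (f*)^p` of the decreasing rearrangement on `(0, t]`, as a real number
(finite as soon as `∫ f^p` is). -/
def rearrMass (μ : Measure X) (f : X → ℝ) (p t : ℝ) : ℝ :=
  (∫⁻ s in Set.Ioc 0 t, ENNReal.ofReal (rearr μ f s ^ p)).toReal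

section mass
variable {μ : Measure X} [IsFiniteMeasure μ] {f : X → ℝ} {b p : ℝ}

lemma rearrMass_aux (hb : ∀ x, f x ≤ b) (hf : Measurable f)
    (hf0 : ∀ x, 0 ≤ f x) (hp : 0 < p) (hN : ∫⁻ x, ENNReal.ofReal (f x ^ p) ∂μ ≤ 1) (t : ℝ) :
    ∫⁻ s in Set.Ioc 0 t, ENNReal.ofReal (rearr μ f s ^ p) ≤ 1 := by
  refine (lintegral_mono_set Set.Ioc_subset_Ioi_self).trans ?_
  rwa [rearr_lintegral_rpow hb hf hf0 hp]

lemma ofReal_rearrMass (hb : ∀ x, f x ≤ b) (hf : Measurable f)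
    (hf0 : ∀ x, 0 ≤ f x) (hp : 0 < p) (hN : ∫⁻ x, ENNReal.ofReal (f x ^ p) ∂μ ≤ 1) (t : ℝ) :
    ENNReal.ofReal (rearrMass μ f p t) =
      ∫⁻ s in Set.Ioc 0 t, ENNReal.ofReal (rearr μ f s ^ p) :=
  ENNReal.ofReal_toReal (ne_top_of_le_ne_top ENNReal.one_ne_top
    (rearrMass_aux hb hf hf0 hp hN t))

lemma rearrMass_le_one (hb : ∀ x, f x ≤ b) (hf : Measurable f)
    (hf0 : ∀ x, 0 ≤ f x) (hp : 0 < p) (hN : ∫⁻ x, ENNReal.ofReal (f x ^ p) ∂μ ≤ 1) (t : ℝ) :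
    rearrMass μ f p t ≤ 1 :=
  ENNReal.toReal_le_of_le_ofReal zero_le_one (by simpa using rearrMass_aux hb hf hf0 hp hN t)

lemma rearrMass_mono (hb : ∀ x, f x ≤ b) (hf : Measurable f)
    (hf0 : ∀ x, 0 ≤ f x) (hp : 0 < p) (hN : ∫⁻ x, ENNReal.ofReal (f x ^ p) ∂μ ≤ 1) {s t : ℝ}
    (hst : s ≤ t) : rearrMass μ f p s ≤ rearrMass μ f p t := by
  apply ENNReal.toReal_mono (ne_top_of_le_ne_top ENNReal.one_ne_top
    (rearrMass_aux hb hf hf0 hp hN t))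
  exact lintegral_mono_set (Set.Ioc_subset_Ioc_right hst)

end mass

/-- If the potential of `f` is at least `l` on a set `E` of measure `t`, then `l` is bounded by the
masses of the rearrangement on `(0, t]`, `(0, t₁]` and beyond, with logarithmic weights. This is
`oneil` followed by Hölder's inequality on each of `(0, t]`, `(t, t₁]` and `(t₁, μ(X)]`. -/
lemma level_bound {μ : Measure X} [IsFiniteMeasure μ] {p q : ℝ} (hpq : p.HolderConjugate q)
    {k : X → X → ℝ} (hk : Measurable (Function.uncurry k)) (hk0 : ∀ x y, 0 ≤ k x y)
    (hk1 : ∀ x, ∀ α : ℝ, 0 < α → μ {y | α < k x y} ≤ ENNReal.ofReal (α ^ (-q)))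
    (hk2 : ∀ y, ∀ α : ℝ, 0 < α → μ {x | α < k x y} ≤ ENNReal.ofReal (α ^ (-q)))
    {f : X → ℝ} {b : ℝ} (hb : ∀ x, f x ≤ b) (hf : Measurable f) (hf0 : ∀ x, 0 ≤ f x)
    (hN : ∫⁻ x, ENNReal.ofReal (f x ^ p) ∂μ ≤ 1)
    {E : Set X} (hE : MeasurableSet E) {t t₁ : ℝ} (ht : 0 < t) (hEt : μ E = ENNReal.ofReal t)
    (htt : t ≤ t₁) (htV : t₁ ≤ μ.real Set.univ) {l : ℝ}
    (hl : ∀ x ∈ E, ENNReal.ofReal l ≤ ∫⁻ y, ENNReal.ofReal (k x y) * ENNReal.ofReal (f y) ∂μ) :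
    l ≤ p * rearrMass μ f p t ^ (1 / p)
      + rearrMass μ f p t₁ ^ (1 / p) * Real.log (t₁ / t) ^ (1 / q)
      + (1 - rearrMass μ f p t₁) ^ (1 / p) * Real.log (μ.real Set.univ / t₁) ^ (1 / q) := by
  have hp := hpq.pos
  have hq := hpq.symm.pos
  set V := μ.real Set.univ with hV
  set M := rearrMass μ f p t₁ with hMdef
  set N := rearrMass μ f p t with hNdef
  have hM0 : 0 ≤ M := ENNReal.toReal_nonneg
  have hN0 : 0 ≤ N := ENNReal.toReal_nonneg
  have ht₁ : 0 < t₁ := ht.trans_le htt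
  have hM1 : M ≤ 1 := rearrMass_le_one hb hf hf0 hp hN t₁
  have eM := ofReal_rearrMass hb hf hf0 hp hN t₁
  have eN := ofReal_rearrMass hb hf hf0 hp hN t
  have hr := rearr_measurable (μ := μ) hb
  have hw : Measurable fun s : ℝ => s ^ (-(1 / q)) := by fun_prop
  have hlog1 : 0 ≤ Real.log (t₁ / t) := Real.log_nonneg (by rw [one_le_div ht]; exact htt)
  have hlog2 : 0 ≤ Real.log (V / t₁) := Real.log_nonneg (by rw [one_le_div ht₁]; exact htV)
  have H := oneil hpq hk hk0 hk1 hk2 hb hf hf0 ht hEt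
  have h0 : ENNReal.ofReal t * ENNReal.ofReal l ≤
      ∫⁻ x in E, (∫⁻ y, ENNReal.ofReal (k x y) * ENNReal.ofReal (f y) ∂μ) ∂μ := by
    calc _ = ∫⁻ x in E, ENNReal.ofReal l ∂μ := by simp [hEt, mul_comm]
      _ ≤ _ := setLIntegral_mono' hE hl
  have h1 := h0.trans H
  rw [ENNReal.mul_le_mul_iff_right (by simpa using ht) ENNReal.ofReal_ne_top] at h1
  -- The interval `(0, ∞)` is cut at `t`, `t₁` and the total measure `V`, beyond which the
  -- rearrangement vanishes.
  have hI1 : ∫⁻ s in Set.Ioc 0 t, ENNReal.ofReal (rearr μ f s) ≤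
      ENNReal.ofReal (N ^ (1 / p) * t ^ (1 / q)) := by
    have := holder_Ioc hpq hr (w := fun _ => 1) (by fun_prop) rearr_nonneg (a := 0) (b := t)
      (m := N) (c := t) (by simp) hN0 ht.le eN.ge (by simp)
    simpa using this
  have hI2 : ∫⁻ s in Set.Ioc t t₁, ENNReal.ofReal (s ^ (-(1 / q))) *
      ENNReal.ofReal (rearr μ f s) ≤
      ENNReal.ofReal (M ^ (1 / p) * Real.log (t₁ / t) ^ (1 / q)) := by
    refine holder_Ioc hpq hr hw rearr_nonneg ?_ hM0 hlog1 ?_ (lintegral_inv_Ioc hq ht htt)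
    · intro s hs
      have : 0 < s := ht.trans hs.1
      positivity
    · rw [eM]
      exact lintegral_mono_set (Set.Ioc_subset_Ioc_left ht.le)
  have hI3 : ∫⁻ s in Set.Ioc t₁ V, ENNReal.ofReal (s ^ (-(1 / q))) *
      ENNReal.ofReal (rearr μ f s) ≤
      ENNReal.ofReal ((1 - M) ^ (1 / p) * Real.log (V / t₁) ^ (1 / q)) := by
    refine holder_Ioc hpq hr hw rearr_nonneg ?_ (by linarith) hlog2 ?_
      (lintegral_inv_Ioc hq ht₁ htV)
    · intro s hs
      have : 0 < s := ht₁.trans hs.1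
      positivity
    · rw [ENNReal.ofReal_sub _ hM0, ENNReal.ofReal_one]
      refine ENNReal.le_sub_of_add_le_left ENNReal.ofReal_ne_top ?_
      rw [eM, ← lintegral_union measurableSet_Ioc (Set.Ioc_disjoint_Ioc_of_le le_rfl),
        Set.Ioc_union_Ioc_eq_Ioc ht₁.le htV]
      exact rearrMass_aux hb hf hf0 hp hN V
  have hI4 : ∫⁻ s in Set.Ioi V, ENNReal.ofReal (s ^ (-(1 / q))) *
      ENNReal.ofReal (rearr μ f s) = 0 := by
    rw [setLIntegral_congr_fun (g := fun _ => 0) measurableSet_Ioi]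
    · simp
    · intro s hs
      simp [rearr_eq_zero hb (le_of_lt hs : V ≤ s)]
  rw [← Set.Ioc_union_Ioi_eq_Ioi (htt.trans htV), ← Set.Ioc_union_Ioc_eq_Ioc htt htV,
    lintegral_union measurableSet_Ioi, lintegral_union measurableSet_Ioc
    (Set.Ioc_disjoint_Ioc_of_le le_rfl), hI4, add_zero] at h1
  swap
  · rw [Set.Ioc_union_Ioc_eq_Ioc htt htV]; exact Set.Ioc_disjoint_Ioi le_rfl
  have h2 := h1.trans (add_le_add (mul_le_mul' le_rfl hI1) (add_le_add hI2 hI3))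
  have h1M : 0 ≤ 1 - M := by linarith
  rw [← ENNReal.ofReal_mul (by positivity), ← ENNReal.ofReal_add (by positivity) (by positivity),
    ← ENNReal.ofReal_add (by positivity) (by positivity),
    ENNReal.ofReal_le_ofReal_iff (by positivity)] at h2
  have e : p * t ^ (-(1 / q)) * (N ^ (1 / p) * t ^ (1 / q)) = p * N ^ (1 / p) := by
    have : t ^ (-(1 / q)) * t ^ (1 / q) = 1 := by
      rw [← Real.rpow_add ht]; simp
    calc _ = p * N ^ (1 / p) * (t ^ (-(1 / q)) * t ^ (1 / q)) := by ring
      _ = _ := by rw [this, mul_one]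
  rw [e] at h2
  linarith

/-! ### Adams' theorem for an abstract kernel -/

lemma summable_exp_aux (c : ℝ) : Summable fun j : ℕ => c * (rexp (-(j : ℝ)) * ((j : ℝ) + 1)) := by
  apply Summable.mul_left
  have h1 : ‖rexp (-1)‖ < 1 := by
    rw [Real.norm_of_nonneg (Real.exp_pos _).le]; simp
  have := (summable_pow_mul_geometric_of_norm_lt_one 1 h1).add
    (summable_geometric_of_norm_lt_one h1)
  refine this.congr fun j => ?_
  have : rexp (-(j : ℝ)) = rexp (-1) ^ j := by rw [← Real.exp_nat_mul]; congr 1; ring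
  rw [this]; ring

/-- Adams' theorem for an abstract kernel `k` of weak-`L^q` constant one in each variable on a finite
measure space: if `h ≥ 0` is dominated by the potential of some bounded `f ≥ 0` with `‖f‖_p ≤ 1`,
then `∫ exp (h ^ q)` is bounded by a constant independent of `f` and `h`. The
exponent is critical: `log (1 / μ {h ^ q > L}) ≥ L - O(1)` alone does not suffice, and integrability
comes from the set of near-extremal levels `L` being short. -/
theorem adams_abstract (μ : Measure X) [IsFiniteMeasure μ] {p q : ℝ} (hpq : p.HolderConjugate q)
    (hp2 : 2 ≤ p) {k : X → X → ℝ} (hk : Measurable (Function.uncurry k)) (hk0 : ∀ x y, 0 ≤ k x y)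
    (hk1 : ∀ x, ∀ α : ℝ, 0 < α → μ {y | α < k x y} ≤ ENNReal.ofReal (α ^ (-q)))
    (hk2 : ∀ y, ∀ α : ℝ, 0 < α → μ {x | α < k x y} ≤ ENNReal.ofReal (α ^ (-q))) :
    ∃ C : ℝ, 0 ≤ C ∧ ∀ (f : X → ℝ) (b : ℝ), (∀ x, f x ≤ b) → Measurable f → (∀ x, 0 ≤ f x) →
      ∫⁻ x, ENNReal.ofReal (f x ^ p) ∂μ ≤ 1 → ∀ h : X → ℝ, Measurable h → (∀ x, 0 ≤ h x) →
      (∀ x, ENNReal.ofReal (h x) ≤ ∫⁻ y, ENNReal.ofReal (k x y) * ENNReal.ofReal (f y) ∂μ) →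
      ∫⁻ x, ENNReal.ofReal (rexp (h x ^ q)) ∂μ ≤ ENNReal.ofReal C := by
  have hp := hpq.pos
  have hq := hpq.symm.pos
  obtain ⟨A, hA, hgap⟩ := garsia_gap hpq hp2
  set B := p ^ q with hB
  have hB0 : 0 ≤ B := by positivity
  set V := μ.real Set.univ with hV
  have hV0 : 0 ≤ V := measureReal_nonneg
  set W := 2 * A + 2 * B + 1 with hW
  have hW0 : 0 ≤ W := by positivity
  set c := V * rexp (B + 1) * W with hc
  have hc0 : 0 ≤ c := by positivity
  refine ⟨V + ∑' j : ℕ, c * (rexp (-(j : ℝ)) * ((j : ℝ) + 1)),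
    add_nonneg hV0 (tsum_nonneg fun j => by positivity), ?_⟩
  intro f b hb hf hf0 hN h hh hh0 hT
  have hg : Measurable fun x => h x ^ q := by fun_prop
  have hg0 : ∀ x, 0 ≤ h x ^ q := fun x => Real.rpow_nonneg (hh0 x) q
  set T : ℝ → ℝ := fun L => μ.real {x | L < h x ^ q} with hTdef
  have hT0 : ∀ L, 0 ≤ T L := fun L => measureReal_nonneg
  have hTV : ∀ L, T L ≤ V := fun L => measureReal_mono (Set.subset_univ _)
  have hTanti : ∀ L L', L ≤ L' → T L' ≤ T L := fun L L' hL =>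
    measureReal_mono (fun x hx => lt_of_le_of_lt hL hx)
  have hTμ : ∀ L, μ {x | L < h x ^ q} = ENNReal.ofReal (T L) := fun L =>
    (ofReal_measureReal (measure_ne_top _ _)).symm
  set M : ℝ → ℝ := fun t => rearrMass μ f p t with hM
  have hM0 : ∀ t, 0 ≤ M t := fun t => ENNReal.toReal_nonneg
  have hM1 : ∀ t, M t ≤ 1 := rearrMass_le_one hb hf hf0 hp hN
  -- `T L` is the measure of the superlevel set `{h ^ q > L}`, and `S j` below is the set of levels
  -- with `log (V / T L) - L ≤ j`. Outside bounded values of `log (V / T L)`, `garsia_gap` bounds the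
  -- diameter of `S j`.
  have key : ∀ L, 0 < L → 0 < T L → ∀ t₁, T L ≤ t₁ → t₁ ≤ V →
      L ^ (1 / q) ≤ p * M (T L) ^ (1 / p) + M t₁ ^ (1 / p) * Real.log (t₁ / T L) ^ (1 / q)
        + (1 - M t₁) ^ (1 / p) * Real.log (V / t₁) ^ (1 / q) := by
    intro L hL hTL t₁ h1 h2
    refine level_bound hpq hk hk0 hk1 hk2 hb hf hf0 hN (E := {x | L < h x ^ q})
      (measurableSet_lt measurable_const hg) hTL (hTμ L) h1 h2 ?_
    intro x hx
    refine le_trans (ENNReal.ofReal_le_ofReal ?_) (hT x)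
    have : (h x ^ q) ^ (1 / q) = h x := by rw [one_div, Real.rpow_rpow_inv (hh0 x) hq.ne']
    rw [← this]
    exact Real.rpow_le_rpow hL.le (le_of_lt hx) (by positivity)
  have key1 : ∀ L, 0 < L → 0 < T L →
      L ^ (1 / q) ≤ p * M (T L) ^ (1 / p)
        + (1 - M (T L)) ^ (1 / p) * Real.log (V / T L) ^ (1 / q) := by
    intro L hL hTL
    have := key L hL hTL (T L) le_rfl (hTV L)
    rwa [div_self hTL.ne', Real.log_one, Real.zero_rpow (by positivity), mul_zero, add_zero] at this
  have hlog : ∀ L, 0 < T L → 0 ≤ Real.log (V / T L) := fun L hTL =>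
    Real.log_nonneg (by rw [one_le_div hTL]; exact hTV L)
  have weak : ∀ L, 0 < L → 0 < T L → L ≤ Real.log (V / T L) + B := fun L hL hTL =>
    garsia_weak hpq (hlog L hTL) (hM0 _) (hM1 _) hL.le (key1 L hL hTL)
  set S : ℕ → Set ℝ := fun j => {L | 0 < L ∧ 0 < T L ∧ Real.log (V / T L) - L ≤ j} with hS
  have hgap' : ∀ (j : ℕ) (L₁ L₂ : ℝ), L₁ ∈ S j → L₂ ∈ S j → A * (j + 1) < Real.log (V / T L₁) →
      L₁ ≤ L₂ → L₂ - L₁ ≤ (A + B + 1) * (j + 1) := by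
    rintro j L₁ L₂ ⟨h1, h1', h1''⟩ ⟨h2, h2', h2''⟩ hbig hle
    have hTT := hTanti _ _ hle
    have hVpos : 0 < V := h1'.trans_le (hTV _)
    have hD : Real.log (V / T L₂) = Real.log (V / T L₁) + Real.log (T L₁ / T L₂) := by
      rw [← Real.log_mul (by positivity) (by positivity)]
      congr 1; field_simp
    have hDle := hgap (Real.log (V / T L₁)) (Real.log (T L₁ / T L₂)) (M (T L₁)) (M (T L₂)) L₁ L₂ j
      (hlog _ h1') (Real.log_nonneg (by rw [one_le_div h2']; exact hTT)) (hM0 _)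
      (rearrMass_mono hb hf hf0 hp hN hTT) (hM1 _) h1.le h2.le (by positivity)
      (key1 _ h1 h1') (key L₂ h2 h2' (T L₁) hTT (hTV _)) h1'' (by linarith) hbig
    have := weak L₂ h2 h2'
    have hBj : 0 ≤ B * j := by positivity
    have hj : (A + B + 1) * ((j:ℝ) + 1) = A * (j + 1) + B * j + B + j + 1 := by ring
    rw [hj]; linarith
  have hvol : ∀ j : ℕ, volume (S j) ≤ ENNReal.ofReal (W * (j + 1)) := by
    intro j
    set S' := S j ∩ {L | A * (j + 1) < Real.log (V / T L)} with hS'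
    have hsub : S j ⊆ Set.Icc 0 (A * (j + 1) + B) ∪ S' := by
      intro L hL
      by_cases hbig : A * (j + 1) < Real.log (V / T L)
      · exact Or.inr ⟨hL, hbig⟩
      · refine Or.inl ⟨hL.1.le, ?_⟩
        have := weak L hL.1 hL.2.1
        linarith
    have hS'vol : volume S' ≤ ENNReal.ofReal ((A + B + 1) * (j + 1)) := by
      refine (Real.volume_le_diam _).trans (Metric.ediam_le fun L₁ h1 L₂ h2 => ?_)
      rw [edist_dist, Real.dist_eq]
      apply ENNReal.ofReal_le_ofReal
      rcases le_total L₁ L₂ with hle | hle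
      · rw [abs_sub_comm, abs_of_nonneg (by linarith)]
        exact hgap' j L₁ L₂ h1.1 h2.1 h1.2 hle
      · rw [abs_of_nonneg (by linarith)]
        exact hgap' j L₂ L₁ h2.1 h1.1 h2.2 hle
    calc volume (S j) ≤ volume (Set.Icc 0 (A * (j + 1) + B)) + volume S' :=
          (measure_mono hsub).trans (measure_union_le _ _)
      _ ≤ ENNReal.ofReal (A * (j + 1) + B) + ENNReal.ofReal ((A + B + 1) * (j + 1)) := by
          gcongr
          simp
      _ ≤ _ := by
          rw [← ENNReal.ofReal_add (by positivity) (by positivity)]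
          apply ENNReal.ofReal_le_ofReal
          have hBj : 0 ≤ B * j := by positivity
          rw [hW]; linarith
  -- The sets `S j` need not be measurable, hence the measurable hulls.
  have hpt : ∀ L, 0 < L → μ {x | L < h x ^ q} * ENNReal.ofReal (rexp L) ≤
      ∑' j : ℕ, (toMeasurable volume (S j)).indicator
        (fun _ => ENNReal.ofReal (V * rexp (B + 1) * rexp (-(j : ℝ)))) L := by
    intro L hL
    rcases (hT0 L).eq_or_lt with h0 | hTL
    · rw [hTμ, ← h0]; simp
    · have hVpos : 0 < V := hTL.trans_le (hTV _)
      set j := ⌈Real.log (V / T L) - L⌉₊ with hj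
      refine le_trans ?_ (ENNReal.le_tsum j)
      have hmem : L ∈ S j := ⟨hL, hTL, Nat.le_ceil _⟩
      rw [Set.indicator_of_mem (subset_toMeasurable _ _ hmem), hTμ, ← ENNReal.ofReal_mul hTL.le]
      apply ENNReal.ofReal_le_ofReal
      have hlow : (j : ℝ) - 1 - B ≤ Real.log (V / T L) - L := by
        rcases le_or_gt (Real.log (V / T L) - L) 0 with hneg | hpos
        · have : j = 0 := Nat.ceil_eq_zero.2 hneg
          rw [this]
          have := weak L hL hTL
          simp; linarith
        · have := Nat.ceil_lt_add_one hpos.le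
          rw [← hj] at this
          linarith
      have e : T L = V * rexp (-Real.log (V / T L)) := by
        rw [Real.exp_neg, Real.exp_log (by positivity)]; field_simp
      calc T L * rexp L = V * rexp (-(Real.log (V / T L) - L)) := by
            nth_rw 1 [e]
            rw [mul_assoc, ← Real.exp_add]; congr 2; ring
        _ ≤ V * rexp (B + 1 + -(j:ℝ)) := by
            gcongr; linarith
        _ = _ := by rw [Real.exp_add, mul_assoc]
  -- Layer cake: `∫ (exp (h ^ q) - 1) = ∫_0^∞ μ {h ^ q > L} exp L dL`.
  have hlc := lintegral_comp_eq_lintegral_meas_lt_mul μ (f := fun x => h x ^ q) (g := rexp)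
    (Filter.Eventually.of_forall hg0) hg.aemeasurable
    (fun t _ => Real.continuous_exp.intervalIntegrable _ _)
    (Filter.Eventually.of_forall fun t => (Real.exp_pos t).le)
  simp only [integral_exp, Real.exp_zero] at hlc
  have hsum : ∫⁻ L in Set.Ioi 0, μ {x | L < h x ^ q} * ENNReal.ofReal (rexp L) ≤
      ENNReal.ofReal (∑' j : ℕ, c * (rexp (-(j : ℝ)) * ((j : ℝ) + 1))) := by
    calc _ ≤ ∫⁻ L in Set.Ioi 0, ∑' j : ℕ, (toMeasurable volume (S j)).indicator
          (fun _ => ENNReal.ofReal (V * rexp (B + 1) * rexp (-(j : ℝ)))) L :=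
          setLIntegral_mono' measurableSet_Ioi hpt
      _ ≤ ∫⁻ L, ∑' j : ℕ, (toMeasurable volume (S j)).indicator
          (fun _ => ENNReal.ofReal (V * rexp (B + 1) * rexp (-(j : ℝ)))) L :=
          setLIntegral_le_lintegral _ _
      _ = ∑' j : ℕ, ENNReal.ofReal (V * rexp (B + 1) * rexp (-(j : ℝ))) * volume (S j) := by
          rw [lintegral_tsum fun j =>
            (measurable_const.indicator (measurableSet_toMeasurable _ _)).aemeasurable]
          congr 1; ext j
          rw [lintegral_indicator_const (measurableSet_toMeasurable _ _), measure_toMeasurable]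
      _ ≤ ∑' j : ℕ, ENNReal.ofReal (c * (rexp (-(j : ℝ)) * ((j : ℝ) + 1))) := by
          refine ENNReal.tsum_le_tsum fun j => ?_
          refine (mul_le_mul' le_rfl (hvol j)).trans ?_
          rw [← ENNReal.ofReal_mul (by positivity)]
          apply le_of_eq; congr 1; rw [hc]; ring
      _ = _ := by
          rw [ENNReal.ofReal_tsum_of_nonneg (fun j => by positivity) (summable_exp_aux c)]
  have hfin : ∫⁻ x, ENNReal.ofReal (rexp (h x ^ q)) ∂μ =
      ENNReal.ofReal V + ∫⁻ x, ENNReal.ofReal (rexp (h x ^ q) - 1) ∂μ := by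
    have : ENNReal.ofReal V = ∫⁻ _, 1 ∂μ := by
      simp [hV]
    rw [this, ← lintegral_add_left measurable_const]
    congr 1; ext x
    rw [← ENNReal.ofReal_one, ← ENNReal.ofReal_add zero_le_one]
    · congr 1; ring
    · have := Real.one_le_exp (hg0 x); linarith
  rw [hfin, hlc, ENNReal.ofReal_add hV0 (tsum_nonneg fun j => by positivity)]
  gcongr

end abstractPotential

/-! ### Integration by parts against regularized powers -/

section
variable {n : ℕ}

lemma hasFDerivAt_reg (ε : ℝ) (hε : 0 < ε) (s : ℝ) (y : EuclideanSpace ℝ (Fin n)) :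
    HasFDerivAt (fun y : EuclideanSpace ℝ (Fin n) => (‖y‖ ^ 2 + ε) ^ s)
      ((s * (‖y‖ ^ 2 + ε) ^ (s - 1)) • (2 • innerSL ℝ y)) y := by
  have h := ((hasStrictFDerivAt_norm_sq y).hasFDerivAt.add_const ε).rpow_const (p := s)
    (Or.inl (by positivity))
  exact h

lemma fderiv_reg (ε : ℝ) (hε : 0 < ε) (s : ℝ) (y : EuclideanSpace ℝ (Fin n)) (i : Fin n) :
    fderiv ℝ (fun y : EuclideanSpace ℝ (Fin n) => (‖y‖ ^ 2 + ε) ^ s) y (EuclideanSpace.single i 1)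
      = 2 * s * (‖y‖ ^ 2 + ε) ^ (s - 1) * y i := by
  rw [(hasFDerivAt_reg ε hε s y).fderiv]
  simp [EuclideanSpace.inner_single_right]
  ring

lemma continuous_reg (ε : ℝ) (hε : 0 < ε) (s : ℝ) :
    Continuous (fun y : EuclideanSpace ℝ (Fin n) => (‖y‖ ^ 2 + ε) ^ s) := by
  refine Continuous.rpow_const (by fun_prop) fun y => Or.inl (by positivity)

lemma fderiv_apply_self (w : EuclideanSpace ℝ (Fin n) → ℝ) (y : EuclideanSpace ℝ (Fin n)) :
    fderiv ℝ w y y = ∑ i, y i * fderiv ℝ w y (EuclideanSpace.single i 1) := by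
  have h := congrArg (fderiv ℝ w y) ((EuclideanSpace.basisFun (Fin n) ℝ).sum_repr y)
  rw [← h, map_sum]
  simp

lemma lap_eq {w : EuclideanSpace ℝ (Fin n) → ℝ} (hw : ContDiff ℝ (⊤ : ℕ∞) w)
    (y : EuclideanSpace ℝ (Fin n)) :
    lap n w y = ∑ i, fderiv ℝ (fun z => fderiv ℝ w z (EuclideanSpace.single i 1)) y
      (EuclideanSpace.single i 1) := by
  unfold lap
  refine Finset.sum_congr rfl fun i _ => ?_
  rw [iteratedFDeriv_two_apply, fderiv_clm_apply]
  · simp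
  · exact (hw.fderiv_right (m := (⊤ : ℕ∞)) (by simp)).differentiable (by simp) y
  · fun_prop

lemma contDiff_partial {w : EuclideanSpace ℝ (Fin n) → ℝ} (hw : ContDiff ℝ (⊤ : ℕ∞) w)
    (v : EuclideanSpace ℝ (Fin n)) : ContDiff ℝ (⊤ : ℕ∞) (fun z => fderiv ℝ w z v) :=
  (hw.fderiv_right (m := (⊤ : ℕ∞)) (by simp)).clm_apply contDiff_const

lemma contDiff_lap {w : EuclideanSpace ℝ (Fin n) → ℝ} (hw : ContDiff ℝ (⊤ : ℕ∞) w) :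
    ContDiff ℝ (⊤ : ℕ∞) (lap n w) := by
  rw [funext (lap_eq hw)]
  exact ContDiff.sum fun i _ => contDiff_partial (contDiff_partial hw _) _

lemma tsupport_lap (w : EuclideanSpace ℝ (Fin n) → ℝ) : tsupport (lap n w) ⊆ tsupport w := by
  refine closure_minimal ?_ (isClosed_tsupport w)
  intro y hy
  by_contra h
  apply hy
  have : iteratedFDeriv ℝ 2 w y = 0 := by
    have h2 : y ∉ tsupport (iteratedFDeriv ℝ 2 w) :=
      fun h' => h (tsupport_iteratedFDeriv_subset 2 h')
    exact image_eq_zero_of_notMem_tsupport h2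
  simp [lap, this]

/-- Integration by parts against the regularized power `(‖y‖² + ε)^s`, radial direction. -/
lemma reg_radial {w : EuclideanSpace ℝ (Fin n) → ℝ} (hw : ContDiff ℝ (⊤ : ℕ∞) w)
    (hc : HasCompactSupport w) (ε : ℝ) (hε : 0 < ε) (s : ℝ) :
    ∫ y, (‖y‖ ^ 2 + ε) ^ s * fderiv ℝ w y y =
      -∫ y, ((n + 2 * s) * (‖y‖ ^ 2 + ε) ^ s - 2 * s * ε * (‖y‖ ^ 2 + ε) ^ (s - 1)) * w y := by
  have hcr := continuous_reg (n := n) ε hε s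
  have hcr1 := continuous_reg (n := n) ε hε (s - 1)
  have hwc := hw.continuous
  have hcoord : ∀ i : Fin n, Continuous (fun y : EuclideanSpace ℝ (Fin n) => y i) := by
    intro i; fun_prop
  have hfd : ∀ i (y : EuclideanSpace ℝ (Fin n)),
      HasFDerivAt (fun y : EuclideanSpace ℝ (Fin n) => (‖y‖ ^ 2 + ε) ^ s * y i)
        ((‖y‖ ^ 2 + ε) ^ s • (EuclideanSpace.proj i : EuclideanSpace ℝ (Fin n) →L[ℝ] ℝ) +
          y i • ((s * (‖y‖ ^ 2 + ε) ^ (s - 1)) • (2 • innerSL ℝ y))) y := by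
    intro i y
    exact (hasFDerivAt_reg ε hε s y).mul
      (EuclideanSpace.proj i : EuclideanSpace ℝ (Fin n) →L[ℝ] ℝ).hasFDerivAt
  have hval : ∀ i (y : EuclideanSpace ℝ (Fin n)),
      fderiv ℝ (fun y : EuclideanSpace ℝ (Fin n) => (‖y‖ ^ 2 + ε) ^ s * y i) y
        (EuclideanSpace.single i 1) =
      (‖y‖ ^ 2 + ε) ^ s + 2 * s * (‖y‖ ^ 2 + ε) ^ (s - 1) * (y i) ^ 2 := by
    intro i y
    rw [(hfd i y).fderiv]
    simp [EuclideanSpace.inner_single_right]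
    ring
  have hpc : ∀ i, Continuous fun y => fderiv ℝ w y (EuclideanSpace.single i 1) :=
    fun i => (contDiff_partial hw _).continuous
  have hps : ∀ i, HasCompactSupport fun y => fderiv ℝ w y (EuclideanSpace.single i 1) :=
    fun i => hc.fderiv_apply ℝ _
  have hint1 : ∀ i : Fin n, Integrable (fun y : EuclideanSpace ℝ (Fin n) =>
      ((‖y‖ ^ 2 + ε) ^ s * y i) * fderiv ℝ w y (EuclideanSpace.single i 1)) := fun i =>
    ((hcr.mul (hcoord i)).mul (hpc i)).integrable_of_hasCompactSupport ((hps i).mul_left)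
  have hint2 : ∀ i : Fin n, Integrable (fun y : EuclideanSpace ℝ (Fin n) =>
      ((‖y‖ ^ 2 + ε) ^ s + 2 * s * (‖y‖ ^ 2 + ε) ^ (s - 1) * (y i) ^ 2) * w y) := fun i =>
    ((hcr.add ((continuous_const.mul hcr1).mul ((hcoord i).pow 2))).mul
      hwc).integrable_of_hasCompactSupport hc.mul_left
  have hi : ∀ i : Fin n,
      ∫ y : EuclideanSpace ℝ (Fin n), ((‖y‖ ^ 2 + ε) ^ s * y i) *
        fderiv ℝ w y (EuclideanSpace.single i 1) =
      -∫ y, ((‖y‖ ^ 2 + ε) ^ s + 2 * s * (‖y‖ ^ 2 + ε) ^ (s - 1) * (y i) ^ 2) * w y := by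
    intro i
    rw [integral_mul_fderiv_eq_neg_fderiv_mul_of_integrable]
    · simp_rw [hval]
    · simp_rw [hval]; exact hint2 i
    · exact hint1 i
    · exact ((hcr.mul (hcoord i)).mul hwc).integrable_of_hasCompactSupport hc.mul_left
    · exact fun y _ => (hfd i y).differentiableAt
    · exact fun y _ => hw.differentiable (by simp) y
  have h1 : ∀ y : EuclideanSpace ℝ (Fin n), (‖y‖ ^ 2 + ε) ^ s * fderiv ℝ w y y =
      ∑ i, ((‖y‖ ^ 2 + ε) ^ s * y i) * fderiv ℝ w y (EuclideanSpace.single i 1) := by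
    intro y
    rw [fderiv_apply_self, Finset.mul_sum]
    exact Finset.sum_congr rfl fun i _ => by ring
  have h2 : ∀ y : EuclideanSpace ℝ (Fin n),
      ((n + 2 * s) * (‖y‖ ^ 2 + ε) ^ s - 2 * s * ε * (‖y‖ ^ 2 + ε) ^ (s - 1)) * w y =
      ∑ i, ((‖y‖ ^ 2 + ε) ^ s + 2 * s * (‖y‖ ^ 2 + ε) ^ (s - 1) * (y i) ^ 2) * w y := by
    intro y
    have hn : ‖y‖ ^ 2 = ∑ i, (y i) ^ 2 := by
      rw [EuclideanSpace.norm_sq_eq]; simp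
    rw [← Finset.sum_mul, Finset.sum_add_distrib, ← Finset.mul_sum, ← hn]
    have hr : (‖y‖ ^ 2 + ε) ^ s = (‖y‖ ^ 2 + ε) ^ (s - 1) * (‖y‖ ^ 2 + ε) := by
      rw [← Real.rpow_add_one (by positivity)]; congr 1; ring
    simp only [Finset.sum_const, Finset.card_univ, Fintype.card_fin, nsmul_eq_mul]
    rw [hr]; ring
  simp_rw [h1, h2]
  rw [integral_finsetSum _ fun i _ => hint1 i, integral_finsetSum _ fun i _ => hint2 i,
    ← Finset.sum_neg_distrib]
  exact Finset.sum_congr rfl fun i _ => hi i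

/-- Integration by parts of the Laplacian against the regularized power `(‖y‖² + ε)^(s+1)`. -/
lemma reg_lap {w : EuclideanSpace ℝ (Fin n) → ℝ} (hw : ContDiff ℝ (⊤ : ℕ∞) w)
    (hc : HasCompactSupport w) (ε : ℝ) (hε : 0 < ε) (s : ℝ) :
    ∫ y, (‖y‖ ^ 2 + ε) ^ (s + 1) * lap n w y =
      -(2 * (s + 1)) * ∫ y, (‖y‖ ^ 2 + ε) ^ s * fderiv ℝ w y y := by
  have hcr := continuous_reg (n := n) ε hε s
  have hcr1 := continuous_reg (n := n) ε hε (s + 1)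
  have hcoord : ∀ i : Fin n, Continuous (fun y : EuclideanSpace ℝ (Fin n) => y i) := by
    intro i; fun_prop
  have hpd := fun i : Fin n => contDiff_partial hw (EuclideanSpace.single i 1)
  have hps : ∀ i, HasCompactSupport fun y => fderiv ℝ w y (EuclideanSpace.single i 1) :=
    fun i => hc.fderiv_apply ℝ _
  have hint1 : ∀ i : Fin n, Integrable (fun y : EuclideanSpace ℝ (Fin n) =>
      ((‖y‖ ^ 2 + ε) ^ s * y i) * fderiv ℝ w y (EuclideanSpace.single i 1)) := fun i =>
    ((hcr.mul (hcoord i)).mul (hpd i).continuous).integrable_of_hasCompactSupport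
      ((hps i).mul_left)
  have hint2 : ∀ i : Fin n, Integrable (fun y : EuclideanSpace ℝ (Fin n) =>
      (‖y‖ ^ 2 + ε) ^ (s + 1) * fderiv ℝ (fun z => fderiv ℝ w z (EuclideanSpace.single i 1)) y
      (EuclideanSpace.single i 1)) := fun i =>
    (hcr1.mul (contDiff_partial (hpd i) _).continuous).integrable_of_hasCompactSupport
      (((hps i).fderiv_apply ℝ _).mul_left)
  have hval : ∀ (i : Fin n) (y : EuclideanSpace ℝ (Fin n)),
      fderiv ℝ (fun y : EuclideanSpace ℝ (Fin n) => (‖y‖ ^ 2 + ε) ^ (s + 1)) y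
        (EuclideanSpace.single i 1) = 2 * (s + 1) * ((‖y‖ ^ 2 + ε) ^ s * y i) := by
    intro i y
    rw [fderiv_reg ε hε, add_sub_cancel_right]; ring
  have hi : ∀ i : Fin n,
      ∫ y : EuclideanSpace ℝ (Fin n), (‖y‖ ^ 2 + ε) ^ (s + 1) *
        fderiv ℝ (fun z => fderiv ℝ w z (EuclideanSpace.single i 1)) y
          (EuclideanSpace.single i 1) =
      -(2 * (s + 1)) * ∫ y : EuclideanSpace ℝ (Fin n), ((‖y‖ ^ 2 + ε) ^ s * y i) *
        fderiv ℝ w y (EuclideanSpace.single i 1) := by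
    intro i
    rw [integral_mul_fderiv_eq_neg_fderiv_mul_of_integrable]
    · simp_rw [hval, mul_assoc (2 * (s + 1))]
      rw [integral_const_mul]; ring
    · simp_rw [hval, mul_assoc (2 * (s + 1))]; exact (hint1 i).const_mul _
    · exact hint2 i
    · exact (hcr1.mul (hpd i).continuous).integrable_of_hasCompactSupport (hps i).mul_left
    · exact fun y _ => (hasFDerivAt_reg ε hε _ y).differentiableAt
    · exact fun y _ => (hpd i).differentiable (by simp) y
  have h1 : ∀ y : EuclideanSpace ℝ (Fin n), (‖y‖ ^ 2 + ε) ^ s * fderiv ℝ w y y =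
      ∑ i, ((‖y‖ ^ 2 + ε) ^ s * y i) * fderiv ℝ w y (EuclideanSpace.single i 1) := by
    intro y
    rw [fderiv_apply_self, Finset.mul_sum]
    exact Finset.sum_congr rfl fun i _ => by ring
  simp_rw [h1, lap_eq hw, Finset.mul_sum]
  rw [integral_finsetSum _ fun i _ => hint1 i, integral_finsetSum _ fun i _ => hint2 i,
    Finset.mul_sum]
  exact Finset.sum_congr rfl fun i _ => hi i
end

/-! ### Removing the regularization -/

section
open Filter Topology
variable {n : ℕ}

lemma integrable_norm_rpow_mul (hn : 1 ≤ n) {a : ℝ} (ha : -(n : ℝ) < a)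
    {h : EuclideanSpace ℝ (Fin n) → ℝ} (hh : Continuous h) (hc : HasCompactSupport h) :
    Integrable (fun y => ‖y‖ ^ a * h y) := by
  have h1 : LocallyIntegrable (fun y : EuclideanSpace ℝ (Fin n) => ‖y‖ ^ a) := by
    refine locallyIntegrable_of_norm_le_rpow (C := 1) (α := -a) (by simpa using hn)
      (by simp; linarith) (ae_of_all _ fun y => ?_)
      (by fun_prop : Measurable _).aestronglyMeasurable
    rw [neg_neg, one_mul, Real.norm_of_nonneg (by positivity)]
  simpa [smul_eq_mul, mul_comm] using h1.integrable_smul_left_of_hasCompactSupport hh hc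

lemma ae_ne_zero (hn : 1 ≤ n) : ∀ᵐ y : EuclideanSpace ℝ (Fin n), y ≠ 0 := by
  have : Nonempty (Fin n) := ⟨⟨0, hn⟩⟩
  have : Nontrivial (EuclideanSpace ℝ (Fin n)) := by infer_instance
  simp [ae_iff]

/-- Dominated convergence as the regularization parameter `ε` tends to `0`, with dominating function
`K ‖y‖^a |h y|` for some `a > -n` and `h` continuous with compact support. -/
lemma tendsto_reg (hn : 1 ≤ n) {a K : ℝ} (ha : -(n : ℝ) < a)
    {h : EuclideanSpace ℝ (Fin n) → ℝ} (hh : Continuous h) (hc : HasCompactSupport h)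
    {F : ℝ → EuclideanSpace ℝ (Fin n) → ℝ} {f : EuclideanSpace ℝ (Fin n) → ℝ}
    (hF : ∀ ε, 0 < ε → Continuous (F ε))
    (hb : ∀ ε, 0 < ε → ∀ y, y ≠ 0 → |F ε y| ≤ K * (‖y‖ ^ a * |h y|))
    (hl : ∀ y, y ≠ 0 → Tendsto (fun ε => F ε y) (𝓝[>] 0) (𝓝 (f y))) :
    Tendsto (fun ε => ∫ y, F ε y) (𝓝[>] 0) (𝓝 (∫ y, f y)) := by
  refine tendsto_integral_filter_of_dominated_convergence
    (fun y => K * (‖y‖ ^ a * |h y|)) ?_ ?_ ?_ ?_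
  · filter_upwards [self_mem_nhdsWithin] with ε hε
    exact (hF ε hε).aestronglyMeasurable
  · filter_upwards [self_mem_nhdsWithin] with ε hε
    filter_upwards [ae_ne_zero hn] with y hy
    exact hb ε hε y hy
  · exact (integrable_norm_rpow_mul hn ha hh.abs (by simpa using hc.norm)).const_mul K
  · filter_upwards [ae_ne_zero hn] with y hy
    exact hl y hy

lemma tendsto_reg_rpow (s : ℝ) {y : EuclideanSpace ℝ (Fin n)} (hy : y ≠ 0) :
    Tendsto (fun ε : ℝ => (‖y‖ ^ 2 + ε) ^ s) (𝓝[>] 0) (𝓝 (‖y‖ ^ (2 * s))) := by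
  have h0 : 0 < ‖y‖ := norm_pos_iff.2 hy
  have h1 : ‖y‖ ^ (2 * s) = (‖y‖ ^ 2 + 0) ^ s := by
    rw [add_zero, Real.rpow_mul h0.le]; norm_num
  rw [h1]
  have hc : ContinuousAt (fun ε : ℝ => (‖y‖ ^ 2 + ε) ^ s) 0 :=
    ContinuousAt.rpow_const (by fun_prop) (Or.inl (by simp [hy]))
  exact hc.tendsto.mono_left nhdsWithin_le_nhds

lemma reg_rpow_le {s ε : ℝ} (hs : s ≤ 0) (hε : 0 < ε) {y : EuclideanSpace ℝ (Fin n)}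
    (hy : y ≠ 0) : (‖y‖ ^ 2 + ε) ^ s ≤ ‖y‖ ^ (2 * s) := by
  have h0 : 0 < ‖y‖ := norm_pos_iff.2 hy
  have h1 : ‖y‖ ^ (2 * s) = (‖y‖ ^ 2) ^ s := by
    rw [Real.rpow_mul h0.le]; norm_num
  rw [h1]
  exact Real.rpow_le_rpow_of_nonpos (by positivity) (by linarith) hs

lemma continuous_fderiv_self {w : EuclideanSpace ℝ (Fin n) → ℝ} (hw : ContDiff ℝ (⊤ : ℕ∞) w) :
    Continuous (fun y => fderiv ℝ w y y) :=
  (hw.continuous_fderiv (by simp)).clm_apply continuous_id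

lemma abs_fderiv_self_le (w : EuclideanSpace ℝ (Fin n) → ℝ) (y : EuclideanSpace ℝ (Fin n)) :
    |fderiv ℝ w y y| ≤ ‖y‖ * ‖fderiv ℝ w y‖ := by
  rw [mul_comm]; exact (fderiv ℝ w y).le_opNorm y

/-- The exponent `2 s = -n` is allowed, since `|∇w(y) · y| ≤ ‖y‖ ‖∇w(y)‖` gains one power. -/
lemma tendsto_radial (hn : 1 ≤ n) {w : EuclideanSpace ℝ (Fin n) → ℝ}
    (hw : ContDiff ℝ (⊤ : ℕ∞) w) (hc : HasCompactSupport w) {s : ℝ} (hs : -(n : ℝ) ≤ 2 * s)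
    (hs0 : s ≤ 0) :
    Tendsto (fun ε => ∫ y, (‖y‖ ^ 2 + ε) ^ s * fderiv ℝ w y y) (𝓝[>] 0)
      (𝓝 (∫ y, ‖y‖ ^ (2 * s) * fderiv ℝ w y y)) := by
  refine tendsto_reg (a := 2 * s + 1) (K := 1) hn (by linarith) (hw.continuous_fderiv (by simp)).norm
    (hc.fderiv ℝ).norm (fun ε hε => (continuous_reg ε hε s).mul (continuous_fderiv_self hw)) ?_ ?_
  · intro ε hε y hy
    have h0 : 0 < ‖y‖ := norm_pos_iff.2 hy
    rw [abs_mul, abs_of_nonneg (by positivity), one_mul, Real.rpow_add_one h0.ne', abs_norm,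
      mul_assoc]
    exact mul_le_mul (reg_rpow_le hs0 hε hy) (abs_fderiv_self_le w y) (abs_nonneg _) (by positivity)
  · intro y hy
    exact (tendsto_reg_rpow s hy).mul_const _

/-- The kernel `‖y‖^(2 (s + 1))` against the Laplacian, integrated by parts once. -/
lemma kernel_lap (hn : 1 ≤ n) {w : EuclideanSpace ℝ (Fin n) → ℝ}
    (hw : ContDiff ℝ (⊤ : ℕ∞) w) (hc : HasCompactSupport w) {s : ℝ} (hs : -(n : ℝ) ≤ 2 * s)
    (hs0 : s + 1 ≤ 0) :
    ∫ y, ‖y‖ ^ (2 * (s + 1)) * lap n w y =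
      -(2 * (s + 1)) * ∫ y, ‖y‖ ^ (2 * s) * fderiv ℝ w y y := by
  have h1 := (tendsto_radial hn hw hc hs (by linarith)).const_mul (-(2 * (s + 1)))
  refine tendsto_nhds_unique ?_ h1
  have hlc : HasCompactSupport (lap n w) := hc.of_isClosed_subset (isClosed_tsupport _)
    (tsupport_lap w)
  have h2 : Tendsto (fun ε => ∫ y, (‖y‖ ^ 2 + ε) ^ (s + 1) * lap n w y) (𝓝[>] 0)
      (𝓝 (∫ y, ‖y‖ ^ (2 * (s + 1)) * lap n w y)) := by
    refine tendsto_reg (a := 2 * (s + 1)) (K := 1) hn (by linarith) (contDiff_lap hw).continuous hlc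
      (fun ε hε => (continuous_reg ε hε _).mul (contDiff_lap hw).continuous) ?_ ?_
    · intro ε hε y hy
      rw [abs_mul, abs_of_nonneg (by positivity), one_mul]
      exact mul_le_mul_of_nonneg_right (reg_rpow_le hs0 hε hy) (abs_nonneg _)
    · intro y hy
      exact (tendsto_reg_rpow _ hy).mul_const _
  refine h2.congr' ?_
  filter_upwards [self_mem_nhdsWithin] with ε hε
  exact reg_lap hw hc ε hε s

/-- The kernel `‖y‖^(2 s)`, `-n < 2 s ≤ 0`, against the radial derivative. -/
lemma kernel_radial (hn : 1 ≤ n) {w : EuclideanSpace ℝ (Fin n) → ℝ}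
    (hw : ContDiff ℝ (⊤ : ℕ∞) w) (hc : HasCompactSupport w) {s : ℝ} (hs : -(n : ℝ) < 2 * s)
    (hs0 : s ≤ 0) :
    ∫ y, ‖y‖ ^ (2 * s) * fderiv ℝ w y y = -((n + 2 * s) * ∫ y, ‖y‖ ^ (2 * s) * w y) := by
  refine tendsto_nhds_unique (tendsto_radial hn hw hc hs.le hs0) ?_
  rw [← integral_const_mul]
  have h2 : Tendsto (fun ε => ∫ y, ((n + 2 * s) * (‖y‖ ^ 2 + ε) ^ s -
      2 * s * ε * (‖y‖ ^ 2 + ε) ^ (s - 1)) * w y) (𝓝[>] 0)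
      (𝓝 (∫ y, (n + 2 * s) * (‖y‖ ^ (2 * s) * w y))) := by
    refine tendsto_reg (a := 2 * s) (K := |n + 2 * s| + |2 * s|) hn hs hw.continuous hc
      (fun ε hε => ?_) ?_ ?_
    · exact ((continuous_const.mul (continuous_reg ε hε _)).sub
        (continuous_const.mul (continuous_reg ε hε _))).mul hw.continuous
    · intro ε hε y hy
      have hp : 0 < ‖y‖ ^ 2 + ε := by positivity
      have h3 : ε * (‖y‖ ^ 2 + ε) ^ (s - 1) ≤ (‖y‖ ^ 2 + ε) ^ s := by
        have : (‖y‖ ^ 2 + ε) ^ s = (‖y‖ ^ 2 + ε) * (‖y‖ ^ 2 + ε) ^ (s - 1) := by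
          rw [mul_comm, ← Real.rpow_add_one hp.ne']; congr 1; ring
        rw [this]
        exact mul_le_mul_of_nonneg_right (by nlinarith [sq_nonneg ‖y‖]) (by positivity)
      have h4 := reg_rpow_le hs0 hε hy
      rw [abs_mul, ← mul_assoc]
      refine mul_le_mul_of_nonneg_right ?_ (abs_nonneg _)
      refine (abs_sub _ _).trans ?_
      rw [abs_mul, mul_assoc (2 * s), abs_mul (2 * s), add_mul,
        abs_of_nonneg (by positivity : 0 ≤ (‖y‖ ^ 2 + ε) ^ s),
        abs_of_nonneg (by positivity : 0 ≤ ε * (‖y‖ ^ 2 + ε) ^ (s - 1))]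
      exact add_le_add (mul_le_mul_of_nonneg_left h4 (abs_nonneg _))
        (mul_le_mul_of_nonneg_left (h3.trans h4) (abs_nonneg _))
    · intro y hy
      have e : Tendsto (fun ε : ℝ => ε) (𝓝[>] 0) (𝓝 0) := nhdsWithin_le_nhds
      have := (((tendsto_reg_rpow s hy).const_mul (n + 2 * s)).sub
        ((e.const_mul (2 * s)).mul (tendsto_reg_rpow (s - 1) hy))).mul_const (w y)
      simpa [mul_assoc] using this
  refine h2.neg.congr' ?_
  filter_upwards [self_mem_nhdsWithin] with ε hε
  exact (reg_radial hw hc ε hε s).symm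
end

/-! ### The value at the origin in terms of iterated Laplacians -/

section
open Filter Topology
variable {n : ℕ}

lemma sphereArea_eq (hn : 1 ≤ n) :
    sphereArea n = n * (volume : Measure (EuclideanSpace ℝ (Fin n))).real (Metric.ball 0 1) := by
  have : Nonempty (Fin n) := ⟨⟨0, hn⟩⟩
  have hn0 : (0 : ℝ) < n := by exact_mod_cast hn
  have hG : 0 < Real.Gamma ((n : ℝ) / 2) := Real.Gamma_pos_of_pos (by positivity)
  have hG1 : Real.Gamma ((n : ℝ) / 2 + 1) = n / 2 * Real.Gamma (n / 2) :=
    Real.Gamma_add_one (by positivity)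
  have hs : √π ^ n = π ^ ((n : ℝ) / 2) := by
    rw [Real.sqrt_eq_rpow, ← Real.rpow_natCast, ← Real.rpow_mul Real.pi_pos.le]
    congr 1; ring
  rw [measureReal_def, EuclideanSpace.volume_ball]
  simp only [Fintype.card_fin, ENNReal.ofReal_one, one_pow, one_mul]
  rw [ENNReal.toReal_ofReal (by rw [hG1]; positivity), hG1, hs, sphereArea]
  field_simp

/-- The integrand is the derivative of `r^n (1 + r²)^{-n/2} / n`. -/
lemma integral_profile (hn : 1 ≤ n) :
    ∫ r in Set.Ioi (0 : ℝ), r ^ (n - 1) * (1 + r ^ 2) ^ (-(n : ℝ) / 2 - 1) = 1 / (n : ℝ) := by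
  have hn0 : (0 : ℝ) < n := by exact_mod_cast hn
  have hd : ∀ r ∈ Set.Ioi (0 : ℝ), HasDerivAt
      (fun r : ℝ => r ^ n * (1 + r ^ 2) ^ (-(n : ℝ) / 2) / (n : ℝ))
      (r ^ (n - 1) * (1 + r ^ 2) ^ (-(n : ℝ) / 2 - 1)) r := by
    intro r hr
    have hp : 0 < 1 + r ^ 2 := by positivity
    have h1 : HasDerivAt (fun r : ℝ => 1 + r ^ 2) (2 * r) r := by
      simpa using ((hasDerivAt_id r).pow 2).const_add 1
    have h2 := ((hasDerivAt_pow n r).mul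
      (h1.rpow_const (p := -(n : ℝ) / 2) (Or.inl hp.ne'))).div_const n
    refine h2.congr_deriv ?_
    have e1 : (1 + r ^ 2) ^ (-(n : ℝ) / 2) =
        (1 + r ^ 2) ^ (-(n : ℝ) / 2 - 1) * (1 + r ^ 2) := by
      rw [← Real.rpow_add_one hp.ne']; congr 1; ring
    have e2 : r ^ n = r ^ (n - 1) * r := by rw [← pow_succ]; congr 1; omega
    rw [e1, e2]
    field_simp
    ring
  have hlim : Tendsto (fun r : ℝ => r ^ n * (1 + r ^ 2) ^ (-(n : ℝ) / 2) / n) atTop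
      (𝓝 (1 / (n : ℝ))) := by
    refine Tendsto.div_const ?_ _
    have h1 : Tendsto (fun r : ℝ => 1 - (1 + r ^ 2)⁻¹) atTop (𝓝 (1 - 0)) := by
      refine tendsto_const_nhds.sub (tendsto_inv_atTop_zero.comp ?_)
      exact tendsto_atTop_add_const_left _ _ (tendsto_pow_atTop (by norm_num))
    have h2 := h1.rpow_const (p := (n : ℝ) / 2) (Or.inl (by norm_num))
    rw [sub_zero, Real.one_rpow] at h2
    refine h2.congr' ?_
    filter_upwards [eventually_gt_atTop 0] with r hr
    have hp : 0 < 1 + r ^ 2 := by positivity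
    have e : 1 - (1 + r ^ 2)⁻¹ = r ^ 2 * (1 + r ^ 2)⁻¹ := by field_simp; ring
    rw [e, Real.mul_rpow (by positivity) (by positivity), Real.inv_rpow hp.le,
      ← Real.rpow_neg hp.le, ← Real.rpow_natCast r 2, ← Real.rpow_mul hr.le,
      ← Real.rpow_natCast r n]
    congr 2
    · push_cast; ring
    · ring
  have h0 : ContinuousWithinAt (fun r : ℝ => r ^ n * (1 + r ^ 2) ^ (-(n : ℝ) / 2) / (n : ℝ))
      (Set.Ici 0) 0 := by
    refine ContinuousAt.continuousWithinAt (ContinuousAt.div_const (ContinuousAt.mul (by fun_prop)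
      (ContinuousAt.rpow_const (by fun_prop) (Or.inl (by norm_num)))) _)
  rw [integral_Ioi_of_hasDerivAt_of_nonneg h0 hd (fun r hr => ?_) hlim]
  · simp [show n ≠ 0 by omega]
  · have : (0 : ℝ) < r := hr
    positivity

/-- The total mass of the approximate identity `n ε (‖y‖² + ε)^{-n/2-1}`, by scaling to `ε = 1`. -/
lemma integral_bump (hn : 1 ≤ n) :
    (n : ℝ) * ∫ y : EuclideanSpace ℝ (Fin n), (1 + ‖y‖ ^ 2) ^ (-(n : ℝ) / 2 - 1) =
      sphereArea n := by
  have : Nonempty (Fin n) := ⟨⟨0, hn⟩⟩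
  have : Nontrivial (EuclideanSpace ℝ (Fin n)) := by infer_instance
  have hn0 : (0 : ℝ) < n := by exact_mod_cast hn
  rw [integral_fun_norm_addHaar volume (fun r : ℝ => (1 + r ^ 2) ^ (-(n : ℝ) / 2 - 1))]
  simp only [finrank_euclideanSpace, Fintype.card_fin, smul_eq_mul, nsmul_eq_mul]
  rw [integral_profile hn, sphereArea_eq hn]
  field_simp

/-- The radial derivative against the critical kernel `‖y‖^(-n)` recovers the value at `0`. -/
lemma kernel_radial_zero (hn : 1 ≤ n) {w : EuclideanSpace ℝ (Fin n) → ℝ}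
    (hw : ContDiff ℝ (⊤ : ℕ∞) w) (hc : HasCompactSupport w) :
    ∫ y, ‖y‖ ^ (2 * (-(n : ℝ) / 2)) * fderiv ℝ w y y = -(sphereArea n * w 0) := by
  have h1 := tendsto_radial hn hw hc (s := -(n : ℝ) / 2) (by linarith)
    (by have : (0 : ℝ) ≤ n := by positivity
        linarith)
  have hsq : Tendsto (fun R : ℝ => R ^ 2) (𝓝[>] 0) (𝓝[>] 0) := by
    refine tendsto_nhdsWithin_iff.2 ⟨?_, ?_⟩
    · have : Tendsto (fun R : ℝ => R ^ 2) (𝓝 0) (𝓝 (0 ^ 2)) := (continuous_pow 2).tendsto 0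
      rw [zero_pow two_ne_zero] at this
      exact this.mono_left nhdsWithin_le_nhds
    · filter_upwards [self_mem_nhdsWithin] with R hR
      exact pow_pos (show (0 : ℝ) < R from hR) 2
  -- With `ε = R²` and `y = R z`, the right-hand side of `reg_radial` at `2 s = -n` becomes
  -- `-n ∫ (1 + ‖z‖²)^(-n/2-1) w(R z) dz`.
  refine tendsto_nhds_unique (h1.comp hsq) ?_
  obtain ⟨M, hM⟩ := hc.exists_bound_of_continuous hw.continuous
  have h2 : Tendsto (fun R : ℝ => ∫ z, (1 + ‖z‖ ^ 2) ^ (-(n : ℝ) / 2 - 1) * w (R • z)) (𝓝[>] 0)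
      (𝓝 (∫ z : EuclideanSpace ℝ (Fin n), (1 + ‖z‖ ^ 2) ^ (-(n : ℝ) / 2 - 1) * w 0)) := by
    have hcont : Continuous fun z : EuclideanSpace ℝ (Fin n) =>
        (1 + ‖z‖ ^ 2) ^ (-(n : ℝ) / 2 - 1) :=
      Continuous.rpow_const (by fun_prop) fun y => Or.inl (by positivity)
    refine tendsto_integral_filter_of_dominated_convergence
      (fun z => (1 + ‖z‖ ^ 2) ^ (-(n : ℝ) / 2 - 1) * M) ?_ ?_ ?_ ?_
    · refine Eventually.of_forall fun R => Continuous.aestronglyMeasurable ?_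
      exact hcont.mul (hw.continuous.comp (by fun_prop))
    · refine Eventually.of_forall fun R => ae_of_all _ fun z => ?_
      rw [norm_mul, Real.norm_of_nonneg (by positivity)]
      exact mul_le_mul_of_nonneg_left (hM _) (by positivity)
    · refine Integrable.mul_const ?_ _
      have := integrable_rpow_neg_one_add_norm_sq (E := EuclideanSpace ℝ (Fin n))
        (μ := volume) (r := n + 2) (by simp)
      refine this.congr (ae_of_all _ fun z => ?_)
      simp only
      congr 1; ring
    · refine ae_of_all _ fun z => Tendsto.const_mul _ ?_
      have : Tendsto (fun R : ℝ => w (R • z)) (𝓝 0) (𝓝 (w ((0 : ℝ) • z))) :=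
        ((hw.continuous.comp (by fun_prop : Continuous fun R : ℝ => R • z))).tendsto 0
      rw [zero_smul] at this
      exact this.mono_left nhdsWithin_le_nhds
  rw [integral_mul_const] at h2
  have h3 := h2.const_mul (-(n : ℝ))
  rw [← mul_assoc, neg_mul, integral_bump hn, neg_mul] at h3
  refine h3.congr' ?_
  filter_upwards [self_mem_nhdsWithin] with R hR
  have hR : 0 < R := hR
  simp only [Function.comp]
  rw [reg_radial hw hc _ (pow_pos hR 2)]
  have h4 := Measure.integral_comp_smul (volume : Measure (EuclideanSpace ℝ (Fin n)))
    (fun y => ((n + 2 * (-(n : ℝ) / 2)) * (‖y‖ ^ 2 + R ^ 2) ^ (-(n : ℝ) / 2) -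
      2 * (-(n : ℝ) / 2) * R ^ 2 * (‖y‖ ^ 2 + R ^ 2) ^ (-(n : ℝ) / 2 - 1)) * w y) R
  rw [finrank_euclideanSpace, Fintype.card_fin, abs_of_nonneg (by positivity), smul_eq_mul,
    eq_inv_mul_iff_mul_eq₀ (by positivity)] at h4
  rw [← h4, ← integral_const_mul, ← integral_const_mul, ← integral_neg]
  congr 1
  funext z
  have e1 : (‖R • z‖ ^ 2 + R ^ 2) ^ (-(n : ℝ) / 2 - 1) =
      (R ^ n)⁻¹ * (R ^ 2)⁻¹ * (1 + ‖z‖ ^ 2) ^ (-(n : ℝ) / 2 - 1) := by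
    rw [norm_smul, Real.norm_of_nonneg hR.le,
      show (R * ‖z‖) ^ 2 + R ^ 2 = R ^ 2 * (1 + ‖z‖ ^ 2) by ring,
      Real.mul_rpow (by positivity) (by positivity), ← Real.rpow_natCast R 2,
      ← Real.rpow_mul hR.le, ← Real.rpow_natCast R n, ← Real.rpow_neg hR.le,
      ← Real.rpow_neg hR.le, ← Real.rpow_add hR]
    congr 2; push_cast; ring
  rw [e1]
  field_simp
  ring

lemma lap_iter_props {w : EuclideanSpace ℝ (Fin n) → ℝ} (hw : ContDiff ℝ (⊤ : ℕ∞) w)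
    (k : ℕ) : ContDiff ℝ (⊤ : ℕ∞) ((lap n)^[k] w) ∧ tsupport ((lap n)^[k] w) ⊆ tsupport w := by
  induction k with
  | zero => exact ⟨hw, subset_rfl⟩
  | succ k ih =>
    rw [Function.iterate_succ_apply']
    exact ⟨contDiff_lap ih.1, (tsupport_lap _).trans ih.2⟩

lemma lap_iter_compact {w : EuclideanSpace ℝ (Fin n) → ℝ} (hw : ContDiff ℝ (⊤ : ℕ∞) w)
    (hc : HasCompactSupport w) (k : ℕ) : HasCompactSupport ((lap n)^[k] w) :=
  hc.of_isClosed_subset (isClosed_tsupport _) (lap_iter_props hw k).2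

/-- Passing from the radial derivative of `Δ^k w` to `Δ^{k+1} w`, by one integration by parts; it
is the step from order `2 k + 1` to order `2 k + 2` in the induction of `odd_formula`. -/
lemma even_of_odd_formula (hn : 1 ≤ n) {w : EuclideanSpace ℝ (Fin n) → ℝ}
    (hw : ContDiff ℝ (⊤ : ℕ∞) w) (hc : HasCompactSupport w) (k : ℕ) (hk : 2 * (k + 1) < n)
    (hodd : ∫ y, ‖y‖ ^ (2 * ((k : ℝ) - n / 2)) * fderiv ℝ ((lap n)^[k] w) y y =
      (-1) ^ (k + 1) * (2 ^ (2 * k + 1) * π ^ ((n : ℝ) / 2) * Real.Gamma (k + 1) /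
        Real.Gamma ((n : ℝ) / 2 - k)) * w 0) :
    ∫ y, ‖y‖ ^ (2 * (((k + 1 : ℕ) : ℝ) - n / 2)) * (lap n)^[k + 1] w y =
      (-1) ^ (k + 1) * (2 ^ (2 * (k + 1)) * π ^ ((n : ℝ) / 2) * Real.Gamma ((k + 1 : ℕ)) /
        Real.Gamma ((n : ℝ) / 2 - (k + 1 : ℕ))) * w 0 := by
  have hk' : 2 * ((k : ℝ) + 1) < n := by exact_mod_cast hk
  have hk0 : (0 : ℝ) ≤ k := by positivity
  have h := kernel_lap hn (lap_iter_props hw k).1 (lap_iter_compact hw hc k)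
    (s := (k : ℝ) - n / 2) (by linarith) (by linarith)
  rw [hodd, ← Function.iterate_succ_apply' (lap n) k w] at h
  push_cast
  rw [show (k : ℝ) + 1 - n / 2 = k - n / 2 + 1 by ring, h]
  have hx : 0 < (n : ℝ) / 2 - (k + 1) := by linarith
  have hG : Real.Gamma ((n : ℝ) / 2 - k) =
      ((n : ℝ) / 2 - (k + 1)) * Real.Gamma ((n : ℝ) / 2 - (k + 1)) := by
    rw [← Real.Gamma_add_one hx.ne']; congr 1; ring
  have hG0 := (Real.Gamma_pos_of_pos hx).ne'
  rw [hG]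
  have hx' : (n : ℝ) - 2 * (k + 1) ≠ 0 := by linarith
  field_simp
  ring

/-- Representation of `w 0` through the radial derivative of `Δ^k w`, by induction on `k`:
`kernel_lap` and `kernel_radial` alternately raise the order of differentiation by one. -/
lemma odd_formula (hn : 1 ≤ n) {w : EuclideanSpace ℝ (Fin n) → ℝ}
    (hw : ContDiff ℝ (⊤ : ℕ∞) w) (hc : HasCompactSupport w) (k : ℕ) (hk : 2 * k < n) :
    ∫ y, ‖y‖ ^ (2 * ((k : ℝ) - n / 2)) * fderiv ℝ ((lap n)^[k] w) y y =
      (-1) ^ (k + 1) * (2 ^ (2 * k + 1) * π ^ ((n : ℝ) / 2) * Real.Gamma (k + 1) /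
        Real.Gamma ((n : ℝ) / 2 - k)) * w 0 := by
  induction k with
  | zero =>
    have h := kernel_radial_zero hn hw hc
    simp only [Nat.cast_zero, zero_sub, Function.iterate_zero, id, zero_add, Real.Gamma_one,
      sub_zero, mul_zero]
    rw [show -((n : ℝ) / 2) = -(n : ℝ) / 2 by ring, h, sphereArea]
    ring
  | succ k ih =>
    have he := even_of_odd_formula hn hw hc k hk (ih (by omega))
    have hk' : 2 * ((k : ℝ) + 1) < n := by exact_mod_cast hk
    have hk0 : (0 : ℝ) ≤ k := by positivity
    have h := kernel_radial hn (lap_iter_props hw (k + 1)).1 (lap_iter_compact hw hc (k + 1))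
      (s := ((k + 1 : ℕ) : ℝ) - n / 2) (by push_cast; linarith) (by push_cast; linarith)
    rw [h, he]
    have hG : Real.Gamma (((k + 1 : ℕ) : ℝ) + 1) =
        ((k + 1 : ℕ) : ℝ) * Real.Gamma ((k + 1 : ℕ) : ℝ) :=
      Real.Gamma_add_one (by positivity)
    rw [hG]
    push_cast
    ring

/-- Representation of `w 0` through `Δ^k w`. -/
lemma even_formula (hn : 1 ≤ n) {w : EuclideanSpace ℝ (Fin n) → ℝ}
    (hw : ContDiff ℝ (⊤ : ℕ∞) w) (hc : HasCompactSupport w) (k : ℕ) (hk1 : 1 ≤ k)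
    (hk : 2 * k < n) :
    ∫ y, ‖y‖ ^ (2 * ((k : ℝ) - n / 2)) * (lap n)^[k] w y =
      (-1) ^ k * (2 ^ (2 * k) * π ^ ((n : ℝ) / 2) * Real.Gamma k /
        Real.Gamma ((n : ℝ) / 2 - k)) * w 0 := by
  obtain ⟨k, rfl⟩ : ∃ j, k = j + 1 := ⟨k - 1, by omega⟩
  exact even_of_odd_formula hn hw hc k hk (odd_formula hn hw hc k (by omega))
end

/-! ### The potential estimate -/

section
variable {n : ℕ}

/-- The constant of the Riesz-type representation formula; `ζ_{n,m}` is `n / ω_{n-1}` times its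
power `n / (n - m)`. -/
def reprConst (n m : ℕ) : ℝ :=
  if m % 2 = 1 then
    Real.pi ^ ((n : ℝ) / 2) * (2 : ℝ) ^ (m : ℝ) * Real.Gamma (((m : ℝ) + 1) / 2) /
        Real.Gamma (((n : ℝ) - (m : ℝ) + 1) / 2)
  else
    Real.pi ^ ((n : ℝ) / 2) * (2 : ℝ) ^ (m : ℝ) * Real.Gamma ((m : ℝ) / 2) /
        Real.Gamma (((n : ℝ) - (m : ℝ)) / 2)

lemma adamsConst_eq (n m : ℕ) : adamsConst n m =
    ((n : ℝ) / sphereArea n) * reprConst n m ^ ((n : ℝ) / ((n : ℝ) - (m : ℝ))) := by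
  unfold adamsConst reprConst
  split_ifs <;> rfl

lemma reprConst_pos {m : ℕ} (hm : 1 ≤ m) (hnm : 2 * m ≤ n) : 0 < reprConst n m := by
  have h1 : (1 : ℝ) ≤ m := by exact_mod_cast hm
  have h2 : 2 * (m : ℝ) ≤ n := by exact_mod_cast hnm
  unfold reprConst
  have g1 := Real.Gamma_pos_of_pos (s := ((m : ℝ) + 1) / 2) (by linarith)
  have g2 := Real.Gamma_pos_of_pos (s := ((n : ℝ) - m + 1) / 2) (by linarith)
  have g3 := Real.Gamma_pos_of_pos (s := (m : ℝ) / 2) (by linarith)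
  have g4 := Real.Gamma_pos_of_pos (s := ((n : ℝ) - m) / 2) (by linarith)
  split_ifs <;> positivity

lemma norm_gradient_eq (w : EuclideanSpace ℝ (Fin n) → ℝ) (y : EuclideanSpace ℝ (Fin n)) :
    ‖gradient w y‖ = ‖fderiv ℝ w y‖ := by
  simp [gradient]

lemma lap_iter_comp_add (u : EuclideanSpace ℝ (Fin n) → ℝ) (x : EuclideanSpace ℝ (Fin n))
    (k : ℕ) : (lap n)^[k] (fun z => u (x + z)) = fun z => (lap n)^[k] u (x + z) := by
  induction k with
  | zero => rfl
  | succ k ih =>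
    rw [Function.iterate_succ_apply', ih]
    funext z
    rw [Function.iterate_succ_apply']
    simp only [lap, iteratedFDeriv_comp_add_left]

lemma mGradNorm_comp_add (m : ℕ) (u : EuclideanSpace ℝ (Fin n) → ℝ)
    (x z : EuclideanSpace ℝ (Fin n)) :
    mGradNorm n m (fun z => u (x + z)) z = mGradNorm n m u (x + z) := by
  unfold mGradNorm
  simp only [lap_iter_comp_add, norm_gradient_eq]
  rw [fderiv_comp_add_left]

lemma mGradNorm_nonneg (m : ℕ) (u : EuclideanSpace ℝ (Fin n) → ℝ)
    (x : EuclideanSpace ℝ (Fin n)) : 0 ≤ mGradNorm n m u x := by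
  unfold mGradNorm
  split_ifs <;> positivity

lemma mGradNorm_continuous (m : ℕ) {u : EuclideanSpace ℝ (Fin n) → ℝ}
    (hu : ContDiff ℝ (⊤ : ℕ∞) u) : Continuous (mGradNorm n m u) := by
  unfold mGradNorm
  split_ifs
  · simp only [norm_gradient_eq]
    exact ((lap_iter_props hu _).1.continuous_fderiv (by simp)).norm
  · exact (lap_iter_props hu _).1.continuous.abs

lemma mGradNorm_eq_zero (m : ℕ) {u : EuclideanSpace ℝ (Fin n) → ℝ}
    (hu : ContDiff ℝ (⊤ : ℕ∞) u) {x : EuclideanSpace ℝ (Fin n)} (hx : x ∉ tsupport u) :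
    mGradNorm n m u x = 0 := by
  unfold mGradNorm
  split_ifs
  · have h : x ∉ tsupport (fderiv ℝ ((lap n)^[(m - 1) / 2] u)) := fun h =>
      hx ((lap_iter_props hu _).2 (tsupport_fderiv_subset ℝ h))
    rw [norm_gradient_eq, image_eq_zero_of_notMem_tsupport h, norm_zero]
  · have h : x ∉ tsupport ((lap n)^[m / 2] u) := fun h => hx ((lap_iter_props hu _).2 h)
    rw [image_eq_zero_of_notMem_tsupport h, abs_zero]

/-- The potential estimate at the origin. For odd `m` the radial derivative is bounded by
`‖y‖ ‖∇ Δ^k w‖`, so both parities give the kernel `‖y‖^{m-n}`. -/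
lemma repr_zero {m : ℕ} (hm : 1 ≤ m) (hnm : 2 * m ≤ n) {w : EuclideanSpace ℝ (Fin n) → ℝ}
    (hw : ContDiff ℝ (⊤ : ℕ∞) w) (hc : HasCompactSupport w) :
    ENNReal.ofReal (reprConst n m * |w 0|) ≤
      ∫⁻ y, ENNReal.ofReal (‖y‖ ^ (-((n : ℝ) - m))) * ENNReal.ofReal (mGradNorm n m w y) := by
  have hA := reprConst_pos hm hnm
  have key : ∀ F : EuclideanSpace ℝ (Fin n) → ℝ, |∫ y, F y| = reprConst n m * |w 0| →
      (∀ y, |F y| ≤ ‖y‖ ^ (-((n : ℝ) - m)) * mGradNorm n m w y) →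
      ENNReal.ofReal (reprConst n m * |w 0|) ≤
      ∫⁻ y, ENNReal.ofReal (‖y‖ ^ (-((n : ℝ) - m))) * ENNReal.ofReal (mGradNorm n m w y) := by
    intro F h1 h2
    rw [← h1, ← Real.norm_eq_abs, ofReal_norm]
    refine (enorm_integral_le_lintegral_enorm _).trans (lintegral_mono fun y => ?_)
    rw [← ENNReal.ofReal_mul (by positivity), ← ofReal_norm]
    exact ENNReal.ofReal_le_ofReal (h2 y)
  rcases Nat.even_or_odd' m with ⟨k, rfl | rfl⟩
  · have hk : (2 * k) % 2 ≠ 1 := by omega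
    refine key (fun y => ‖y‖ ^ (2 * ((k : ℝ) - n / 2)) * (lap n)^[k] w y) ?_ (fun y => ?_)
    · rw [even_formula (by omega) hw hc k (by omega) (by omega), reprConst, if_neg hk]
      have hr : reprConst n (2 * k) = 2 ^ (2 * k) * π ^ ((n : ℝ) / 2) * Real.Gamma k /
          Real.Gamma ((n : ℝ) / 2 - k) := by
        rw [reprConst, if_neg hk, Real.rpow_natCast]
        push_cast
        rw [show (2 * (k : ℝ)) / 2 = k by ring, show ((n : ℝ) - 2 * k) / 2 = n / 2 - k by ring]
        ring
      rw [← hr, abs_mul, abs_mul, abs_pow, abs_neg, abs_one, one_pow, one_mul, abs_of_pos hA,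
        reprConst, if_neg hk]
    · rw [abs_mul, abs_of_nonneg (by positivity), mGradNorm, if_neg hk,
        show 2 * k / 2 = k by omega]
      apply le_of_eq
      congr 2
      push_cast; ring
  · have hk : (2 * k + 1) % 2 = 1 := by omega
    refine key (fun y => ‖y‖ ^ (2 * ((k : ℝ) - n / 2)) * fderiv ℝ ((lap n)^[k] w) y y)
      ?_ (fun y => ?_)
    · rw [odd_formula (by omega) hw hc k (by omega)]
      have hr : reprConst n (2 * k + 1) = 2 ^ (2 * k + 1) * π ^ ((n : ℝ) / 2) *
          Real.Gamma (k + 1) / Real.Gamma ((n : ℝ) / 2 - k) := by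
        rw [reprConst, if_pos hk, Real.rpow_natCast]
        push_cast
        rw [show (2 * (k : ℝ) + 1 + 1) / 2 = k + 1 by ring,
          show ((n : ℝ) - (2 * k + 1) + 1) / 2 = n / 2 - k by ring]
        ring
      rw [← hr, abs_mul, abs_mul, abs_pow, abs_neg, abs_one, one_pow, one_mul, abs_of_pos hA]
    · rw [mGradNorm, if_pos hk, show (2 * k + 1 - 1) / 2 = k by omega, norm_gradient_eq]
      rcases eq_or_ne y 0 with rfl | hy
      · simp only [map_zero, mul_zero, abs_zero]; positivity
      · have h0 : 0 < ‖y‖ := norm_pos_iff.2 hy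
        rw [abs_mul, abs_of_nonneg (by positivity),
          show -((n : ℝ) - ((2 * k + 1 : ℕ) : ℝ)) = 2 * ((k : ℝ) - n / 2) + 1 by push_cast; ring,
          Real.rpow_add_one h0.ne', mul_assoc]
        exact mul_le_mul_of_nonneg_left (abs_fderiv_self_le _ y) (by positivity)

/-- Potential estimate: `u` is dominated by the Riesz potential of `|∇^m u|`, with the sharp
constant. -/
lemma repr_bound {m : ℕ} (hm : 1 ≤ m) (hnm : 2 * m ≤ n) {u : EuclideanSpace ℝ (Fin n) → ℝ}
    (hu : ContDiff ℝ (⊤ : ℕ∞) u) (hc : HasCompactSupport u) (x : EuclideanSpace ℝ (Fin n)) :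
    ENNReal.ofReal (reprConst n m * |u x|) ≤
      ∫⁻ y, ENNReal.ofReal (‖x - y‖ ^ (-((n : ℝ) - m))) * ENNReal.ofReal (mGradNorm n m u y) := by
  have hw : ContDiff ℝ (⊤ : ℕ∞) (fun z => u (x + z)) := hu.comp (contDiff_const.add contDiff_id)
  have hwc : HasCompactSupport (fun z => u (x + z)) :=
    hc.comp_homeomorph (Homeomorph.addLeft x)
  have h := repr_zero hm hnm hw hwc
  rw [add_zero] at h
  refine h.trans (le_of_eq ?_)
  rw [← lintegral_add_left_eq_self (μ := volume) (fun y => ENNReal.ofReal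
    (‖x - y‖ ^ (-((n : ℝ) - m))) * ENNReal.ofReal (mGradNorm n m u y)) x]
  refine lintegral_congr fun z => ?_
  rw [mGradNorm_comp_add]
  simp
end

/-! ### The inequality for one function and for a pair -/

section
variable {n : ℕ}

/-- The Riesz kernel divided by `|B₁|^{1/q}`, `q = n / (n - m)`, has weak-`L^q` constant one: its
superlevel sets lie in balls of measure exactly `α^{-q}`. -/
lemma kernel_level {m : ℕ} (hm : 1 ≤ m) (hnm : 2 * m ≤ n) {c : ℝ}
    (hc : c = (volume : Measure (EuclideanSpace ℝ (Fin n))).real (Metric.ball 0 1) ^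
      (((n : ℝ) / ((n : ℝ) - m))⁻¹)) (hκ : 0 < c) (Ω : Set (EuclideanSpace ℝ (Fin n)))
    (x : EuclideanSpace ℝ (Fin n)) (α : ℝ) (hα : 0 < α) :
    (volume.restrict Ω) {y | α < ‖x - y‖ ^ (-((n : ℝ) - m)) / c} ≤
      ENNReal.ofReal (α ^ (-((n : ℝ) / ((n : ℝ) - m)))) := by
  have h1 : (1 : ℝ) ≤ m := by exact_mod_cast hm
  have h2 : 2 * (m : ℝ) ≤ n := by exact_mod_cast hnm
  have hd : 0 < (n : ℝ) - m := by linarith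
  have hn0 : 0 < (n : ℝ) := by linarith
  set r : ℝ := (α * c) ^ (-((n : ℝ) - m)⁻¹) with hr
  have hr0 : 0 < r := by positivity
  have hsub : {y | α < ‖x - y‖ ^ (-((n : ℝ) - m)) / c} ⊆ Metric.ball x r := by
    intro y hy
    rw [Set.mem_ofPred_eq, lt_div_iff₀ hκ] at hy
    rcases eq_or_ne x y with rfl | hxy
    · exact Metric.mem_ball_self hr0
    · have h0 : 0 < ‖x - y‖ := norm_pos_iff.2 (sub_ne_zero.2 hxy)
      rw [Metric.mem_ball, dist_comm, dist_eq_norm, hr]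
      have := Real.rpow_lt_rpow_of_neg (by positivity) hy (neg_lt_zero.2 (inv_pos.2 hd))
      rwa [← Real.rpow_mul h0.le, neg_mul_neg, mul_inv_cancel₀ hd.ne', Real.rpow_one] at this
  refine (Measure.restrict_apply_le _ _).trans ((measure_mono hsub).trans ?_)
  rw [Measure.addHaar_ball_of_pos _ _ hr0, finrank_euclideanSpace, Fintype.card_fin,
    ← ENNReal.ofReal_toReal (measure_ball_lt_top (μ := volume)
      (x := (0 : EuclideanSpace ℝ (Fin n))) (r := 1)).ne, ← measureReal_def,
    ← ENNReal.ofReal_mul (by positivity)]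
  refine ENNReal.ofReal_le_ofReal (le_of_eq ?_)
  set κ := (volume : Measure (EuclideanSpace ℝ (Fin n))).real (Metric.ball 0 1) with hκd
  have hκ0 : 0 ≤ κ := measureReal_nonneg
  have hκ1 : κ ≠ 0 := by
    intro h
    rw [hc, h, Real.zero_rpow (by positivity)] at hκ
    exact lt_irrefl _ hκ
  have hcq : c ^ (-((n : ℝ) / ((n : ℝ) - m))) = κ⁻¹ := by
    rw [hc, ← Real.rpow_mul hκ0, mul_neg, inv_mul_cancel₀ (by positivity), Real.rpow_neg_one]
  rw [hr, ← Real.rpow_natCast, ← Real.rpow_mul (by positivity),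
    show -((n : ℝ) - m)⁻¹ * n = -((n : ℝ) / ((n : ℝ) - m)) by field_simp,
    Real.mul_rpow hα.le hκ.le, hcq]
  field_simp

lemma integrable_mGradNorm_rpow (m : ℕ) {u : EuclideanSpace ℝ (Fin n) → ℝ}
    (hu : ContDiff ℝ (⊤ : ℕ∞) u) (hc : HasCompactSupport u) {p : ℝ} (hp : 0 < p) :
    Integrable (fun x => mGradNorm n m u x ^ p) := by
  refine Continuous.integrable_of_hasCompactSupport
    ((mGradNorm_continuous m hu).rpow_const fun x => Or.inr hp.le) ?_
  refine HasCompactSupport.intro hc fun x hx => ?_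
  rw [mGradNorm_eq_zero m hu hx, Real.zero_rpow hp.ne']

/-- Scale-invariant Adams inequality: writing `a = ∫ |∇^m u|^{n/m}`, the function
`ζ |u|^{n/(n-m)}` is at most `a^{m/(n-m)} X` with `∫ exp X` bounded independently of `u`. -/
theorem adams_scaled {m : ℕ} (hm : 1 ≤ m) (hnm : 2 * m ≤ n)
    (Ω : Set (EuclideanSpace ℝ (Fin n))) (hΩo : IsOpen Ω) (hΩb : Bornology.IsBounded Ω) :
    ∃ C : ℝ, 0 ≤ C ∧ ∀ u : EuclideanSpace ℝ (Fin n) → ℝ, IsCcSmooth Ω u →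
      ∃ X : EuclideanSpace ℝ (Fin n) → ℝ, Measurable X ∧ (∀ x, 0 ≤ X x) ∧
        (∫⁻ x in Ω, ENNReal.ofReal (rexp (X x)) ≤ ENNReal.ofReal C) ∧
        ∀ x, adamsConst n m * |u x| ^ ((n : ℝ) / ((n : ℝ) - m)) ≤
          (∫ x in Ω, mGradNorm n m u x ^ ((n : ℝ) / (m : ℝ))) ^ ((m : ℝ) / ((n : ℝ) - m)) *
            X x := by
  have h1 : (1 : ℝ) ≤ m := by exact_mod_cast hm
  have h2 : 2 * (m : ℝ) ≤ n := by exact_mod_cast hnm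
  have hm0 : (0 : ℝ) < m := by linarith
  have hd : 0 < (n : ℝ) - m := by linarith
  have hn0 : 0 < (n : ℝ) := by linarith
  set p : ℝ := (n : ℝ) / m with hp
  set q : ℝ := (n : ℝ) / ((n : ℝ) - m) with hq
  have hp0 : 0 < p := by positivity
  have hq0 : 0 < q := by positivity
  have hp2 : 2 ≤ p := by rw [hp, le_div_iff₀ hm0]; exact h2
  have hpq : p.HolderConjugate q := by
    rw [Real.holderConjugate_iff]
    refine ⟨by linarith, ?_⟩
    rw [hp, hq]; field_simp; ring
  have hfin : IsFiniteMeasure (volume.restrict Ω) :=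
    ⟨by rw [Measure.restrict_apply_univ]; exact hΩb.measure_lt_top⟩
  set κ := (volume : Measure (EuclideanSpace ℝ (Fin n))).real (Metric.ball 0 1) with hκ
  have hκ0 : 0 < κ := ENNReal.toReal_pos (Metric.measure_ball_pos _ _ one_pos).ne'
    measure_ball_lt_top.ne
  set c : ℝ := κ ^ q⁻¹ with hc
  have hc0 : 0 < c := by positivity
  have hcq : c ^ q = κ := by
    rw [hc, ← Real.rpow_mul hκ0.le, inv_mul_cancel₀ hq0.ne', Real.rpow_one]
  set A := reprConst n m with hA
  have hA0 : 0 < A := reprConst_pos hm hnm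
  have hζ : adamsConst n m = A ^ q / κ := by
    rw [adamsConst_eq, sphereArea_eq (by omega), ← hκ]
    field_simp
    rfl
  obtain ⟨C, hC0, hC⟩ := adams_abstract (volume.restrict Ω) hpq hp2
    (k := fun x y => ‖x - y‖ ^ (-((n : ℝ) - m)) / c)
    ((((continuous_fst.sub continuous_snd).norm).measurable.pow_const _).div_const _)
    (fun x y => by positivity)
    (fun x α hα => kernel_level hm hnm hc hc0 Ω x α hα)
    (fun y α hα => by
      simpa only [norm_sub_rev] using kernel_level hm hnm hc hc0 Ω y α hα)
  refine ⟨C, hC0, fun u hu => ?_⟩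
  obtain ⟨hus, huc, huΩ⟩ := hu
  have hgi := (integrable_mGradNorm_rpow m hus huc hp0).integrableOn (s := Ω)
  have hgc := mGradNorm_continuous m hus
  have hg0 := mGradNorm_nonneg m u
  have hgΩ : ∀ y, y ∉ Ω → mGradNorm n m u y = 0 :=
    fun y hy => mGradNorm_eq_zero m hus fun h => hy (huΩ h)
  set g := mGradNorm n m u with hg
  set a : ℝ := ∫ x in Ω, g x ^ p with ha
  have ha0 : 0 ≤ a := integral_nonneg fun x => by have := hg0 x; positivity
  have hrepr : ∀ x, ENNReal.ofReal (A * |u x|) ≤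
      ∫⁻ y in Ω, ENNReal.ofReal (‖x - y‖ ^ (-((n : ℝ) - m))) * ENNReal.ofReal (g y) := by
    intro x
    refine (repr_bound hm hnm hus huc x).trans (le_of_eq ?_)
    rw [← lintegral_indicator hΩo.measurableSet]
    refine lintegral_congr fun y => ?_
    by_cases hy : y ∈ Ω
    · rw [Set.indicator_of_mem hy]
    · rw [Set.indicator_of_notMem hy, ← hg, hgΩ y hy]; simp
  have hap : (a ^ p⁻¹) ^ p = a := by
    rw [← Real.rpow_mul ha0, inv_mul_cancel₀ hp0.ne', Real.rpow_one]
  have hs0 : 0 ≤ a ^ p⁻¹ := by positivity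
  obtain ⟨M, hM⟩ : ∃ M, ∀ x, g x ≤ M := by
    obtain ⟨M, hM⟩ := HasCompactSupport.exists_bound_of_continuous (f := g)
      (HasCompactSupport.intro huc fun x hx => mGradNorm_eq_zero m hus hx) hgc
    exact ⟨M, fun x => (le_abs_self _).trans (hM x)⟩
  have hXm : Measurable fun x => A / c * |u x| / a ^ p⁻¹ :=
    ((hus.continuous.abs.measurable).const_mul _).div_const _
  have hX0 : ∀ x, 0 ≤ A / c * |u x| / a ^ p⁻¹ := fun x => by positivity
  -- When `a = 0` the division by zero makes this function vanish, which is harmless since then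
  -- `u = 0`.
  refine ⟨fun x => (A / c * |u x| / a ^ p⁻¹) ^ q, hXm.pow_const _,
    fun x => Real.rpow_nonneg (hX0 x) _, ?_, fun x => ?_⟩
  · refine hC (fun x => g x / a ^ p⁻¹) (M / a ^ p⁻¹)
      (fun x => div_le_div_of_nonneg_right (hM x) hs0) (hgc.measurable.div_const _)
      (fun x => div_nonneg (hg0 x) hs0) ?_ _ hXm hX0 ?_
    · have e : ∀ x, (g x / a ^ p⁻¹) ^ p = g x ^ p / a := fun x => by
        rw [Real.div_rpow (hg0 x) hs0, hap]
      simp_rw [e]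
      rw [← ofReal_integral_eq_lintegral_ofReal (hgi.div_const a)
        (ae_of_all _ fun x => div_nonneg (Real.rpow_nonneg (hg0 x) _) ha0), integral_div, ← ha,
        ENNReal.ofReal_le_one]
      exact div_self_le_one a
    · intro x
      have hs : 0 ≤ c⁻¹ * (a ^ p⁻¹)⁻¹ := by positivity
      calc ENNReal.ofReal (A / c * |u x| / a ^ p⁻¹)
          = ENNReal.ofReal (c⁻¹ * (a ^ p⁻¹)⁻¹) * ENNReal.ofReal (A * |u x|) := by
            rw [← ENNReal.ofReal_mul hs]; congr 1; ring
        _ ≤ ENNReal.ofReal (c⁻¹ * (a ^ p⁻¹)⁻¹) * ∫⁻ y in Ω,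
              ENNReal.ofReal (‖x - y‖ ^ (-((n : ℝ) - m))) * ENNReal.ofReal (g y) := by
            gcongr; exact hrepr x
        _ = ∫⁻ y in Ω, ENNReal.ofReal (c⁻¹ * (a ^ p⁻¹)⁻¹) *
              (ENNReal.ofReal (‖x - y‖ ^ (-((n : ℝ) - m))) * ENNReal.ofReal (g y)) :=
            (lintegral_const_mul' _ _ ENNReal.ofReal_ne_top).symm
        _ = _ := by
            refine lintegral_congr fun y => ?_
            rw [← ENNReal.ofReal_mul (by positivity), ← ENNReal.ofReal_mul hs,
              ← ENNReal.ofReal_mul (by positivity)]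
            congr 1; ring
  · rcases ha0.eq_or_lt with ha' | ha'
    · have hz : ∀ᵐ y ∂(volume.restrict Ω), g y ^ p = 0 :=
        (integral_eq_zero_iff_of_nonneg (fun y => Real.rpow_nonneg (hg0 y) _) hgi).1 ha'.symm
      -- A vanishing energy forces `u = 0`, by the potential estimate.
      have hux : A * |u x| ≤ 0 := by
        have h3 : ∫⁻ y in Ω, ENNReal.ofReal (‖x - y‖ ^ (-((n : ℝ) - m))) *
            ENNReal.ofReal (g y) = 0 := by
          rw [← lintegral_zero (μ := volume.restrict Ω)]
          refine lintegral_congr_ae ?_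
          filter_upwards [hz] with y hy
          rw [(Real.rpow_eq_zero (hg0 y) hp0.ne').1 hy]; simp
        have h4 := hrepr x
        rw [h3, nonpos_iff_eq_zero, ENNReal.ofReal_eq_zero] at h4
        exact h4
      have hu0 : |u x| = 0 := le_antisymm (by nlinarith [abs_nonneg (u x)]) (abs_nonneg _)
      rw [hu0, Real.zero_rpow hq0.ne', mul_zero]
      exact mul_nonneg (Real.rpow_nonneg ha0 _) (Real.rpow_nonneg (hX0 x) _)
    · apply le_of_eq
      beta_reduce
      have he : p⁻¹ * q = (m : ℝ) / ((n : ℝ) - m) := by rw [hp, hq]; field_simp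
      rw [Real.div_rpow (by positivity) hs0, Real.mul_rpow (by positivity) (abs_nonneg _),
        Real.div_rpow hA0.le hc0.le, hcq, ← Real.rpow_mul ha0, he, hζ]
      have : a ^ ((m : ℝ) / ((n : ℝ) - m)) ≠ 0 := (Real.rpow_pos_of_pos ha' _).ne'
      field_simp

/-- Concavity of `x^e` on `a + b ≤ 1`; this is where the factor `2^{(n - 2 m)/(n-m)}` comes from. -/
lemma rpow_add_rpow_le {a b e : ℝ} (ha : 0 ≤ a) (hb : 0 ≤ b) (hab : a + b ≤ 1) (he0 : 0 ≤ e)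
    (he1 : e ≤ 1) : a ^ e + b ^ e ≤ 2 ^ (1 - e) := by
  have h := (Real.concaveOn_rpow he0 he1).2 (Set.mem_Ici.2 ha) (Set.mem_Ici.2 hb)
    (by norm_num : (0 : ℝ) ≤ 1 / 2) (by norm_num : (0 : ℝ) ≤ 1 / 2) (by norm_num)
  simp only [smul_eq_mul] at h
  have h2 : (1 / 2 * a + 1 / 2 * b) ^ e ≤ (1 / 2 : ℝ) ^ e :=
    Real.rpow_le_rpow (by positivity) (by linarith) he0
  have h3 : (2 : ℝ) ^ (1 - e) = 2 * (1 / 2 : ℝ) ^ e := by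
    rw [Real.rpow_sub two_pos, Real.rpow_one, one_div, Real.inv_rpow two_pos.le]
    field_simp
  rw [h3]
  linarith
end

/-- Adams–Moser–Trudinger inequality in the Cartesian product of Sobolev spaces
(sufficiency part). -/
theorem product_adams_moser_trudinger
    (n m : ℕ) (hm : 1 ≤ m) (hnm : 2 * m ≤ n)
    (Ω : Set (EuclideanSpace ℝ (Fin n))) (hΩo : IsOpen Ω) (hΩb : Bornology.IsBounded Ω)
    (Θ : ℝ) (hΘ0 : 0 < Θ)
    (hΘ : Θ ≤ adamsConst n m /
      (2 : ℝ) ^ (((n : ℝ) - 2 * (m : ℝ)) / ((n : ℝ) - (m : ℝ)))) :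
    ∃ C : ℝ, ∀ u v : EuclideanSpace ℝ (Fin n) → ℝ,
      IsCcSmooth Ω u → IsCcSmooth Ω v →
      (∫ x in Ω, mGradNorm n m u x ^ ((n : ℝ) / (m : ℝ))) +
        (∫ x in Ω, mGradNorm n m v x ^ ((n : ℝ) / (m : ℝ))) ≤ 1 →
      (∫⁻ x in Ω, ENNReal.ofReal
          (Real.exp (Θ * (|u x| ^ ((n : ℝ) / ((n : ℝ) - (m : ℝ))) +
            |v x| ^ ((n : ℝ) / ((n : ℝ) - (m : ℝ))))))) ≤ ENNReal.ofReal C := by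
  have h1 : (1 : ℝ) ≤ m := by exact_mod_cast hm
  have h2 : 2 * (m : ℝ) ≤ n := by exact_mod_cast hnm
  have hd : 0 < (n : ℝ) - m := by linarith
  obtain ⟨C, hC0, hC⟩ := adams_scaled hm hnm Ω hΩo hΩb
  refine ⟨C + C, fun u v hu hv hab => ?_⟩
  obtain ⟨X, hXm, hX0, hXC, hX⟩ := hC u hu
  obtain ⟨Y, hYm, hY0, hYC, hY⟩ := hC v hv
  set a := ∫ x in Ω, mGradNorm n m u x ^ ((n : ℝ) / (m : ℝ)) with ha
  set b := ∫ x in Ω, mGradNorm n m v x ^ ((n : ℝ) / (m : ℝ)) with hb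
  have ha0 : 0 ≤ a := integral_nonneg fun x => Real.rpow_nonneg (mGradNorm_nonneg m u x) _
  have hb0 : 0 ≤ b := integral_nonneg fun x => Real.rpow_nonneg (mGradNorm_nonneg m v x) _
  set q : ℝ := (n : ℝ) / ((n : ℝ) - (m : ℝ)) with hq
  set e : ℝ := (m : ℝ) / ((n : ℝ) - (m : ℝ)) with he
  have he0 : 0 ≤ e := by positivity
  have he1 : e ≤ 1 := by rw [he, div_le_one hd]; linarith
  have hexp : ((n : ℝ) - 2 * (m : ℝ)) / ((n : ℝ) - (m : ℝ)) = 1 - e := by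
    rw [he]; field_simp; ring
  have hsum := rpow_add_rpow_le ha0 hb0 hab he0 he1
  rw [hexp] at hΘ
  have h2e : (0 : ℝ) < 2 ^ (1 - e) := by positivity
  rw [le_div_iff₀ h2e] at hΘ
  have hpt : ∀ x, Θ * (|u x| ^ q + |v x| ^ q) ≤ max (X x) (Y x) := by
    intro x
    have hS : 0 ≤ |u x| ^ q + |v x| ^ q := by positivity
    have hmx : 0 ≤ max (X x) (Y x) := (hX0 x).trans (le_max_left _ _)
    refine le_of_mul_le_mul_left ?_ h2e
    calc 2 ^ (1 - e) * (Θ * (|u x| ^ q + |v x| ^ q))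
        = Θ * 2 ^ (1 - e) * (|u x| ^ q + |v x| ^ q) := by ring
      _ ≤ adamsConst n m * (|u x| ^ q + |v x| ^ q) := mul_le_mul_of_nonneg_right hΘ hS
      _ = adamsConst n m * |u x| ^ q + adamsConst n m * |v x| ^ q := by ring
      _ ≤ a ^ e * X x + b ^ e * Y x := add_le_add (hX x) (hY x)
      _ ≤ a ^ e * max (X x) (Y x) + b ^ e * max (X x) (Y x) := by
          gcongr
          · exact le_max_left _ _
          · exact le_max_right _ _
      _ = (a ^ e + b ^ e) * max (X x) (Y x) := by ring
      _ ≤ 2 ^ (1 - e) * max (X x) (Y x) := mul_le_mul_of_nonneg_right hsum hmx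
  calc ∫⁻ x in Ω, ENNReal.ofReal (Real.exp (Θ * (|u x| ^ q + |v x| ^ q)))
      ≤ ∫⁻ x in Ω, (ENNReal.ofReal (rexp (X x)) + ENNReal.ofReal (rexp (Y x))) := by
        refine lintegral_mono fun x => ?_
        rw [← ENNReal.ofReal_add (by positivity) (by positivity)]
        refine ENNReal.ofReal_le_ofReal ((Real.exp_le_exp.2 (hpt x)).trans ?_)
        rcases max_cases (X x) (Y x) with ⟨h, _⟩ | ⟨h, _⟩ <;> rw [h] <;>
          linarith [Real.exp_pos (X x), Real.exp_pos (Y x)]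
    _ = (∫⁻ x in Ω, ENNReal.ofReal (rexp (X x))) +
          ∫⁻ x in Ω, ENNReal.ofReal (rexp (Y x)) :=
        lintegral_add_left (Real.measurable_exp.comp hXm).ennreal_ofReal _
    _ ≤ ENNReal.ofReal C + ENNReal.ofReal C := add_le_add hXC hYC
    _ = ENNReal.ofReal (C + C) := (ENNReal.ofReal_add hC0 hC0).symm
end
end

section
/- Let m, n be integers with m ≥ 1 and n ≥ 2m, let Ω ⊂ ℝ^n be a nonempty bounded open set, and let Θ > ζ_{n,m} / 2^{(n−2m)/(n−m)}. Then the corresponding supremum is infinite: for every C > 0 there exist u, v ∈ C_c^∞(Ω) with ∫_Ω |∇^m u|^{n/m} dx + ∫_Ω |∇^m v|^{n/m} dx ≤ 1 and ∫_Ω exp(Θ (|u(x)|^{n/(n−m)} + |v(x)|^{n/(n−m)})) dx > C. (Sharpness of the constant ζ_{n,m}/2_{n,m} in the product Adams–Moser–Trudinger inequality.) -/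
/-!
The extremal behaviour is that of a truncated logarithmic pole, and taking `u = v` reduces the
product problem to a single function of energy `1/2`.

Write `τ(x) = -log ‖x - x₀‖`, `p = n/m`, `q = n/(n-m)`. For a function of the form `G ∘ τ` one has
`|∇^m (G ∘ τ)| = e^{mτ} |P(G)(τ)|`, where `P` is a constant-coefficient differential operator in one
variable (`iterate_lap_comp`, `mGradNorm_comp`). The test function is
`G(t) = κ (ramp(t - a) - ramp(t - b))`, with `ramp` a smooth function equal to `0` for `t ≤ 0` and
to `t` for `t ≥ 1`. As `P` is linear and translation invariant, `P(G)` is a difference of two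
translates of the fixed function `P(ramp)`, which is `0` on `(-∞, 0)`, a constant `±A` on `(1, ∞)`,
and bounded. Hence `|P(G)| = κ A` on `(a + 1, b)`, `P(G)` vanishes outside `[a, b + 1]`, and it is
bounded by a multiple of `κ` independent of `b` in between. Since `e^{mpτ} = ‖x - x₀‖⁻ⁿ` and the
integral of `‖x - x₀‖⁻ⁿ` over a shell is `ω` times its logarithmic width (`integral_shell`), the
energy is at most `κ^p (ω A^p (b - a) + O(1))` (`energy_le`).

Computing `A` by iterating the Laplacian on the logarithm and using `Γ(s + 1) = s Γ(s)` gives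
`ζ_{n,m} = (n/ω) (ω A)^q` (`adamsConst_eq`). On the ball of radius `e^{-(b+1)}` the test function is
the constant `κ (b - a)`; with `κ` chosen so that the energy is at most `1/2`, the integral of the
exponential over this ball is a constant times
`exp (d (2 Θ (2 ω A^p + O(1/d))^{1-q} - n))`, with `d = b - a`. It is unbounded as `d → ∞` because
`2 Θ (2 ω A^p)^{1-q} > n` is the hypothesis `Θ > ζ_{n,m} / 2^{(n-2m)/(n-m)}` rewritten
(`tendsto_exponent`).
-/

open MeasureTheory Real

noncomputable section

namespace AdamsSharp

/-! ### Calculus of functions of `-log ‖x - x₀‖` -/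

/-- Euclidean `n`-space. -/
abbrev E (n : ℕ) := EuclideanSpace ℝ (Fin n)

/-- The logarithmic coordinate `τ(x) = -log ‖x - x₀‖`; its value at `x = x₀` is junk. -/
def logPole {n : ℕ} (x₀ x : E n) : ℝ := -Real.log ‖x - x₀‖

lemma exp_logPole {n : ℕ} {x₀ x : E n} (hx : x ≠ x₀) :
    Real.exp (logPole x₀ x) = ‖x - x₀‖⁻¹ := by
  rw [logPole, Real.exp_neg, Real.exp_log (norm_pos_iff.2 (sub_ne_zero.2 hx))]

lemma exp_two_logPole {n : ℕ} {x₀ x : E n} (hx : x ≠ x₀) :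
    Real.exp (2 * logPole x₀ x) = (‖x - x₀‖ ^ 2)⁻¹ := by
  rw [two_mul, Real.exp_add, exp_logPole hx, ← mul_inv, sq]

lemma hasFDerivAt_logPole {n : ℕ} {x₀ x : E n} (hx : x ≠ x₀) :
    HasFDerivAt (logPole x₀) (-(Real.exp (2 * logPole x₀ x)) • innerSL ℝ (x - x₀)) x := by
  have h0 : ‖x - x₀‖ ^ 2 ≠ 0 := pow_ne_zero _ (norm_ne_zero_iff.2 (sub_ne_zero.2 hx))
  have h1 : HasFDerivAt (fun y : E n => ‖y - x₀‖ ^ 2) (2 • (innerSL ℝ (x - x₀))) x := by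
    have := ((hasFDerivAt_id x).sub_const x₀).norm_sq
    simpa using this
  have h2 := (h1.log h0).const_mul (-(1 / 2) : ℝ)
  have h3 : logPole x₀ = fun y : E n => (-(1 / 2) : ℝ) * Real.log (‖y - x₀‖ ^ 2) := by
    funext y
    simp [logPole, Real.log_pow]
  rw [← h3] at h2
  refine h2.congr_fderiv ?_
  rw [exp_two_logPole hx]
  module

lemma hasFDerivAt_comp {n : ℕ} {x₀ x : E n} (hx : x ≠ x₀) {f : E n → ℝ} {G : ℝ → ℝ}
    (hG : Differentiable ℝ G) (hf : ∀ y, y ≠ x₀ → f y = G (logPole x₀ y)) :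
    HasFDerivAt f ((-Real.exp (2 * logPole x₀ x) * deriv G (logPole x₀ x)) •
      innerSL ℝ (x - x₀)) x := by
  have h1 := (hG (logPole x₀ x)).hasDerivAt.comp_hasFDerivAt x (hasFDerivAt_logPole hx)
  have h2 : f =ᶠ[nhds x] G ∘ logPole x₀ := by
    filter_upwards [isOpen_ne.mem_nhds hx] with y hy using hf y hy
  refine (h1.congr_of_eventuallyEq h2).congr_fderiv ?_
  rw [smul_smul]
  congr 1
  ring

lemma norm_gradient_comp {n : ℕ} {x₀ x : E n} (hx : x ≠ x₀) {f : E n → ℝ} {G : ℝ → ℝ}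
    (hG : Differentiable ℝ G) (hf : ∀ y, y ≠ x₀ → f y = G (logPole x₀ y)) :
    ‖gradient f x‖ = Real.exp (logPole x₀ x) * |deriv G (logPole x₀ x)| := by
  have h0 : ‖x - x₀‖ ≠ 0 := (norm_ne_zero_iff.2 (sub_ne_zero.2 hx))
  rw [gradient, LinearIsometryEquiv.norm_map, (hasFDerivAt_comp hx hG hf).fderiv, norm_smul,
    innerSL_apply_norm, exp_two_logPole hx, exp_logPole hx, norm_mul, Real.norm_eq_abs,
    Real.norm_eq_abs, abs_neg, abs_of_pos (by positivity)]
  field_simp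

/-- `Δ(G ∘ τ) = e^{2τ} (G'' - (n - 2) G')(τ)` away from `x₀`. -/
lemma lap_comp {n : ℕ} {x₀ x : E n} (hx : x ≠ x₀) {f : E n → ℝ} {G : ℝ → ℝ}
    (hG : ContDiff ℝ (⊤ : ℕ∞) G) (hf : ∀ y, y ≠ x₀ → f y = G (logPole x₀ y)) :
    lap n f x = Real.exp (2 * logPole x₀ x) *
      (deriv (deriv G) (logPole x₀ x) - ((n : ℝ) - 2) * deriv G (logPole x₀ x)) := by
  have hG' : ContDiff ℝ (⊤ : ℕ∞) (deriv G) := (contDiff_infty_iff_deriv.1 hG).2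
  have hGd : Differentiable ℝ G := (contDiff_infty_iff_deriv.1 hG).1
  have hGd' : Differentiable ℝ (deriv G) := (contDiff_infty_iff_deriv.1 hG').1
  set G1 : ℝ → ℝ := fun t => -Real.exp (2 * t) * deriv G t with hG1
  have hG1d : ∀ t, HasDerivAt G1
      (-(Real.exp (2 * t) * 2) * deriv G t + -Real.exp (2 * t) * deriv (deriv G) t) t := by
    intro t
    have h1 : HasDerivAt (fun t : ℝ => -Real.exp (2 * t)) (-(Real.exp (2 * t) * 2)) t := by
      have := ((hasDerivAt_id t).const_mul (2 : ℝ)).exp.fun_neg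
      simpa using this
    exact h1.mul (hGd' t).hasDerivAt
  have hfd : ∀ y, y ≠ x₀ → fderiv ℝ f y = G1 (logPole x₀ y) • innerSL ℝ (y - x₀) :=
    fun y hy => (hasFDerivAt_comp hy hGd hf).fderiv
  have h2 : fderiv ℝ f =ᶠ[nhds x] fun y => G1 (logPole x₀ y) • innerSL ℝ (y - x₀) := by
    filter_upwards [isOpen_ne.mem_nhds hx] with y hy using hfd y hy
  have hA := hasFDerivAt_comp (f := fun y => G1 (logPole x₀ y)) hx
    (fun t => (hG1d t).differentiableAt) (fun y _ => rfl)
  have hB : HasFDerivAt (fun y : E n => (innerSL ℝ (y - x₀) : E n →L[ℝ] ℝ)) (innerSL ℝ) x := by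
    have := (innerSL ℝ (E := E n)).hasFDerivAt (x := x - x₀)
    exact this.comp x ((hasFDerivAt_id x).sub_const x₀)
  have hC := (hA.smul hB).congr_of_eventuallyEq h2
  have hn : ‖x - x₀‖ ^ 2 ≠ 0 := pow_ne_zero _ (norm_ne_zero_iff.2 (sub_ne_zero.2 hx))
  have hterm : ∀ i : Fin n, iteratedFDeriv ℝ 2 f x
      ![EuclideanSpace.single i 1, EuclideanSpace.single i 1] =
      G1 (logPole x₀ x) + (-Real.exp (2 * logPole x₀ x) * deriv G1 (logPole x₀ x)) *
        ((x - x₀) i) ^ 2 := by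
    intro i
    rw [iteratedFDeriv_two_apply, hC.fderiv]
    have h1 : (innerSL ℝ (EuclideanSpace.single i (1 : ℝ))) (EuclideanSpace.single i 1)
        = (1 : ℝ) := by
      rw [innerSL_apply_apply]
      simp
    simp [EuclideanSpace.inner_single_right, h1]
    ring
  unfold lap
  simp only [hterm]
  rw [Finset.sum_add_distrib, ← Finset.mul_sum Finset.univ (fun i => ((x - x₀) i) ^ 2),
    ← EuclideanSpace.real_norm_sq_eq, (hG1d _).deriv]
  simp only [Finset.sum_const, Finset.card_univ, Fintype.card_fin, nsmul_eq_mul, hG1]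
  have he := exp_two_logPole hx
  set e := Real.exp (2 * logPole x₀ x)
  have hee : e * ‖x - x₀‖ ^ 2 = 1 := by rw [he, inv_mul_cancel₀ hn]
  linear_combination (2 * e * deriv G (logPole x₀ x) + e * deriv (deriv G) (logPole x₀ x)) * hee

/-! ### Iterated Laplacians as one-variable operators -/

/-- The operator with `Δ (e^{2kτ} G(τ)) = e^{2(k+1)τ} (stepOp n k G)(τ)`. -/
def stepOp (n k : ℕ) (G : ℝ → ℝ) : ℝ → ℝ := fun t =>
  deriv (deriv G) t + (4 * k - n + 2) * deriv G t - 2 * k * (n - 2 - 2 * k) * G t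

/-- The constant-coefficient operator with `Δ^k (G(τ)) = e^{2kτ} (iterOp n k G)(τ)`. -/
def iterOp (n : ℕ) : ℕ → (ℝ → ℝ) → ℝ → ℝ
  | 0, G => G
  | k + 1, G => stepOp n k (iterOp n k G)

/-- The function with `|∇^m (G(τ))| = e^{mτ} |profile n m G (τ)|`. -/
def profile (n m : ℕ) (G : ℝ → ℝ) : ℝ → ℝ :=
  if m % 2 = 1 then
    fun t => deriv (iterOp n (m / 2) G) t + 2 * (m / 2 : ℕ) * iterOp n (m / 2) G t
  else iterOp n (m / 2) G

lemma contDiff_deriv {G : ℝ → ℝ} (hG : ContDiff ℝ (⊤ : ℕ∞) G) :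
    ContDiff ℝ (⊤ : ℕ∞) (deriv G) := (contDiff_infty_iff_deriv.1 hG).2

lemma contDiff_stepOp {n k : ℕ} {G : ℝ → ℝ} (hG : ContDiff ℝ (⊤ : ℕ∞) G) :
    ContDiff ℝ (⊤ : ℕ∞) (stepOp n k G) := by
  have h1 := contDiff_deriv hG
  have h2 := contDiff_deriv h1
  unfold stepOp
  fun_prop

lemma contDiff_iterOp {n : ℕ} (k : ℕ) {G : ℝ → ℝ} (hG : ContDiff ℝ (⊤ : ℕ∞) G) :
    ContDiff ℝ (⊤ : ℕ∞) (iterOp n k G) := by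
  induction k with
  | zero => exact hG
  | succ k ih => exact contDiff_stepOp ih

lemma contDiff_profile {n m : ℕ} {G : ℝ → ℝ} (hG : ContDiff ℝ (⊤ : ℕ∞) G) :
    ContDiff ℝ (⊤ : ℕ∞) (profile n m G) := by
  have h0 := contDiff_iterOp (n := n) (m / 2) hG
  have h1 := contDiff_deriv h0
  unfold profile
  split_ifs
  · fun_prop
  · exact h0

lemma hasDerivAt_exp_mul {G : ℝ → ℝ} (hG : Differentiable ℝ G) (c t : ℝ) :
    HasDerivAt (fun t => Real.exp (c * t) * G t) (Real.exp (c * t) * (deriv G t + c * G t)) t := by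
  have h1 : HasDerivAt (fun t : ℝ => Real.exp (c * t)) (Real.exp (c * t) * c) t := by
    simpa using ((hasDerivAt_id t).const_mul c).exp
  refine (h1.mul (hG t).hasDerivAt).congr_deriv ?_
  ring

lemma iterate_lap_comp {n : ℕ} {x₀ : E n} {f : E n → ℝ} {G : ℝ → ℝ}
    (hG : ContDiff ℝ (⊤ : ℕ∞) G) (hf : ∀ y, y ≠ x₀ → f y = G (logPole x₀ y)) (k : ℕ) :
    ∀ x, x ≠ x₀ → (lap n)^[k] f x =
      Real.exp (2 * k * logPole x₀ x) * iterOp n k G (logPole x₀ x) := by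
  induction k with
  | zero => intro x hx; simp [iterOp, hf x hx]
  | succ k ih =>
    intro x hx
    have hI := contDiff_iterOp (n := n) k hG
    have hId : Differentiable ℝ (iterOp n k G) := (contDiff_infty_iff_deriv.1 hI).1
    have hId' : Differentiable ℝ (deriv (iterOp n k G)) :=
      (contDiff_infty_iff_deriv.1 (contDiff_deriv hI)).1
    have hH : ContDiff ℝ (⊤ : ℕ∞) (fun t => Real.exp (2 * k * t) * iterOp n k G t) := by
      fun_prop
    have hd1 : deriv (fun t => Real.exp (2 * k * t) * iterOp n k G t) = fun t =>
        Real.exp (2 * k * t) * (deriv (iterOp n k G) t + 2 * k * iterOp n k G t) :=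
      funext fun t => (hasDerivAt_exp_mul hId _ t).deriv
    have hd2 : deriv (fun t =>
        Real.exp (2 * k * t) * (deriv (iterOp n k G) t + 2 * k * iterOp n k G t)) = fun t =>
        Real.exp (2 * k * t) * ((deriv (deriv (iterOp n k G)) t + 2 * k * deriv (iterOp n k G) t)
          + 2 * k * (deriv (iterOp n k G) t + 2 * k * iterOp n k G t)) := by
      funext t
      have hs : Differentiable ℝ
          (fun t => deriv (iterOp n k G) t + 2 * k * iterOp n k G t) := by fun_prop
      rw [(hasDerivAt_exp_mul hs _ t).deriv, deriv_fun_add (hId' t) ((hId t).const_mul _),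
        deriv_const_mul _ (hId t)]
    rw [Function.iterate_succ_apply', lap_comp hx hH ih, hd1, hd2]
    simp only [iterOp, stepOp]
    have : Real.exp (2 * (k + 1 : ℕ) * logPole x₀ x) =
        Real.exp (2 * logPole x₀ x) * Real.exp (2 * k * logPole x₀ x) := by
      rw [← Real.exp_add]; push_cast; ring_nf
    rw [this]
    ring

lemma mGradNorm_comp {n m : ℕ} {x₀ x : E n} (hx : x ≠ x₀) {f : E n → ℝ} {G : ℝ → ℝ}
    (hG : ContDiff ℝ (⊤ : ℕ∞) G) (hf : ∀ y, y ≠ x₀ → f y = G (logPole x₀ y)) :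
    mGradNorm n m f x = Real.exp (m * logPole x₀ x) * |profile n m G (logPole x₀ x)| := by
  unfold mGradNorm profile
  have hI := contDiff_iterOp (n := n) (m / 2) hG
  have hId : Differentiable ℝ (iterOp n (m / 2) G) := (contDiff_infty_iff_deriv.1 hI).1
  split_ifs with h
  · have h1 : (m - 1) / 2 = m / 2 := by omega
    have h2 : (m : ℝ) = 2 * (m / 2 : ℕ) + 1 := by
      have : m = 2 * (m / 2) + 1 := by omega
      exact_mod_cast this
    rw [h1, norm_gradient_comp hx (G := fun t => Real.exp (2 * (m / 2 : ℕ) * t) *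
      iterOp n (m / 2) G t) (by fun_prop) (iterate_lap_comp hG hf _),
      (hasDerivAt_exp_mul hId _ _).deriv, abs_mul, abs_of_pos (Real.exp_pos _), ← mul_assoc,
      ← Real.exp_add]
    congr 2
    rw [h2]
    ring
  · have h2 : (m : ℝ) = 2 * (m / 2 : ℕ) := by
      have : m = 2 * (m / 2) := by omega
      exact_mod_cast this
    rw [iterate_lap_comp hG hf _ x hx, abs_mul, abs_of_pos (Real.exp_pos _), ← h2]

/-- `iterOp` is linear and commutes with translations. -/
lemma iterOp_comb {n : ℕ} (k : ℕ) {G : ℝ → ℝ} (hG : ContDiff ℝ (⊤ : ℕ∞) G) (κ a b : ℝ) :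
    iterOp n k (fun t => κ * (G (t - a) - G (t - b))) =
      fun t => κ * (iterOp n k G (t - a) - iterOp n k G (t - b)) := by
  induction k with
  | zero => rfl
  | succ k ih =>
    have hder : ∀ {F : ℝ → ℝ}, Differentiable ℝ F →
        deriv (fun t => κ * (F (t - a) - F (t - b))) =
          fun t => κ * (deriv F (t - a) - deriv F (t - b)) := by
      intro F hF
      funext t
      have h1 : DifferentiableAt ℝ (fun t => F (t - a)) t := by fun_prop
      have h2 : DifferentiableAt ℝ (fun t => F (t - b)) t := by fun_prop
      rw [deriv_const_mul _ (h1.fun_sub h2), deriv_fun_sub h1 h2, deriv_comp_sub_const,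
        deriv_comp_sub_const]
    have hI := contDiff_iterOp (n := n) k hG
    have hId : Differentiable ℝ (iterOp n k G) := (contDiff_infty_iff_deriv.1 hI).1
    have hId' : Differentiable ℝ (deriv (iterOp n k G)) :=
      (contDiff_infty_iff_deriv.1 (contDiff_deriv hI)).1
    funext t
    simp only [iterOp, stepOp]
    rw [ih, hder hId, hder hId']
    ring

lemma profile_comb {n m : ℕ} {G : ℝ → ℝ} (hG : ContDiff ℝ (⊤ : ℕ∞) G) (κ a b : ℝ) :
    profile n m (fun t => κ * (G (t - a) - G (t - b))) =
      fun t => κ * (profile n m G (t - a) - profile n m G (t - b)) := by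
  have hI := contDiff_iterOp (n := n) (m / 2) hG
  have hId : Differentiable ℝ (iterOp n (m / 2) G) := (contDiff_infty_iff_deriv.1 hI).1
  unfold profile
  split_ifs with h
  · funext t
    rw [iterOp_comb _ hG]
    have h1 : DifferentiableAt ℝ (fun t => iterOp n (m / 2) G (t - a)) t := by fun_prop
    have h2 : DifferentiableAt ℝ (fun t => iterOp n (m / 2) G (t - b)) t := by fun_prop
    rw [deriv_const_mul _ (h1.fun_sub h2), deriv_fun_sub h1 h2, deriv_comp_sub_const,
        deriv_comp_sub_const]
    ring
  · rw [iterOp_comb _ hG]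

lemma stepOp_eqOn {n k : ℕ} {G H : ℝ → ℝ} {s : Set ℝ} (hs : IsOpen s) (h : Set.EqOn G H s) :
    Set.EqOn (stepOp n k G) (stepOp n k H) s := by
  intro t ht
  have h1 : Set.EqOn (deriv G) (deriv H) s := h.deriv hs
  have h2 : Set.EqOn (deriv (deriv G)) (deriv (deriv H)) s := h1.deriv hs
  simp only [stepOp, h ht, h1 ht, h2 ht]

/-! ### The smooth ramp and the Adams constant -/

/-- A smooth function that is `0` on `(-∞, 0]` and `t` on `[1, ∞)`. -/
def ramp (t : ℝ) : ℝ := t * Real.smoothTransition t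

lemma contDiff_ramp : ContDiff ℝ (⊤ : ℕ∞) ramp := by
  have := Real.smoothTransition.contDiff (n := ⊤)
  unfold ramp
  fun_prop

lemma ramp_of_nonpos {t : ℝ} (ht : t ≤ 0) : ramp t = 0 := by
  simp [ramp, Real.smoothTransition.zero_of_nonpos ht]

lemma ramp_of_one_le {t : ℝ} (ht : 1 ≤ t) : ramp t = t := by
  simp [ramp, Real.smoothTransition.one_of_one_le ht]

lemma iterOp_ramp_neg (n k : ℕ) : Set.EqOn (iterOp n k ramp) (fun _ => 0) (Set.Iio 0) := by
  induction k with
  | zero => intro t ht; exact ramp_of_nonpos (le_of_lt ht)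
  | succ k ih =>
    intro t ht
    have := stepOp_eqOn (n := n) (k := k) isOpen_Iio ih ht
    simp only [iterOp, this]
    simp [stepOp]

/-- The constant with `Δ^{k+1} (-log ‖x‖) = poleConst n k * ‖x‖^{-2(k+1)}`. -/
def poleConst (n : ℕ) : ℕ → ℝ
  | 0 => 2 - n
  | k + 1 => -(2 * (k + 1) * (n - 2 - 2 * (k + 1))) * poleConst n k

lemma iterOp_ramp_pos (n k : ℕ) :
    Set.EqOn (iterOp n (k + 1) ramp) (fun _ => poleConst n k) (Set.Ioi 1) := by
  induction k with
  | zero =>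
    intro t ht
    have h1 : Set.EqOn ramp (fun t => t) (Set.Ioi 1) := fun t ht => ramp_of_one_le (le_of_lt ht)
    have := stepOp_eqOn (n := n) (k := 0) isOpen_Ioi h1 ht
    simp only [iterOp, this]
    simp [stepOp, poleConst]
    ring
  | succ k ih =>
    intro t ht
    have := stepOp_eqOn (n := n) (k := k + 1) isOpen_Ioi ih ht
    rw [iterOp, this]
    simp [stepOp, poleConst]

/-- The constant, up to sign, with `|∇^m log ‖x‖| = |adamsSlope n m| * ‖x‖^{-m}`. -/
def adamsSlope (n m : ℕ) : ℝ :=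
  if m = 1 then 1 else if m % 2 = 1 then 2 * (m / 2 : ℕ) * poleConst n (m / 2 - 1)
  else poleConst n (m / 2 - 1)

lemma profile_ramp_pos {n m : ℕ} (hm : 1 ≤ m) {t : ℝ} (ht : 1 < t) :
    profile n m ramp t = adamsSlope n m := by
  unfold profile adamsSlope
  split_ifs with h1 h2 h2
  · subst h2
    have h1 : Set.EqOn ramp (fun t => t) (Set.Ioi 1) := fun t ht => ramp_of_one_le (le_of_lt ht)
    have := h1.deriv isOpen_Ioi ht
    simp [iterOp, this]
  · obtain ⟨k, hk⟩ : ∃ k, m / 2 = k + 1 := ⟨m / 2 - 1, by omega⟩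
    rw [hk]
    have h3 := iterOp_ramp_pos n k
    have h4 := h3.deriv isOpen_Ioi ht
    simp [h3 ht, h4]
  · omega
  · obtain ⟨k, hk⟩ : ∃ k, m / 2 = k + 1 := ⟨m / 2 - 1, by omega⟩
    rw [hk]
    exact iterOp_ramp_pos n k ht

lemma profile_ramp_neg {n m : ℕ} {t : ℝ} (ht : t < 0) : profile n m ramp t = 0 := by
  unfold profile
  have h3 := iterOp_ramp_neg n (m / 2)
  have h4 := h3.deriv isOpen_Iio ht
  split_ifs
  · simp [h3 ht, h4]
  · exact h3 ht

/-- The profile of the ramp is continuous and constant outside `[0, 1]`, hence bounded. -/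
lemma exists_bound_profile {n m : ℕ} (hm : 1 ≤ m) :
    ∃ M, 0 ≤ M ∧ ∀ t, |profile n m ramp t| ≤ M := by
  have hc : Continuous (profile n m ramp) := (contDiff_profile contDiff_ramp).continuous
  obtain ⟨M, hM⟩ := (isCompact_Icc (a := (0 : ℝ)) (b := 1)).exists_bound_of_continuousOn
    hc.continuousOn
  refine ⟨max M |adamsSlope n m|, le_max_of_le_right (abs_nonneg _), fun t => ?_⟩
  rcases lt_or_ge t 0 with h | h
  · rw [profile_ramp_neg h, abs_zero]
    exact le_max_of_le_right (abs_nonneg _)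
  rcases le_or_gt t 1 with h' | h'
  · exact le_max_of_le_left (hM t ⟨h, h'⟩)
  · rw [profile_ramp_pos hm h']
    exact le_max_right _ _

/-- The even-order Adams expression; each Laplacian contributes the factor
`2(k+1)(n-2-2(k+1))`, absorbed by the functional equation of `Γ`. -/
lemma sphereArea_mul_poleConst {n : ℕ} (k : ℕ) (hk : 2 * (k + 1) < n) :
    sphereArea n * |poleConst n k| = Real.pi ^ ((n : ℝ) / 2) * 2 ^ (2 * ((k : ℝ) + 1)) *
      Real.Gamma (k + 1) / Real.Gamma ((n : ℝ) / 2 - (k + 1)) := by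
  have hk' : 2 * ((k : ℝ) + 1) < n := by exact_mod_cast hk
  induction k with
  | zero =>
    have hk2 : (2 : ℝ) < n := by exact_mod_cast (by omega : 2 < n)
    have h1 : (n : ℝ) / 2 - 1 ≠ 0 := by linarith
    have h2 : Real.Gamma ((n : ℝ) / 2) = ((n : ℝ) / 2 - 1) * Real.Gamma ((n : ℝ) / 2 - 1) := by
      rw [← Real.Gamma_add_one h1]; ring_nf
    have h3 : 0 < Real.Gamma ((n : ℝ) / 2 - 1) :=
      Real.Gamma_pos_of_pos (by linarith)
    have h4 : |(2 : ℝ) - n| = 2 * ((n : ℝ) / 2 - 1) := by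
      rw [abs_of_nonpos (by linarith)]; ring
    have h5 : (2 : ℝ) ^ (2 : ℝ) = 4 := by norm_num
    simp only [poleConst, sphereArea, h2, h4]
    simp only [h5, Nat.cast_zero, zero_add, mul_one, Real.Gamma_one]
    generalize Real.Gamma ((n : ℝ) / 2 - 1) = g at h3
    generalize (n : ℝ) / 2 - 1 = d at h1
    field_simp
    norm_num
  | succ k ih =>
    have ih' := ih (by omega) (by push_cast at hk'; linarith)
    push_cast at hk' ⊢
    have h1 : (n : ℝ) / 2 - (k + 1 + 1) ≠ 0 := by linarith
    have h2 : Real.Gamma ((n : ℝ) / 2 - (k + 1)) =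
        ((n : ℝ) / 2 - (k + 1 + 1)) * Real.Gamma ((n : ℝ) / 2 - (k + 1 + 1)) := by
      rw [← Real.Gamma_add_one h1]; ring_nf
    have h3 : 0 < Real.Gamma ((n : ℝ) / 2 - (k + 1 + 1)) :=
      Real.Gamma_pos_of_pos (by linarith)
    have h4 : |(2 * ((k : ℝ) + 1) * (n - 2 - 2 * (k + 1)))| =
        4 * (k + 1) * ((n : ℝ) / 2 - (k + 1 + 1)) := by
      rw [abs_of_nonneg]
      · ring
      · have : (0 : ℝ) ≤ k := k.cast_nonneg
        exact mul_nonneg (by positivity) (by linarith)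
    have h5 : (2 : ℝ) ^ (2 * ((k : ℝ) + 1 + 1)) = 4 * 2 ^ (2 * ((k : ℝ) + 1)) := by
      rw [mul_add 2 ((k : ℝ) + 1) 1, Real.rpow_add two_pos]; norm_num; ring
    have h6 : Real.Gamma ((k : ℝ) + 1 + 1) = (k + 1) * Real.Gamma (k + 1) :=
      Real.Gamma_add_one (by positivity)
    rw [poleConst, abs_mul, abs_neg, h4, h5, h6]
    rw [h2] at ih'
    have : sphereArea n * (4 * (k + 1) * ((n : ℝ) / 2 - (k + 1 + 1)) * |poleConst n k|) =
      (4 * (k + 1) * ((n : ℝ) / 2 - (k + 1 + 1))) * (sphereArea n * |poleConst n k|) := by ring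
    rw [this, ih']
    generalize Real.Gamma ((n : ℝ) / 2 - (k + 1 + 1)) = g at h3
    generalize (n : ℝ) / 2 - (k + 1 + 1) = d at h1
    field_simp

/-- The Adams constant is `(n/ω) (ω A)^{n/(n-m)}` with `ω = sphereArea n`, `A = |adamsSlope n m|`:
the Gamma quotients in it come from the iterated Laplacians of the logarithm. -/
lemma adamsConst_eq {n m : ℕ} (hm : 1 ≤ m) (hnm : 2 * m ≤ n) :
    adamsConst n m = ((n : ℝ) / sphereArea n) *
      (sphereArea n * |adamsSlope n m|) ^ ((n : ℝ) / ((n : ℝ) - (m : ℝ))) := by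
  unfold adamsConst adamsSlope
  split_ifs with h1 h2 h2
  · subst h2
    congr 2
    simp [sphereArea]
    ring
  · congr 2
    obtain ⟨k, hk⟩ : ∃ k, m = 2 * (k + 1) + 1 := ⟨m / 2 - 1, by omega⟩
    have hk2 : m / 2 = k + 1 := by omega
    have h3 := sphereArea_mul_poleConst (n := n) k (by omega)
    rw [hk2, abs_mul, mul_left_comm, Nat.add_sub_cancel, h3, hk]
    push_cast
    have h4 : (2 : ℝ) ^ (2 * ((k : ℝ) + 1) + 1) = 2 * 2 ^ (2 * ((k : ℝ) + 1)) := by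
      rw [Real.rpow_add two_pos]; norm_num; ring
    have h5 : (2 * ((k : ℝ) + 1) + 1 + 1) / 2 = k + 1 + 1 := by ring
    have h6 : ((n : ℝ) - (2 * ((k : ℝ) + 1) + 1) + 1) / 2 = n / 2 - (k + 1) := by ring
    have h7 : Real.Gamma ((k : ℝ) + 1 + 1) = (k + 1) * Real.Gamma (k + 1) :=
      Real.Gamma_add_one (by positivity)
    rw [h4, h5, h6, h7, abs_of_nonneg (by positivity)]
    ring
  · omega
  · congr 2
    obtain ⟨k, hk⟩ : ∃ k, m = 2 * (k + 1) := ⟨m / 2 - 1, by omega⟩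
    have hk2 : m / 2 = k + 1 := by omega
    have h3 := sphereArea_mul_poleConst (n := n) k (by omega)
    rw [hk2, Nat.add_sub_cancel, h3, hk]
    push_cast
    have h5 : (2 * ((k : ℝ) + 1)) / 2 = k + 1 := by ring
    have h6 : ((n : ℝ) - (2 * ((k : ℝ) + 1))) / 2 = n / 2 - (k + 1) := by ring
    rw [h5, h6]

lemma sphereArea_pos {n : ℕ} (hn : 0 < n) : 0 < sphereArea n := by
  unfold sphereArea
  have : 0 < Real.Gamma ((n : ℝ) / 2) := Real.Gamma_pos_of_pos (by positivity)
  positivity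

lemma adamsSlope_ne_zero {n m : ℕ} (hm : 1 ≤ m) (hnm : 2 * m ≤ n) : adamsSlope n m ≠ 0 := by
  have hpc : ∀ k, 2 * (k + 1) < n → poleConst n k ≠ 0 := by
    intro k hk h0
    have h1 := sphereArea_mul_poleConst k hk
    have hk' : 2 * ((k : ℝ) + 1) < n := by exact_mod_cast hk
    have h2 : 0 < Real.Gamma ((n : ℝ) / 2 - (k + 1)) := Real.Gamma_pos_of_pos (by linarith)
    have h3 : 0 < Real.Gamma ((k : ℝ) + 1) := Real.Gamma_pos_of_pos (by positivity)
    rw [h0, abs_zero, mul_zero] at h1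
    have : 0 < Real.pi ^ ((n : ℝ) / 2) * 2 ^ (2 * ((k : ℝ) + 1)) *
      Real.Gamma (k + 1) / Real.Gamma ((n : ℝ) / 2 - (k + 1)) := by positivity
    linarith
  unfold adamsSlope
  split_ifs with h1 h2
  · exact one_ne_zero
  · refine mul_ne_zero (mul_ne_zero two_ne_zero ?_) (hpc _ (by omega))
    have : m / 2 ≠ 0 := by omega
    exact_mod_cast this
  · exact hpc _ (by omega)

/-! ### Integration over spherical shells -/

/-- The function `‖x - x₀‖⁻ⁿ` restricted to the shell `e^{-β} ≤ ‖x - x₀‖ ≤ e^{-α}`. -/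
def shell {n : ℕ} (x₀ : E n) (α β : ℝ) (x : E n) : ℝ :=
  (Set.Icc (Real.exp (-β)) (Real.exp (-α))).indicator (fun r => (r ^ n)⁻¹) ‖x - x₀‖

lemma shell_nonneg {n : ℕ} (x₀ : E n) (α β : ℝ) (x : E n) : 0 ≤ shell x₀ α β x :=
  Set.indicator_apply_nonneg fun _ => by positivity

lemma shell_of_mem {n : ℕ} {x₀ x : E n} (hx : x ≠ x₀) {α β : ℝ} (h1 : α ≤ logPole x₀ x)
    (h2 : logPole x₀ x ≤ β) : shell x₀ α β x = Real.exp (n * logPole x₀ x) := by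
  have h3 : ‖x - x₀‖ = Real.exp (-logPole x₀ x) := by
    rw [Real.exp_neg, exp_logPole hx, inv_inv]
  rw [shell, Set.indicator_of_mem, h3, ← Real.exp_nat_mul, ← Real.exp_neg]
  · ring_nf
  · rw [h3]
    exact ⟨Real.exp_le_exp.2 (by linarith), Real.exp_le_exp.2 (by linarith)⟩

/-- In polar coordinates the weight `r^{n-1}` turns the shell density `r^{-n}` into `r⁻¹`. -/
lemma radial_weight {n : ℕ} (hn : 0 < n) (α β : ℝ) : Set.EqOn
    (fun y : ℝ => y ^ (Module.finrank ℝ (E n) - 1) •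
      (Set.Icc (Real.exp (-β)) (Real.exp (-α))).indicator (fun r => (r ^ n)⁻¹) y)
    ((Set.Icc (Real.exp (-β)) (Real.exp (-α))).indicator (fun r => r⁻¹)) (Set.Ioi 0) := by
  intro y hy
  have hy0 : y ≠ 0 := ne_of_gt hy
  rw [finrank_euclideanSpace_fin]
  by_cases h : y ∈ Set.Icc (Real.exp (-β)) (Real.exp (-α))
  · simp only [Set.indicator_of_mem h, smul_eq_mul]
    obtain ⟨k, rfl⟩ : ∃ k, n = k + 1 := ⟨n - 1, by omega⟩
    rw [Nat.add_sub_cancel, pow_succ]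
    field_simp
  · simp [Set.indicator_of_notMem h]

lemma integrableOn_inv_Icc (α β : ℝ) :
    IntegrableOn (fun r : ℝ => r⁻¹) (Set.Icc (Real.exp (-β)) (Real.exp (-α))) := by
  refine ContinuousOn.integrableOn_Icc (continuousOn_inv₀.mono fun y hy => ?_)
  exact ne_of_gt ((Real.exp_pos _).trans_le hy.1)

lemma integrable_shell {n : ℕ} (hn : 0 < n) (x₀ : E n) (α β : ℝ) :
    Integrable (shell x₀ α β) := by
  have : Nonempty (Fin n) := ⟨⟨0, hn⟩⟩
  have h : Integrable (fun x : E n =>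
      (Set.Icc (Real.exp (-β)) (Real.exp (-α))).indicator (fun r => (r ^ n)⁻¹) ‖x‖) := by
    rw [integrable_fun_norm_addHaar (μ := (volume : Measure (E n)))
      (f := (Set.Icc (Real.exp (-β)) (Real.exp (-α))).indicator (fun r => (r ^ n)⁻¹)),
      integrableOn_congr_fun (radial_weight hn α β) measurableSet_Ioi]
    exact ((integrable_indicator_iff measurableSet_Icc).2
      (integrableOn_inv_Icc α β)).integrableOn
  exact h.comp_sub_right x₀

lemma integral_shell {n : ℕ} (hn : 0 < n) (x₀ : E n) {α β : ℝ} (hαβ : α ≤ β) :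
    ∫ x, shell x₀ α β x = sphereArea n * (β - α) := by
  have : Nonempty (Fin n) := ⟨⟨0, hn⟩⟩
  have h0 : ∫ x, shell x₀ α β x = ∫ x : E n,
      (Set.Icc (Real.exp (-β)) (Real.exp (-α))).indicator (fun r => (r ^ n)⁻¹) ‖x‖ :=
    integral_sub_right_eq_self (μ := (volume : Measure (E n))) (fun x : E n =>
      (Set.Icc (Real.exp (-β)) (Real.exp (-α))).indicator (fun r => (r ^ n)⁻¹) ‖x‖) x₀
  have hsub : Set.Icc (Real.exp (-β)) (Real.exp (-α)) ⊆ Set.Ioi 0 :=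
    fun y hy => (Real.exp_pos _).trans_le hy.1
  have hle : Real.exp (-β) ≤ Real.exp (-α) := Real.exp_le_exp.2 (by linarith)
  rw [h0, integral_fun_norm_addHaar (volume : Measure (E n)),
    setIntegral_congr_fun measurableSet_Ioi (radial_weight hn α β),
    setIntegral_indicator measurableSet_Icc, Set.inter_eq_right.2 hsub, integral_Icc_eq_integral_Ioc,
    ← intervalIntegral.integral_of_le hle, integral_inv_of_pos (Real.exp_pos _) (Real.exp_pos _),
    ← Real.exp_sub, Real.log_exp, finrank_euclideanSpace_fin, measureReal_def,
    EuclideanSpace.volume_ball]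
  have h2 : (n : ℝ) / 2 ≠ 0 := by positivity
  have h3 : 0 < Real.Gamma ((n : ℝ) / 2) := Real.Gamma_pos_of_pos (by positivity)
  have h4 : √Real.pi ^ n = Real.pi ^ ((n : ℝ) / 2) := by
    rw [Real.sqrt_eq_rpow, ← Real.rpow_natCast, ← Real.rpow_mul Real.pi_pos.le]
    ring_nf
  rw [Fintype.card_fin, Real.Gamma_add_one h2, h4]
  simp only [ENNReal.ofReal_one, one_pow, one_mul, nsmul_eq_mul, smul_eq_mul]
  rw [ENNReal.toReal_ofReal (by positivity), sphereArea]
  field_simp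
  ring

/-! ### The test functions -/

/-- The truncated logarithmic pole `κ (ramp(τ - a) - ramp(τ - b))` with `τ = -log ‖x - x₀‖`.
It vanishes for `‖x - x₀‖ ≥ e^{-a}` and equals `κ (b - a)` for `‖x - x₀‖ ≤ e^{-(b+1)}`. The value
at `x₀`, where `τ` is a junk value, is set by hand to this constant. -/
def testFun {n : ℕ} (x₀ : E n) (κ a b : ℝ) (x : E n) : ℝ :=
  open Classical in
  if x = x₀ then κ * (b - a) else κ * (ramp (logPole x₀ x - a) - ramp (logPole x₀ x - b))

lemma testFun_of_ne {n : ℕ} {x₀ : E n} (κ a b : ℝ) {x : E n} (hx : x ≠ x₀) :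
    testFun x₀ κ a b x = κ * (ramp (logPole x₀ x - a) - ramp (logPole x₀ x - b)) := if_neg hx

lemma testFun_inner {n : ℕ} {x₀ : E n} (κ : ℝ) {a b : ℝ} (hab : a ≤ b) {x : E n}
    (hx : ‖x - x₀‖ < Real.exp (-(b + 1))) : testFun x₀ κ a b x = κ * (b - a) := by
  by_cases h : x = x₀
  · exact if_pos h
  · have h1 : b + 1 ≤ logPole x₀ x := by
      have := Real.log_le_log (norm_pos_iff.2 (sub_ne_zero.2 h)) hx.le
      rw [Real.log_exp] at this
      rw [logPole]
      linarith
    rw [testFun_of_ne _ _ _ h, ramp_of_one_le (by linarith), ramp_of_one_le (by linarith)]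
    ring

lemma testFun_outer {n : ℕ} {x₀ : E n} (κ : ℝ) {a b : ℝ} (hab : a ≤ b) {x : E n}
    (hx : Real.exp (-a) ≤ ‖x - x₀‖) : testFun x₀ κ a b x = 0 := by
  have h0 : 0 < ‖x - x₀‖ := (Real.exp_pos _).trans_le hx
  have h : x ≠ x₀ := sub_ne_zero.1 (norm_pos_iff.1 h0)
  have h1 : logPole x₀ x ≤ a := by
    have := Real.log_le_log (Real.exp_pos _) hx
    rw [Real.log_exp] at this
    rw [logPole]
    linarith
  rw [testFun_of_ne _ _ _ h, ramp_of_nonpos (by linarith), ramp_of_nonpos (by linarith)]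
  ring

lemma contDiff_testFun {n : ℕ} (x₀ : E n) (κ : ℝ) {a b : ℝ} (hab : a ≤ b) :
    ContDiff ℝ (⊤ : ℕ∞) (testFun x₀ κ a b) := by
  rw [contDiff_iff_contDiffAt]
  intro x
  by_cases h : x = x₀
  · subst h
    have : testFun x κ a b =ᶠ[nhds x] fun _ => κ * (b - a) := by
      filter_upwards [Metric.ball_mem_nhds x (Real.exp_pos (-(b + 1)))] with y hy
      exact testFun_inner κ hab (by rwa [← dist_eq_norm])
    exact contDiffAt_const.congr_of_eventuallyEq this
  · have h0 : x - x₀ ≠ 0 := sub_ne_zero.2 h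
    have h1 : testFun x₀ κ a b =ᶠ[nhds x] fun x =>
        κ * (ramp (logPole x₀ x - a) - ramp (logPole x₀ x - b)) := by
      filter_upwards [isOpen_ne.mem_nhds h] with y hy using testFun_of_ne _ _ _ hy
    have h2 : ContDiffAt ℝ (⊤ : ℕ∞) (logPole x₀) x :=
      (((contDiffAt_id.sub contDiffAt_const).norm ℝ h0).log (norm_ne_zero_iff.2 h0)).neg
    have h3 : ∀ c, ContDiffAt ℝ (⊤ : ℕ∞) (fun x => ramp (logPole x₀ x - c)) x := fun c =>
      contDiff_ramp.contDiffAt.comp x (h2.sub contDiffAt_const)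
    exact (contDiffAt_const.mul ((h3 a).sub (h3 b))).congr_of_eventuallyEq h1

lemma isCcSmooth_testFun {n : ℕ} {Ω : Set (E n)} {x₀ : E n} (κ : ℝ) {a b : ℝ} (hab : a ≤ b)
    (hΩ : Metric.closedBall x₀ (Real.exp (-a)) ⊆ Ω) : IsCcSmooth Ω (testFun x₀ κ a b) := by
  have hs : Function.support (testFun x₀ κ a b) ⊆ Metric.closedBall x₀ (Real.exp (-a)) := by
    intro x hx
    by_contra h
    rw [Metric.mem_closedBall, not_le, dist_eq_norm] at h
    exact hx (testFun_outer κ hab h.le)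
  exact ⟨contDiff_testFun x₀ κ hab,
    HasCompactSupport.of_support_subset_isCompact (isCompact_closedBall _ _) hs,
    (closure_minimal hs Metric.isClosed_closedBall).trans hΩ⟩

/-- Pointwise energy bound: in the region `a + 1 < τ < b` the density is exactly
`κ^p |adamsSlope|^p ‖x - x₀‖⁻ⁿ`, and it is controlled by the uniform bound `M` on the two
transition shells, whose logarithmic width is `1`. -/
lemma energy_density_le {n m : ℕ} (hm : 1 ≤ m) (hn : 0 < n) {M : ℝ} (hM0 : 0 ≤ M)
    (hM : ∀ t, |profile n m ramp t| ≤ M) {x₀ x : E n} (hx : x ≠ x₀) {κ a b : ℝ} (hκ : 0 ≤ κ)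
    (hab : a + 1 ≤ b) :
    mGradNorm n m (testFun x₀ κ a b) x ^ ((n : ℝ) / m) ≤ κ ^ ((n : ℝ) / m) *
      (|adamsSlope n m| ^ ((n : ℝ) / m) * shell x₀ (a + 1) b x +
        (2 * M) ^ ((n : ℝ) / m) * (shell x₀ a (a + 1) x + shell x₀ b (b + 1) x)) := by
  have hm0 : (0 : ℝ) < m := by exact_mod_cast hm
  have hn0 : (0 : ℝ) < n := by exact_mod_cast hn
  set p : ℝ := (n : ℝ) / m with hp
  have hp0 : 0 < p := by positivity
  set t := logPole x₀ x with ht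
  have hG : ContDiff ℝ (⊤ : ℕ∞) (fun t => κ * (ramp (t - a) - ramp (t - b))) := by
    have := contDiff_ramp
    fun_prop
  have key : mGradNorm n m (testFun x₀ κ a b) x ^ p = κ ^ p *
      (|profile n m ramp (t - a) - profile n m ramp (t - b)| ^ p * Real.exp (n * t)) := by
    rw [mGradNorm_comp hx hG (fun y hy => testFun_of_ne κ a b hy), profile_comb contDiff_ramp,
      abs_mul, abs_of_nonneg hκ, Real.mul_rpow (Real.exp_pos _).le (by positivity),
      Real.mul_rpow hκ (abs_nonneg _), ← Real.exp_mul]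
    have : (m : ℝ) * logPole x₀ x * p = n * t := by
      rw [hp, ← ht]; field_simp
    rw [this]
    ring
  rw [key]
  refine mul_le_mul_of_nonneg_left ?_ (by positivity)
  have hs1 := shell_nonneg x₀ (a + 1) b x
  have hs2 := shell_nonneg x₀ a (a + 1) x
  have hs3 := shell_nonneg x₀ b (b + 1) x
  have hA0 : 0 ≤ |adamsSlope n m| ^ p := by positivity
  have hB0 : 0 ≤ (2 * M) ^ p := by positivity
  have hbd : |profile n m ramp (t - a) - profile n m ramp (t - b)| ^ p ≤ (2 * M) ^ p := by
    refine Real.rpow_le_rpow (abs_nonneg _) ?_ hp0.le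
    have := abs_sub (profile n m ramp (t - a)) (profile n m ramp (t - b))
    linarith [hM (t - a), hM (t - b)]
  have hexp := Real.exp_pos (n * t)
  have hzero : (0 : ℝ) ≤ |adamsSlope n m| ^ p * shell x₀ (a + 1) b x +
        (2 * M) ^ p * (shell x₀ a (a + 1) x + shell x₀ b (b + 1) x) := by positivity
  rcases lt_or_ge t a with h1 | h1
  · rw [profile_ramp_neg (by linarith), profile_ramp_neg (by linarith), sub_zero, abs_zero,
      Real.zero_rpow hp0.ne', zero_mul]
    exact hzero
  rcases le_or_gt t (a + 1) with h2 | h2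
  · rw [shell_of_mem hx h1 h2]
    nlinarith [mul_le_mul_of_nonneg_right hbd hexp.le, mul_nonneg hA0 hs1, mul_nonneg hB0 hs3]
  rcases lt_or_ge t b with h3 | h3
  · rw [profile_ramp_neg (t := t - b) (by linarith), profile_ramp_pos hm (by linarith), sub_zero,
      shell_of_mem hx h2.le h3.le]
    nlinarith [mul_nonneg hB0 hs2, mul_nonneg hB0 hs3]
  rcases le_or_gt t (b + 1) with h4 | h4
  · rw [shell_of_mem hx h3 h4]
    nlinarith [mul_le_mul_of_nonneg_right hbd hexp.le, mul_nonneg hA0 hs1, mul_nonneg hB0 hs2]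
  · rw [profile_ramp_pos hm (by linarith), profile_ramp_pos hm (by linarith), sub_self, abs_zero,
      Real.zero_rpow hp0.ne', zero_mul]
    exact hzero

/-- The energy grows like `sphereArea n * |adamsSlope|^p * (b - a)`, with an error that does not
depend on `b`. -/
lemma energy_le {n m : ℕ} (hm : 1 ≤ m) (hn : 0 < n) {M : ℝ} (hM0 : 0 ≤ M)
    (hM : ∀ t, |profile n m ramp t| ≤ M) (Ω : Set (E n)) (x₀ : E n) {κ a b : ℝ} (hκ : 0 ≤ κ)
    (hab : a + 1 ≤ b) :
    ∫ x in Ω, mGradNorm n m (testFun x₀ κ a b) x ^ ((n : ℝ) / m) ≤ κ ^ ((n : ℝ) / m) *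
      (sphereArea n * (|adamsSlope n m| ^ ((n : ℝ) / m) * (b - a - 1) +
        2 * (2 * M) ^ ((n : ℝ) / m))) := by
  have : Nonempty (Fin n) := ⟨⟨0, hn⟩⟩
  set p : ℝ := (n : ℝ) / m
  set g : E n → ℝ := fun x => κ ^ p *
      (|adamsSlope n m| ^ p * shell x₀ (a + 1) b x +
        (2 * M) ^ p * (shell x₀ a (a + 1) x + shell x₀ b (b + 1) x)) with hg
  have i1 := integrable_shell hn x₀ (a + 1) b
  have i2 := integrable_shell hn x₀ a (a + 1)
  have i3 := integrable_shell hn x₀ b (b + 1)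
  have hgi : Integrable g :=
    ((i1.const_mul _).add ((i2.add i3).const_mul _)).const_mul _
  have hg0 : ∀ x, 0 ≤ g x := by
    intro x
    have hs1 := shell_nonneg x₀ (a + 1) b x
    have hs2 := shell_nonneg x₀ a (a + 1) x
    have hs3 := shell_nonneg x₀ b (b + 1) x
    simp only [hg]
    positivity
  have hint : ∫ x, g x = κ ^ p *
      (sphereArea n * (|adamsSlope n m| ^ p * (b - a - 1) + 2 * (2 * M) ^ p)) := by
    simp only [hg]
    have i4 : Integrable fun x => (2 * M) ^ p * (shell x₀ a (a + 1) x + shell x₀ b (b + 1) x) :=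
      (i2.add i3).const_mul _
    rw [integral_const_mul, integral_add (i1.const_mul _) i4,
      integral_const_mul, integral_const_mul, integral_add i2 i3, integral_shell hn x₀ hab,
      integral_shell hn x₀ (by linarith), integral_shell hn x₀ (by linarith)]
    ring
  rw [← hint]
  have hne : ∀ᵐ x : E n, x ≠ x₀ := by
    rw [ae_iff]
    simp
  calc ∫ x in Ω, mGradNorm n m (testFun x₀ κ a b) x ^ p ≤ ∫ x in Ω, g x := by
        refine integral_mono_of_nonneg (ae_of_all _ fun x => ?_) hgi.integrableOn
          (ae_restrict_of_ae ?_)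
        · refine Real.rpow_nonneg ?_ _
          unfold mGradNorm
          split_ifs <;> positivity
        · filter_upwards [hne] with x hx
          exact energy_density_le hm hn hM0 hM hx hκ hab
    _ ≤ ∫ x, g x := setIntegral_le_integral hgi (ae_of_all _ hg0)

/-- The competition between the exponential and the volume `e^{-ν d}` of the core ball. -/
lemma tendsto_exponent {ν Θ j c r : ℝ} (hj : 0 < j) (h : ν < 2 * Θ * (2 * j) ^ r) :
    Filter.Tendsto (fun d : ℝ => d * (2 * Θ * (2 * (j + c / d)) ^ r - ν)) Filter.atTop
      Filter.atTop := by
  have h1 : Filter.Tendsto (fun d : ℝ => 2 * (j + c / d)) Filter.atTop (nhds (2 * j)) := by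
    have : Filter.Tendsto (fun d : ℝ => c / d) Filter.atTop (nhds 0) :=
      Filter.Tendsto.const_div_atTop Filter.tendsto_id c
    simpa using (this.const_add j).const_mul 2
  have h2 := ((h1.rpow_const (p := r) (Or.inl (by positivity))).const_mul (2 * Θ)).sub_const ν
  exact Filter.Tendsto.atTop_mul_pos (by linarith) Filter.tendsto_id h2

end AdamsSharp

open AdamsSharp

/-- Sharpness of the constant `ζ_{n,m}/2_{n,m}` in the product Adams–Moser–Trudinger
inequality: above this threshold the supremum is infinite. -/
theorem product_adams_moser_trudinger_sharp
    (n m : ℕ) (hm : 1 ≤ m) (hnm : 2 * m ≤ n)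
    (Ω : Set (EuclideanSpace ℝ (Fin n))) (hΩne : Ω.Nonempty)
    (hΩo : IsOpen Ω) (hΩb : Bornology.IsBounded Ω)
    (Θ : ℝ)
    (hΘ : adamsConst n m /
      (2 : ℝ) ^ (((n : ℝ) - 2 * (m : ℝ)) / ((n : ℝ) - (m : ℝ))) < Θ) :
    ∀ C : ℝ, 0 < C → ∃ u v : EuclideanSpace ℝ (Fin n) → ℝ,
      IsCcSmooth Ω u ∧ IsCcSmooth Ω v ∧
      (∫ x in Ω, mGradNorm n m u x ^ ((n : ℝ) / (m : ℝ))) +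
        (∫ x in Ω, mGradNorm n m v x ^ ((n : ℝ) / (m : ℝ))) ≤ 1 ∧
      ENNReal.ofReal C < (∫⁻ x in Ω, ENNReal.ofReal
          (Real.exp (Θ * (|u x| ^ ((n : ℝ) / ((n : ℝ) - (m : ℝ))) +
            |v x| ^ ((n : ℝ) / ((n : ℝ) - (m : ℝ))))))) := by
  intro C hC
  have hn : 0 < n := by omega
  have : Nonempty (Fin n) := ⟨⟨0, hn⟩⟩
  obtain ⟨x₀, hx₀⟩ := hΩne
  obtain ⟨ρ, hρ, hball⟩ := Metric.isOpen_iff.1 hΩo x₀ hx₀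
  set a : ℝ := -Real.log (ρ / 2) with ha
  have hea : Real.exp (-a) = ρ / 2 := by rw [ha, neg_neg, Real.exp_log (by positivity)]
  have hcb : Metric.closedBall x₀ (Real.exp (-a)) ⊆ Ω :=
    (Metric.closedBall_subset_ball (by rw [hea]; linarith)).trans hball
  obtain ⟨M, hM0, hM⟩ := exists_bound_profile (n := n) hm
  have hm0 : (0 : ℝ) < m := by exact_mod_cast hm
  have hn0 : (0 : ℝ) < n := by exact_mod_cast hn
  have hnm0 : (0 : ℝ) < n - m := by
    have : 2 * (m : ℝ) ≤ n := by exact_mod_cast hnm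
    linarith
  have hω := sphereArea_pos hn
  have hA : 0 < |adamsSlope n m| := abs_pos.2 (adamsSlope_ne_zero hm hnm)
  have hζ := adamsConst_eq hm hnm
  set A := |adamsSlope n m|
  set ω := sphereArea n
  set p : ℝ := (n : ℝ) / m with hp
  set q : ℝ := (n : ℝ) / (n - m) with hq
  have hp0 : 0 < p := by positivity
  have hpq : p * (1 - q) = -q := by rw [hp, hq]; field_simp; ring
  set j : ℝ := ω * A ^ p with hj
  have hj0 : 0 < j := by positivity
  set c : ℝ := ω * (2 * (2 * M) ^ p - A ^ p) with hc
  -- the hypothesis on `Θ` says exactly that the exponential beats the volume of the core ball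
  have hcrit : (n : ℝ) < 2 * Θ * (2 * j) ^ (1 - q) := by
    have h2 : ((n : ℝ) - 2 * m) / (n - m) = 1 + (1 - q) := by rw [hq]; field_simp; ring
    rw [hζ, h2, div_lt_iff₀ (by positivity), Real.rpow_add two_pos, Real.rpow_one,
      Real.mul_rpow hω.le hA.le] at hΘ
    have h3 : (2 * j) ^ (1 - q) = 2 ^ (1 - q) * (ω ^ (1 - q) * (A ^ q)⁻¹) := by
      rw [hj, Real.mul_rpow two_pos.le (by positivity), Real.mul_rpow hω.le (by positivity),
        ← Real.rpow_mul hA.le, hpq, Real.rpow_neg hA.le]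
    have h4 : ω ^ (1 - q) = ω * (ω ^ q)⁻¹ := by
      rw [sub_eq_add_neg, Real.rpow_add hω, Real.rpow_one, Real.rpow_neg hω.le]
    have hωq : 0 < ω ^ q := by positivity
    have hAq : 0 < A ^ q := by positivity
    rw [h3, h4]
    calc (n : ℝ) = (n / ω * (ω ^ q * A ^ q)) * (ω * (ω ^ q)⁻¹ * (A ^ q)⁻¹) := by field_simp
      _ < (Θ * (2 * 2 ^ (1 - q))) * (ω * (ω ^ q)⁻¹ * (A ^ q)⁻¹) :=
        mul_lt_mul_of_pos_right hΘ (by positivity)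
      _ = _ := by ring
  set w : ℝ := √Real.pi ^ n / Real.Gamma ((n : ℝ) / 2 + 1) with hw
  have hw0 : 0 < w := by
    have := Real.Gamma_pos_of_pos (s := (n : ℝ) / 2 + 1) (by positivity)
    positivity
  obtain ⟨d, hd1, hd2⟩ := ((Filter.eventually_ge_atTop (2 : ℝ)).and
    ((tendsto_exponent (c := c) hj0 hcrit).eventually_gt_atTop
      (Real.log (C / w) + n * (a + 1)))).exists
  have hd0 : 0 < d := by linarith
  set J : ℝ := ω * (A ^ p * (d - 1) + 2 * (2 * M) ^ p) with hJ
  have hJd : J = d * (j + c / d) := by rw [hJ, hj, hc]; field_simp; ring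
  have hJ0 : 0 < J := by
    have h1 : 0 < d - 1 := by linarith
    positivity
  have hjd : 0 < j + c / d := by
    rw [hJd] at hJ0
    exact pos_of_mul_pos_right hJ0 hd0.le
  -- normalisation: each of the two equal components gets energy at most `1 / 2`
  set κ : ℝ := (2 * J) ^ (-(1 / p)) with hκ
  have hκ0 : 0 < κ := by positivity
  have hκp : κ ^ p = (2 * J)⁻¹ := by
    rw [hκ, ← Real.rpow_mul (by positivity), ← Real.rpow_neg_one]
    congr 1
    field_simp
  have hκq : κ ^ q = (2 * J) ^ (1 - q) := by
    rw [hκ, ← Real.rpow_mul (by positivity)]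
    congr 1
    field_simp
    linarith
  have hab : a + 1 ≤ a + d := by linarith
  have hen := energy_le hm hn hM0 hM Ω x₀ hκ0.le hab
  have hen' : ∫ x in Ω, mGradNorm n m (testFun x₀ κ a (a + d)) x ^ p ≤ 1 / 2 := by
    refine hen.trans (le_of_eq ?_)
    have : a + d - a - 1 = d - 1 := by ring
    rw [this, ← hJ, hκp]
    field_simp
  have hcc := isCcSmooth_testFun κ (by linarith : a ≤ a + d) hcb
  refine ⟨testFun x₀ κ a (a + d), testFun x₀ κ a (a + d), hcc, hcc, by linarith, ?_⟩
  set S := Metric.ball x₀ (Real.exp (-(a + d + 1))) with hS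
  have hSΩ : S ⊆ Ω := (Metric.ball_subset_closedBall.trans
    (Metric.closedBall_subset_closedBall (Real.exp_le_exp.2 (by linarith)))).trans hcb
  set X : ℝ := d * (2 * Θ * (2 * (j + c / d)) ^ (1 - q)) with hX
  have hval : ∀ x ∈ S, Θ * (|testFun x₀ κ a (a + d) x| ^ q + |testFun x₀ κ a (a + d) x| ^ q)
      = X := by
    intro x hx
    rw [hS, Metric.mem_ball, dist_eq_norm] at hx
    rw [testFun_inner κ (by linarith) hx, add_sub_cancel_left, abs_of_pos (by positivity),
      Real.mul_rpow hκ0.le hd0.le, hκq, hJd, hX]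
    have e1 : 2 * (d * (j + c / d)) = d * (2 * (j + c / d)) := by ring
    have e2 : d ^ (1 - q) * d ^ q = d := by
      rw [← Real.rpow_add hd0, sub_add_cancel, Real.rpow_one]
    rw [e1, Real.mul_rpow hd0.le (by positivity)]
    linear_combination 2 * Θ * (2 * (j + c / d)) ^ (1 - q) * e2
  calc ENNReal.ofReal C < ENNReal.ofReal (Real.exp X * (Real.exp (-(a + d + 1)) ^ n * w)) := by
        refine (ENNReal.ofReal_lt_ofReal_iff (by positivity)).2 ?_
        have h1 : Real.log (C / w) < X - n * (a + d + 1) := by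
          rw [hX]; nlinarith
        rw [Real.log_lt_iff_lt_exp (by positivity), div_lt_iff₀ hw0] at h1
        refine h1.trans_eq ?_
        rw [← mul_assoc, ← Real.exp_nat_mul, ← Real.exp_add]
        ring_nf
    _ = ∫⁻ x in S, ENNReal.ofReal (Real.exp X) := by
        rw [setLIntegral_const, hS, EuclideanSpace.volume_ball, Fintype.card_fin,
          ← ENNReal.ofReal_pow (Real.exp_pos _).le, ← ENNReal.ofReal_mul (by positivity),
          ← ENNReal.ofReal_mul (by positivity)]
    _ = ∫⁻ x in S, ENNReal.ofReal (Real.exp (Θ * (|testFun x₀ κ a (a + d) x| ^ q +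
          |testFun x₀ κ a (a + d) x| ^ q))) :=
        setLIntegral_congr_fun Metric.isOpen_ball.measurableSet fun x hx => by
          simp only [hval x hx]
    _ ≤ _ := lintegral_mono_set hSΩ
end
end
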